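/- Let D be a field and let k ≥ 1, n ≥ 1. If D is infinite and either (k = 1 and n ≥ 2) or (2 ≤ k ≤ n), then the relative integral group homology H_k(Sp_{2n+2}(D), Sp_{2n}(D); Z) vanishes; equivalently, the map H_k(Sp_{2n}(D); Z) → H_k(Sp_{2n+2}(D); Z) induced by the hyperbolic embedding is surjective and the induced map in degree k − 1 is injective. If D is a finite field, the same conclusion holds provided n ≥ 2k. -/

import Mathlib

namespace Stmt2

open Finsupp in
/-- The `n`-th differential of the (inhomogeneous) bar complex computing the homology of the
group `G` with trivial coefficients in the commutative ring `R`.  The module of `n`-chains is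
the free `R`-module on `n`-tuples of elements of `G`, and on a basis element
`(g₁, …, g_{n+1})` the differential is
`(g₂,…,g_{n+1}) + ∑ᵢ (-1)ⁱ (g₁,…,gᵢgᵢ₊₁,…,g_{n+1}) + (-1)^{n+1} (g₁,…,g_n)`. -/
noncomputable def barDiff (R : Type) [CommRing R] (G : Type*) [Group G] (n : ℕ) :
    ((Fin (n + 1) → G) →₀ R) →ₗ[R] ((Fin n → G) →₀ R) :=
  Finsupp.lift ((Fin n → G) →₀ R) R (Fin (n + 1) → G) fun c =>
    Finsupp.single (fun j : Fin n => c j.succ) (1 : R)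
      + ∑ i : Fin n, Finsupp.single
          (fun j : Fin n => if (j : ℕ) < (i : ℕ) then c (Fin.castSucc j)
            else if (j : ℕ) = (i : ℕ) then c (Fin.castSucc i) * c i.succ
            else c j.succ) ((-1 : R) ^ ((i : ℕ) + 1))
      + Finsupp.single (fun j : Fin n => c (Fin.castSucc j)) ((-1 : R) ^ (n + 1))

/-- The submodule of `k`-cycles of the bar complex of `G` (with trivial coefficients `R`). -/
noncomputable def barCycles (R : Type) [CommRing R] (G : Type*) [Group G] :
    (k : ℕ) → Submodule R ((Fin k → G) →₀ R)
  | 0 => ⊤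
  | (k + 1) => LinearMap.ker (barDiff R G k)

/-- The submodule of `k`-boundaries of the bar complex of `G`. -/
noncomputable def barBoundaries (R : Type) [CommRing R] (G : Type*) [Group G] (k : ℕ) :
    Submodule R ((Fin k → G) →₀ R) :=
  LinearMap.range (barDiff R G k)

/-- Group homology `H_k(G; R)` with trivial coefficients, defined via the bar complex as the
image of the `k`-cycles in the quotient of the `k`-chains by the `k`-boundaries
(i.e. as `Z_k / B_k`). -/
noncomputable def barHomology (R : Type) [CommRing R] (G : Type*) [Group G] (k : ℕ) :=
  ↥(Submodule.map (barBoundaries R G k).mkQ (barCycles R G k))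

noncomputable instance (R : Type) [CommRing R] (G : Type*) [Group G] (k : ℕ) :
    AddCommGroup (barHomology R G k) :=
  inferInstanceAs (AddCommGroup ↥(Submodule.map (barBoundaries R G k).mkQ (barCycles R G k)))

noncomputable instance (R : Type) [CommRing R] (G : Type*) [Group G] (k : ℕ) :
    Module R (barHomology R G k) :=
  inferInstanceAs (Module R ↥(Submodule.map (barBoundaries R G k).mkQ (barCycles R G k)))

/-- The map induced on bar chains by a map `φ : G' → G` of groups; for a group homomorphism
`φ` this is the usual chain map inducing `H_k(φ) : H_k(G'; R) → H_k(G; R)`. -/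
noncomputable def barMap (R : Type) [CommRing R] {G' G : Type*} [Group G'] [Group G]
    (φ : G' → G) (k : ℕ) : ((Fin k → G') →₀ R) →ₗ[R] ((Fin k → G) →₀ R) :=
  Finsupp.lmapDomain R R fun c => φ ∘ c

/-- The statement that the map `H_k(G'; R) → H_k(G; R)` induced by `φ : G' → G` is
surjective, expressed at the chain level of the bar complexes:  every `k`-cycle of `G` differs
from the image of a `k`-cycle of `G'` by a `k`-boundary. -/
def BarInducedSurj (R : Type) [CommRing R] {G' G : Type*} [Group G'] [Group G]
    (φ : G' → G) (k : ℕ) : Prop :=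
  ∀ z ∈ barCycles R G k, ∃ w ∈ barCycles R G' k,
    z - barMap R φ k w ∈ barBoundaries R G k

/-- The statement that the map `H_k(G'; R) → H_k(G; R)` induced by `φ : G' → G` is
injective, expressed at the chain level of the bar complexes:  a `k`-cycle of `G'` whose image
is a `k`-boundary of `G` is already a `k`-boundary of `G'`. -/
def BarInducedInj (R : Type) [CommRing R] {G' G : Type*} [Group G'] [Group G]
    (φ : G' → G) (k : ℕ) : Prop :=
  ∀ w ∈ barCycles R G' k,
    barMap R φ k w ∈ barBoundaries R G k → w ∈ barBoundaries R G' k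

open Matrix

variable (D : Type) [Field D]

/-- The Gram matrix `J_n = [[0, Iₙ], [−Iₙ, 0]]` of the standard nondegenerate alternating
form with respect to a hyperbolic basis `e_{−n}, …, e_{−1}, e_1, …, e_n`. -/
def Jmat (n : ℕ) : Matrix (Fin n ⊕ Fin n) (Fin n ⊕ Fin n) D :=
  Matrix.fromBlocks 0 1 (-1) 0

/-- The symplectic group `Sp_{2n}(D) = {A ∈ GL_{2n}(D) : Aᵀ Jₙ A = Jₙ}`. -/
def SpGroup (n : ℕ) : Subgroup (GL (Fin n ⊕ Fin n) D) where
  carrier := {A : GL (Fin n ⊕ Fin n) D |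
    (A : Matrix (Fin n ⊕ Fin n) (Fin n ⊕ Fin n) D)ᵀ * Jmat D n *
      (A : Matrix (Fin n ⊕ Fin n) (Fin n ⊕ Fin n) D) = Jmat D n}
  one_mem' := by simp
  mul_mem' := by
    intro a b ha hb
    simp only [Set.mem_setOf_eq, Units.val_mul, Matrix.transpose_mul] at ha hb ⊢
    calc (b : Matrix _ _ D)ᵀ * (a : Matrix _ _ D)ᵀ * Jmat D n *
          ((a : Matrix _ _ D) * (b : Matrix _ _ D))
        = (b : Matrix _ _ D)ᵀ * ((a : Matrix _ _ D)ᵀ * Jmat D n * (a : Matrix _ _ D)) *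
          (b : Matrix _ _ D) := by simp only [Matrix.mul_assoc]
      _ = Jmat D n := by rw [ha, hb]
  inv_mem' := by
    intro a ha
    simp only [Set.mem_setOf_eq] at ha ⊢
    calc ((a⁻¹ : GL _ D) : Matrix _ _ D)ᵀ * Jmat D n * ((a⁻¹ : GL _ D) : Matrix _ _ D)
        = ((a⁻¹ : GL _ D) : Matrix _ _ D)ᵀ *
            ((a : Matrix _ _ D)ᵀ * Jmat D n * (a : Matrix _ _ D)) *
            ((a⁻¹ : GL _ D) : Matrix _ _ D) := by rw [ha]
      _ = ((a : Matrix _ _ D) * ((a⁻¹ : GL _ D) : Matrix _ _ D))ᵀ * Jmat D n *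
            ((a : Matrix _ _ D) * ((a⁻¹ : GL _ D) : Matrix _ _ D)) := by
          simp only [Matrix.transpose_mul, Matrix.mul_assoc]
      _ = Jmat D n := by rw [Units.mul_inv]; simp

theorem mem_spGroup_iff (n : ℕ) (A : GL (Fin n ⊕ Fin n) D) :
    A ∈ SpGroup D n ↔
      (A : Matrix (Fin n ⊕ Fin n) (Fin n ⊕ Fin n) D)ᵀ * Jmat D n *
        (A : Matrix (Fin n ⊕ Fin n) (Fin n ⊕ Fin n) D) = Jmat D n :=
  Iff.rfl

/-- The identification of the index sets of the hyperbolic bases, where the two new basis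
vectors `e_{−(n+1)}` and `e_{n+1}` are appended at the last position of each of the two
blocks of `n` basis vectors. -/
def sumEquiv (n : ℕ) : ((Fin n ⊕ Fin n) ⊕ (Fin 1 ⊕ Fin 1)) ≃ (Fin (n + 1) ⊕ Fin (n + 1)) where
  toFun := Sum.elim (Sum.map Fin.castSucc Fin.castSucc)
    (Sum.elim (fun _ => Sum.inl (Fin.last n)) (fun _ => Sum.inr (Fin.last n)))
  invFun := Sum.elim
    (fun i => Fin.lastCases (Sum.inr (Sum.inl 0)) (fun j => Sum.inl (Sum.inl j)) i)
    (fun i => Fin.lastCases (Sum.inr (Sum.inr 0)) (fun j => Sum.inl (Sum.inr j)) i)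
  left_inv := by
    rintro ((i | i) | (x | x))
    · simp
    · simp
    · simp only [Sum.elim_inl, Sum.elim_inr, Fin.lastCases_last]
      rw [Subsingleton.elim (0 : Fin 1) x]
    · simp only [Sum.elim_inl, Sum.elim_inr, Fin.lastCases_last]
      rw [Subsingleton.elim (0 : Fin 1) x]
  right_inv := by
    rintro (i | i) <;> induction i using Fin.lastCases <;> simp

/-- The matrix `diag(A, I₂)` extending `A` by the identity on the two new basis vectors
`e_{−(n+1)}`, `e_{n+1}`. -/
noncomputable def embMat (n : ℕ)
    (A : Matrix (Fin n ⊕ Fin n) (Fin n ⊕ Fin n) D) :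
    Matrix (Fin (n + 1) ⊕ Fin (n + 1)) (Fin (n + 1) ⊕ Fin (n + 1)) D :=
  (Matrix.fromBlocks A 0 0 (1 : Matrix (Fin 1 ⊕ Fin 1) (Fin 1 ⊕ Fin 1) D)).submatrix
    (sumEquiv n).symm (sumEquiv n).symm

theorem jmat_decomp (n : ℕ) :
    (Matrix.fromBlocks (Jmat D n) 0 0 (Jmat D 1)).submatrix
      (sumEquiv n).symm (sumEquiv n).symm = Jmat D (n + 1) := by
  have key : ∀ p q, Matrix.fromBlocks (Jmat D n) 0 0 (Jmat D 1) p q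
      = Jmat D (n + 1) (sumEquiv n p) (sumEquiv n q) := by
    rintro ((p | p) | (p | p)) ((q | q) | (q | q)) <;>
      simp [sumEquiv, Jmat, Matrix.one_apply, Fin.castSucc_inj,
        (Fin.castSucc_lt_last _).ne, (Fin.castSucc_lt_last _).ne'] <;>
      exact Subsingleton.elim _ _
  ext x y
  rw [Matrix.submatrix_apply, key, Equiv.apply_symm_apply, Equiv.apply_symm_apply]

/-- The extension-by-the-identity map `GL_{2n}(D) → GL_{2n+2}(D)`. -/
noncomputable def embGL (n : ℕ) (A : GL (Fin n ⊕ Fin n) D) :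
    GL (Fin (n + 1) ⊕ Fin (n + 1)) D where
  val := embMat D n (A : Matrix _ _ D)
  inv := embMat D n ((A⁻¹ : GL _ D) : Matrix _ _ D)
  val_inv := by
    simp only [embMat, Matrix.submatrix_mul_equiv, Matrix.fromBlocks_multiply,
      Matrix.mul_zero, Matrix.zero_mul, Matrix.mul_one, Matrix.one_mul, add_zero, zero_add,
      Units.mul_inv, Matrix.fromBlocks_one, Matrix.submatrix_one_equiv]
  inv_val := by
    simp only [embMat, Matrix.submatrix_mul_equiv, Matrix.fromBlocks_multiply,
      Matrix.mul_zero, Matrix.zero_mul, Matrix.mul_one, Matrix.one_mul, add_zero, zero_add,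
      Units.inv_mul, Matrix.fromBlocks_one, Matrix.submatrix_one_equiv]

/-- The hyperbolic embedding `Sp_{2n}(D) → Sp_{2n+2}(D)`, acting as `A` on the old basis
vectors and fixing the two new hyperbolic basis vectors `e_{−(n+1)}` and `e_{n+1}`. -/
noncomputable def embSp (n : ℕ) (A : ↥(SpGroup D n)) : ↥(SpGroup D (n + 1)) :=
  ⟨embGL D n ↑A, by
    have hA := (mem_spGroup_iff D n ↑A).1 A.2
    rw [mem_spGroup_iff]
    show (embMat D n (((A : GL (Fin n ⊕ Fin n) D) : Matrix _ _ D)))ᵀ * Jmat D (n + 1) *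
        embMat D n (((A : GL (Fin n ⊕ Fin n) D) : Matrix _ _ D)) = Jmat D (n + 1)
    rw [← jmat_decomp D n]
    simp only [embMat, Matrix.transpose_submatrix, Matrix.fromBlocks_transpose,
      Matrix.submatrix_mul_equiv, Matrix.fromBlocks_multiply]
    simp [hA]⟩

/-!
For a subspace `U` of a symplectic space and a vector `v ∉ U`, the pointwise stabilizer of `U` acts
on the tuples that pair with `U` like `v`, are linearly independent modulo `U` and, over an infinite
field, in general position. These tuples form a highly connected semisimplicial set. By Witt's
theorem the action is transitive on vertices, the stabilizer of the vertex `v` is the pointwise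
stabilizer of `U ⊔ K ∙ v`, and a tuple is determined up to the action by the values of the form on
pairs of its entries. The spectral sequence of the action then shows, by induction on the degree,
that adding `v` to `U` is surjective or injective on the homology of the pointwise stabilizers as
long as the residual rank `dim Uᗮ / (U ⊓ Uᗮ)` is large. By induction the entries of the second page
are the homology of the orbit complex of the tuples with constant coefficients, and they vanish
because a tuple can be coned off by a vector pairing to `1` with all its entries.

Going from `⊥` to a line and from there to a hyperbolic plane, whose pointwise stabilizer is the
image of the hyperbolic embedding, gives the theorem. The slope of the range is smaller over
infinite fields because there three entries in general position lower the residual rank by `2`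
less than independent ones may.
-/

section Complexes

variable {R : Type*} [Ring R] {A : ℕ → Type*} [∀ j, AddCommGroup (A j)] [∀ j, Module R (A j)]
  {B : ℕ → Type*} [∀ j, AddCommGroup (B j)] [∀ j, Module R (B j)]

/-- The cycles of a sequence of maps `d j : A (j + 1) → A j`. There is no condition in degree
zero, so an augmented complex is encoded by shifting the degrees by one. -/
def cycles (d : ∀ j, A (j + 1) →ₗ[R] A j) : ∀ j, Submodule R (A j)
  | 0 => ⊤
  | j + 1 => LinearMap.ker (d j)

/-- The boundaries of a sequence of maps `d j : A (j + 1) → A j`. -/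
def boundaries (d : ∀ j, A (j + 1) →ₗ[R] A j) (j : ℕ) : Submodule R (A j) :=
  LinearMap.range (d j)

variable {d : ∀ j, A (j + 1) →ₗ[R] A j} {e : ∀ j, B (j + 1) →ₗ[R] B j}

theorem mem_cycles_zero (x : A 0) : x ∈ cycles d 0 := Submodule.mem_top

theorem mem_cycles_succ {j : ℕ} {x : A (j + 1)} : x ∈ cycles d (j + 1) ↔ d j x = 0 := Iff.rfl

theorem apply_mem_boundaries {j : ℕ} (y : A (j + 1)) : d j y ∈ boundaries d j := ⟨y, rfl⟩

theorem apply_mem_cycles (hd : ∀ j x, d j (d (j + 1) x) = 0) {j : ℕ} (y : A (j + 1)) :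
    d j y ∈ cycles d j := by
  cases j with
  | zero => exact mem_cycles_zero _
  | succ j => exact hd j y

theorem map_mem_cycles (f : ∀ j, A j →ₗ[R] B j) (hf : ∀ j x, e j (f (j + 1) x) = f j (d j x))
    {j : ℕ} {x : A j} (hx : x ∈ cycles d j) : f j x ∈ cycles e j := by
  cases j with
  | zero => exact mem_cycles_zero _
  | succ j => rw [mem_cycles_succ, hf, mem_cycles_succ.1 hx, map_zero]

theorem map_mem_boundaries (f : ∀ j, A j →ₗ[R] B j)
    (hf : ∀ j x, e j (f (j + 1) x) = f j (d j x)) {j : ℕ} {x : A j}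
    (hx : x ∈ boundaries d j) : f j x ∈ boundaries e j := by
  obtain ⟨y, rfl⟩ := hx
  exact ⟨f (j + 1) y, hf j y⟩

end Complexes

section DoubleComplexes

variable {R : Type*} [Ring R] {A : ℕ → ℕ → Type*} [∀ P j, AddCommGroup (A P j)]
  [∀ P j, Module R (A P j)]

/-- A first quadrant double complex with commuting (not anticommuting) squares. -/
structure IsDoubleComplex (dh : ∀ P j, A (P + 1) j →ₗ[R] A P j)
    (dv : ∀ P j, A P (j + 1) →ₗ[R] A P j) : Prop where
  horizontal_comp_self : ∀ P j x, dh P j (dh (P + 1) j x) = 0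
  vertical_comp_self : ∀ P j x, dv P j (dv P (j + 1) x) = 0
  comm : ∀ P j x, dh P j (dv (P + 1) j x) = dv P j (dh P (j + 1) x)

/-- Exactness of the `j`-th row of a double complex at `A P j`. -/
def RowExactAt (dh : ∀ P j, A (P + 1) j →ₗ[R] A P j) (P j : ℕ) : Prop :=
  ∀ x ∈ cycles (A := fun P => A P j) (fun P => dh P j) P, ∃ y, dh P j y = x

/-- Exactness at the `(Q + 1, j)` spot of the row formed by the homology of the columns, that is,
the vanishing of the entry `(Q + 1, j)` of the second page of the spectral sequence of the
double complex. -/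
def SecondPageVanishesAt (dh : ∀ P j, A (P + 1) j →ₗ[R] A P j)
    (dv : ∀ P j, A P (j + 1) →ₗ[R] A P j) (Q j : ℕ) : Prop :=
  ∀ w ∈ cycles (dv (Q + 1)) j, dh Q j w ∈ boundaries (dv Q) j →
    ∃ y ∈ cycles (dv (Q + 2)) j, w - dh (Q + 1) j y ∈ boundaries (dv (Q + 1)) j

variable {dh : ∀ P j, A (P + 1) j →ₗ[R] A P j} {dv : ∀ P j, A P (j + 1) →ₗ[R] A P j}

namespace IsDoubleComplex

theorem map_mem_vertical_cycles (hA : IsDoubleComplex dh dv) {P j : ℕ} {x : A (P + 1) j}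
    (hx : x ∈ cycles (dv (P + 1)) j) : dh P j x ∈ cycles (dv P) j :=
  map_mem_cycles (fun j => dh P j) (fun j x => (hA.comm P j x).symm) hx

theorem map_mem_vertical_boundaries (hA : IsDoubleComplex dh dv) {P j : ℕ} {x : A (P + 1) j}
    (hx : x ∈ boundaries (dv (P + 1)) j) : dh P j x ∈ boundaries (dv P) j :=
  map_mem_boundaries (fun j => dh P j) (fun j x => (hA.comm P j x).symm) hx

theorem exists_vertical_cycle_lift (hA : IsDoubleComplex dh dv) (j : ℕ) :
    ∀ (P : ℕ) (x : A P j), x ∈ cycles (dv P) j →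
      x ∈ cycles (A := fun P => A P j) (fun P => dh P j) P →
      (∀ P' j', P ≤ P' → P' + j' = P + j → RowExactAt dh P' j') →
      (∀ Q j', P + 1 ≤ Q → Q + j' = P + j → SecondPageVanishesAt dh dv Q j') →
      ∃ w ∈ cycles (dv (P + 1)) j, dh P j w = x := by
  induction j with
  | zero =>
    intro P x _ hxh hrow _
    obtain ⟨w, hw⟩ := hrow P 0 le_rfl rfl x hxh
    exact ⟨w, mem_cycles_zero w, hw⟩
  | succ j ih =>
    intro P x hxv hxh hrow hpage
    obtain ⟨z, rfl⟩ := hrow P (j + 1) le_rfl rfl x hxh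
    have hdz : dv (P + 1) j z ∈ cycles (A := fun P => A P j) (fun P => dh P j) (P + 1) := by
      rw [mem_cycles_succ, hA.comm]
      exact mem_cycles_succ.1 hxv
    obtain ⟨w, hw, hwz⟩ := ih (P + 1) (dv (P + 1) j z)
      (apply_mem_cycles (hA.vertical_comp_self (P + 1)) z) hdz
      (fun P' j' h h' => hrow P' j' (by omega) (by omega))
      (fun Q j' h h' => hpage Q j' (by omega) (by omega))
    obtain ⟨v, -, y, hy⟩ := hpage (P + 1) j le_rfl (by omega) w hw (hwz ▸ apply_mem_boundaries z)
    refine ⟨z - dh (P + 1) (j + 1) y, ?_, ?_⟩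
    · rw [mem_cycles_succ, map_sub, ← hA.comm, hy, map_sub, hA.horizontal_comp_self, sub_zero,
        hwz, sub_self]
    · rw [map_sub, hA.horizontal_comp_self, sub_zero]

theorem exists_cycle_lift (hA : IsDoubleComplex dh dv) (q : ℕ)
    (hrow : ∀ P j, P + j = q → RowExactAt dh P j)
    (hpage : ∀ Q j, 1 ≤ Q → Q + j = q → SecondPageVanishesAt dh dv Q j)
    {x : A 0 q} (hx : x ∈ cycles (dv 0) q) :
    ∃ w ∈ cycles (dv 1) q, dh 0 q w = x :=
  hA.exists_vertical_cycle_lift q 0 x hx Submodule.mem_top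
    (fun P j _ h => hrow P j (by omega)) (fun Q j h h' => hpage Q j h (by omega))

theorem mem_boundaries_of_map_mem_boundaries (hA : IsDoubleComplex dh dv) (q : ℕ)
    (hrow : ∀ P j, P + j = q + 1 → RowExactAt dh P j)
    (hpage : ∀ Q j, 2 ≤ Q → Q + j = q + 1 → SecondPageVanishesAt dh dv Q j)
    (hd : ∀ w ∈ cycles (dv 2) q, dh 1 q w ∈ boundaries (dv 1) q)
    {z : A 1 q} (hz : z ∈ cycles (dv 1) q) (hb : dh 0 q z ∈ boundaries (dv 0) q) :
    z ∈ boundaries (dv 1) q := by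
  obtain ⟨y, hy⟩ := hb
  obtain ⟨u, rfl⟩ := hrow 0 (q + 1) (by omega) y Submodule.mem_top
  have hzu : z - dv 1 q u ∈ cycles (A := fun P => A P q) (fun P => dh P q) 1 := by
    rw [mem_cycles_succ, map_sub, hA.comm, ← hy, sub_self]
  obtain ⟨w, hw, hwz⟩ := hA.exists_vertical_cycle_lift q 1 (z - dv 1 q u)
    (sub_mem hz (apply_mem_cycles (hA.vertical_comp_self 1) u)) hzu
    (fun P j _ h => hrow P j (by omega)) (fun Q j h h' => hpage Q j (by omega) (by omega))
  have hmem := add_mem (hd w hw) (apply_mem_boundaries (d := dv 1) u)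
  rwa [hwz, sub_add_cancel] at hmem

end IsDoubleComplex

end DoubleComplexes

section AlternatingSums

variable {R M N M' N' : Type*} [Ring R] [AddCommGroup M] [Module R M] [AddCommGroup N]
  [Module R N] [AddCommGroup M'] [Module R M'] [AddCommGroup N'] [Module R N']

/-- The alternating sum `∑ i, (-1) ^ i • f i` of a finite sequence of linear maps. -/
def alternatingSum {n : ℕ} (f : Fin n → M →ₗ[R] N) : M →ₗ[R] N :=
  ∑ i : Fin n, (-1 : ℤ) ^ (i : ℕ) • f i

theorem alternatingSum_apply {n : ℕ} (f : Fin n → M →ₗ[R] N) (x : M) :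
    alternatingSum f x = ∑ i : Fin n, (-1 : ℤ) ^ (i : ℕ) • f i x := by
  simp [alternatingSum, LinearMap.sum_apply]

theorem alternatingSum_succ_apply {n : ℕ} (f : Fin (n + 1) → M →ₗ[R] N) (x : M) :
    alternatingSum f x = f 0 x - alternatingSum (fun i : Fin n => f i.succ) x := by
  simp only [alternatingSum_apply, Fin.sum_univ_succ, Fin.val_zero, pow_zero, one_smul,
    Fin.val_succ, pow_succ, mul_neg_one, neg_smul, Finset.sum_neg_distrib, sub_eq_add_neg]

theorem alternatingSum_alternatingSum_eq_zero {n : ℕ} (f : Fin (n + 2) → M →ₗ[R] N)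
    (g : Fin (n + 1) → N →ₗ[R] N')
    (h : ∀ i j : Fin (n + 1), i ≤ j → ∀ x, g i (f j.succ x) = g j (f i.castSucc x)) (x : M) :
    alternatingSum g (alternatingSum f x) = 0 := by
  simp only [alternatingSum_apply, map_sum, map_zsmul, Finset.smul_sum, smul_smul]
  rw [Fin.sum_sum_eq_sum_triangle_add]
  refine Finset.sum_eq_zero fun i _ => Finset.sum_eq_zero fun j hj => ?_
  rw [h i j (Finset.mem_Ici.1 hj), ← add_smul, Fin.val_castSucc, Fin.val_succ, pow_succ]
  convert zero_smul ℤ _ using 2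
  ring

theorem alternatingSum_map {n : ℕ} (f : Fin n → M →ₗ[R] N) (f' : Fin n → M' →ₗ[R] N')
    (a : M →ₗ[R] M') (b : N →ₗ[R] N') (h : ∀ i x, f' i (a x) = b (f i x)) (x : M) :
    alternatingSum f' (a x) = b (alternatingSum f x) := by
  simp only [alternatingSum_apply, map_sum, map_zsmul, h]

end AlternatingSums

section Tuples

variable (R : Type*) [Ring R] {α β : Type*}

theorem removeNth_removeNth_of_le {J : ℕ} {i j : Fin (J + 1)} (hij : i ≤ j)
    (x : Fin (J + 2) → α) :
    i.removeNth (j.succ.removeNth x) = j.removeNth (i.castSucc.removeNth x) := by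
  funext k
  have hk : j.succ.succAbove (i.succAbove k) = i.castSucc.succAbove (j.succAbove k) := by
    simp only [Fin.ext_iff, Fin.succAbove, Fin.lt_def, Fin.le_def] at *
    split_ifs <;> simp_all <;> omega
  exact congrArg x hk

theorem removeNth_succ_cons {J : ℕ} (i : Fin (J + 1)) (t : α) (x : Fin (J + 1) → α) :
    i.succ.removeNth (Fin.cons t x : Fin (J + 2) → α)
      = (Fin.cons t (i.removeNth x) : Fin (J + 1) → α) := by
  funext k
  refine Fin.cases ?_ (fun k => ?_) k <;> simp [Fin.removeNth_apply]

theorem free_hom_ext {R : Type*} [Ring R] {ι M : Type*} [AddCommGroup M] [Module R M]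
    {f g : (ι →₀ R) →ₗ[R] M}
    (h : ∀ i, f (Finsupp.single i 1) = g (Finsupp.single i 1)) : f = g :=
  Finsupp.lhom_ext' fun i => LinearMap.ext_ring (h i)

/-- The boundary on the free module on tuples, the alternating sum of the deletions of entries.
This is the augmented chain complex of the full simplex on `α`, indexed by the number of
vertices. -/
noncomputable def tupleBoundary (α : Type*) (J : ℕ) :
    ((Fin (J + 1) → α) →₀ R) →ₗ[R] ((Fin J → α) →₀ R) :=
  alternatingSum fun i => Finsupp.lmapDomain R R (Fin.removeNth i)

/-- The map induced on the free modules on tuples by a map of entries. -/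
noncomputable def tupleMap (f : α → β) (J : ℕ) :
    ((Fin J → α) →₀ R) →ₗ[R] ((Fin J → β) →₀ R) :=
  Finsupp.lmapDomain R R (f ∘ ·)

/-- The cone operator with apex `t`, prepending the entry `t` to all tuples. -/
noncomputable def tupleCons {J : ℕ} (t : α) :
    ((Fin J → α) →₀ R) →ₗ[R] ((Fin (J + 1) → α) →₀ R) :=
  Finsupp.lmapDomain R R fun x => Fin.cons t x

@[simp] theorem tupleMap_single (f : α → β) {J : ℕ} (x : Fin J → α) (r : R) :
    tupleMap R f J (Finsupp.single x r) = Finsupp.single (f ∘ x) r :=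
  Finsupp.mapDomain_single

@[simp] theorem tupleCons_single {J : ℕ} (t : α) (x : Fin J → α) (r : R) :
    tupleCons R t (Finsupp.single x r)
      = Finsupp.single (Fin.cons t x : Fin (J + 1) → α) r :=
  Finsupp.mapDomain_single

variable {R}

theorem tuple_hom_ext {M : Type*} [AddCommGroup M] [Module R M] {J : ℕ}
    {f g : ((Fin (J + 1) → α) →₀ R) →ₗ[R] M}
    (h : ∀ t z, f (tupleCons R t z) = g (tupleCons R t z)) : f = g := by
  refine free_hom_ext fun x => ?_
  have hx := h (x 0) (Finsupp.single (Fin.tail x) 1)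
  rwa [tupleCons_single, Fin.cons_self_tail] at hx

theorem tupleMap_tupleCons (f : α → β) {J : ℕ} (t : α) (z : (Fin J → α) →₀ R) :
    tupleMap R f (J + 1) (tupleCons R t z) = tupleCons R (f t) (tupleMap R f J z) := by
  refine LinearMap.congr_fun (f := tupleMap R f (J + 1) ∘ₗ tupleCons R t)
    (g := tupleCons R (f t) ∘ₗ tupleMap R f J) (free_hom_ext fun x => ?_) z
  simp [Fin.comp_cons]

theorem tupleMap_zero_degree (f : α → α) (z : (Fin 0 → α) →₀ R) : tupleMap R f 0 z = z := by
  refine LinearMap.congr_fun (g := LinearMap.id) (free_hom_ext fun x => ?_) z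
  simp [Subsingleton.elim (f ∘ x) x]

theorem tupleMap_tupleBoundary (f : α → β) (J : ℕ) (z : (Fin (J + 1) → α) →₀ R) :
    tupleBoundary R β J (tupleMap R f (J + 1) z) = tupleMap R f J (tupleBoundary R α J z) := by
  refine alternatingSum_map _ _ _ _ (fun i x => ?_) z
  refine LinearMap.congr_fun (f := Finsupp.lmapDomain R R (Fin.removeNth i) ∘ₗ tupleMap R f (J + 1))
    (g := tupleMap R f J ∘ₗ Finsupp.lmapDomain R R (Fin.removeNth i))
    (free_hom_ext fun x => ?_) x
  simp only [LinearMap.comp_apply, tupleMap_single, Finsupp.lmapDomain_apply,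
    Finsupp.mapDomain_single]
  rfl

theorem tupleBoundary_tupleCons {J : ℕ} (t : α) (z : (Fin (J + 1) → α) →₀ R) :
    tupleBoundary R α (J + 1) (tupleCons R t z) = z - tupleCons R t (tupleBoundary R α J z) := by
  have hzero : Finsupp.lmapDomain R R (Fin.removeNth 0) (tupleCons R t z) = z := by
    rw [tupleCons, ← LinearMap.comp_apply, ← Finsupp.lmapDomain_comp]
    convert LinearMap.id_apply (R := R) z
    exact Finsupp.lmapDomain_id R R
  rw [tupleBoundary, alternatingSum_succ_apply, hzero]
  congr 1
  refine alternatingSum_map _ _ _ _ (fun i x => ?_) z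
  refine LinearMap.congr_fun (f := Finsupp.lmapDomain R R (Fin.removeNth i.succ) ∘ₗ tupleCons R t)
    (g := tupleCons R t ∘ₗ Finsupp.lmapDomain R R (Fin.removeNth i))
    (free_hom_ext fun x => ?_) x
  simp only [LinearMap.comp_apply, tupleCons_single, Finsupp.lmapDomain_apply,
    Finsupp.mapDomain_single, removeNth_succ_cons]

theorem tupleBoundary_tupleCons_zero (t : α) (z : (Fin 0 → α) →₀ R) :
    tupleBoundary R α 0 (tupleCons R t z) = z := by
  refine LinearMap.congr_fun (f := tupleBoundary R α 0 ∘ₗ tupleCons R t) (g := LinearMap.id)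
    (free_hom_ext fun x => ?_) z
  simp [tupleBoundary, alternatingSum_apply, Finsupp.lmapDomain_apply, Finsupp.mapDomain_single,
    Subsingleton.elim (Fin.removeNth 0 (Fin.cons t x : Fin 1 → α)) x]

variable (R)

/-- The prism operator of a self-map `f` on a tuple: it is a chain homotopy between the map
induced by `f` and the identity, obtained by successively coning off the first entry. -/
noncomputable def prismTuple (f : α → α) : ∀ J : ℕ, (Fin J → α) → ((Fin (J + 1) → α) →₀ R)
  | 0, _ => 0
  | J + 1, x => tupleCons R (x 0) (Finsupp.single (f ∘ x) 1 - prismTuple f J (Fin.tail x))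

/-- The linear extension of `prismTuple`. -/
noncomputable def prism (f : α → α) (J : ℕ) :
    ((Fin J → α) →₀ R) →ₗ[R] ((Fin (J + 1) → α) →₀ R) :=
  Finsupp.linearCombination R (prismTuple R f J)

@[simp] theorem prism_single (f : α → α) (J : ℕ) (x : Fin J → α) :
    prism R f J (Finsupp.single x 1) = prismTuple R f J x := by
  simp [prism]

variable {R}

theorem prism_zero_degree (f : α → α) (z : (Fin 0 → α) →₀ R) : prism R f 0 z = 0 := by
  refine LinearMap.congr_fun (g := 0) (free_hom_ext fun x => ?_) z
  simp [prismTuple]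

theorem prism_tupleCons (f : α → α) (J : ℕ) (t : α) (z : (Fin J → α) →₀ R) :
    prism R f (J + 1) (tupleCons R t z)
      = tupleCons R t (tupleCons R (f t) (tupleMap R f J z) - prism R f J z) := by
  refine LinearMap.congr_fun (f := prism R f (J + 1) ∘ₗ tupleCons R t)
    (g := tupleCons R t ∘ₗ (tupleCons R (f t) ∘ₗ tupleMap R f J - prism R f J))
    (free_hom_ext fun x => ?_) z
  simp [prismTuple, Fin.comp_cons]

theorem prismTuple_comp {f g : α → α} (hfg : Function.Commute f g) (J : ℕ) (x : Fin J → α) :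
    prismTuple R f J (g ∘ x) = tupleMap R g (J + 1) (prismTuple R f J x) := by
  induction J with
  | zero => simp [prismTuple]
  | succ J ih =>
    have htail : Fin.tail (g ∘ x) = g ∘ Fin.tail x := rfl
    simp only [prismTuple, tupleMap_tupleCons, map_sub, tupleMap_single, htail, ih,
      ← Function.comp_assoc, hfg.comp_eq, Function.comp_apply]

theorem prism_homotopy (f : α → α) (J : ℕ) :
    tupleBoundary R α (J + 1) ∘ₗ prism R f (J + 1) + prism R f J ∘ₗ tupleBoundary R α J
      = tupleMap R f (J + 1) - LinearMap.id := by
  induction J with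
  | zero =>
    refine tuple_hom_ext fun t z => ?_
    simp only [LinearMap.add_apply, LinearMap.comp_apply, LinearMap.sub_apply, LinearMap.id_apply,
      prism_tupleCons, tupleBoundary_tupleCons, tupleMap_tupleCons, prism_zero_degree, sub_zero,
      add_zero, tupleBoundary_tupleCons_zero, tupleMap_zero_degree]
  | succ J ih =>
    refine tuple_hom_ext fun t z => ?_
    have hz : tupleBoundary R α (J + 1) (prism R f (J + 1) z)
        = tupleMap R f (J + 1) z - z - prism R f J (tupleBoundary R α J z) :=
      eq_sub_of_add_eq (LinearMap.congr_fun ih z)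
    simp only [LinearMap.add_apply, LinearMap.comp_apply, LinearMap.sub_apply, LinearMap.id_apply,
      prism_tupleCons, tupleBoundary_tupleCons, tupleMap_tupleCons, map_sub,
      tupleMap_tupleBoundary, hz]
    abel

end Tuples

section OrbitChains

variable (R : Type*) [Ring R] (H : Type*) [Group H] {Ω M : Type*} [MulAction H Ω]
  [AddCommGroup M] [Module R M]

/-- The space of orbits of `H` on `Ω`. -/
abbrev OrbitSpace (Ω : Type*) [MulAction H Ω] := MulAction.orbitRel.Quotient H Ω

/-- The orbit of a point, as an element of the orbit space. -/
def orbitMk (ω : Ω) : OrbitSpace H Ω := Quotient.mk _ ω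

/-- The coinvariants of the permutation module `R[Ω]`, encoded as the free module on the orbit
space. -/
abbrev OrbitChains (Ω : Type*) [MulAction H Ω] := OrbitSpace H Ω →₀ R

/-- The basis element of the coinvariants of `R[Ω]` given by the orbit of a point. -/
noncomputable def orbitBasis (ω : Ω) : OrbitChains R H Ω := Finsupp.single (orbitMk H ω) 1

variable {R H}

theorem orbitMk_eq_iff {a b : Ω} : orbitMk H a = orbitMk H b ↔ ∃ h : H, h • a = b := by
  rw [orbitMk, orbitMk, Quotient.eq, MulAction.orbitRel_apply, MulAction.mem_orbit_symm,
    MulAction.mem_orbit_iff]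

theorem orbitMk_smul (h : H) (a : Ω) : orbitMk H (h • a) = orbitMk H a :=
  (orbitMk_eq_iff.2 ⟨h, rfl⟩).symm

theorem orbitMk_out (y : OrbitSpace H Ω) : orbitMk H (Quotient.out y) = y := Quotient.out_eq y

theorem exists_smul_out_eq (a : Ω) : ∃ h : H, h • Quotient.out (orbitMk H a) = a :=
  orbitMk_eq_iff.1 (orbitMk_out _)

theorem orbitBasis_smul (h : H) (a : Ω) : orbitBasis R H (h • a) = orbitBasis R H a := by
  rw [orbitBasis, orbitMk_smul, orbitBasis]

namespace OrbitChains

/-- The linear extension of an invariant function to the coinvariants. -/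
noncomputable def lift (f : Ω → M) (hf : ∀ (h : H) (ω : Ω), f (h • ω) = f ω) :
    OrbitChains R H Ω →ₗ[R] M :=
  Finsupp.linearCombination R <| Quotient.lift f fun a b hab => by
    obtain ⟨h, rfl⟩ := orbitMk_eq_iff.1 (Quotient.sound hab : orbitMk H a = orbitMk H b)
    exact (hf h a).symm

@[simp] theorem lift_orbitBasis (f : Ω → M) (hf : ∀ (h : H) (ω : Ω), f (h • ω) = f ω) (ω : Ω) :
    lift f hf (orbitBasis R H ω) = f ω := by
  simp [lift, orbitBasis, orbitMk]

theorem hom_ext {f g : OrbitChains R H Ω →ₗ[R] M}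
    (h : ∀ ω, f (orbitBasis R H ω) = g (orbitBasis R H ω)) : f = g :=
  free_hom_ext fun y => by
    obtain ⟨ω, rfl⟩ := Quotient.exists_rep y
    exact h ω

theorem congr_of_basis {f g : OrbitChains R H Ω →ₗ[R] M}
    (h : ∀ ω, f (orbitBasis R H ω) = g (orbitBasis R H ω)) (x : OrbitChains R H Ω) :
    f x = g x :=
  LinearMap.congr_fun (hom_ext h) x

theorem induction {p : OrbitChains R H Ω → Prop} (zero : p 0)
    (add : ∀ x y, p x → p y → p (x + y)) (smul : ∀ (r : R) ω, p (r • orbitBasis R H ω))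
    (x : OrbitChains R H Ω) : p x := by
  induction x using Finsupp.induction_linear with
  | zero => exact zero
  | add f g hf hg => exact add f g hf hg
  | single y r =>
    obtain ⟨ω, rfl⟩ := Quotient.exists_rep y
    simpa [orbitBasis, orbitMk] using smul r ω

end OrbitChains

end OrbitChains

section BorelChains

variable (R : Type*) [Ring R] {G : Type*} [Group G]

/-- Chains on the Borel construction of an `H`-set `X`, for a subgroup `H` of `G`: the
coinvariants of the free module on pairs of a point of `X` and a simplex of the full simplex
on `G`. Taking tuples in `G` rather than in `H` makes the complexes for different subgroups
directly comparable. -/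
abbrev BorelChains (H : Subgroup G) (X : Type*) [MulAction H X] (j : ℕ) :=
  OrbitChains R H (X × (Fin (j + 1) → G))

section Functoriality

variable {H K L : Subgroup G} {hHK : H ≤ K} {hKL : K ≤ L} {hHL : H ≤ L} {X Y Z : Type*}
  [MulAction H X] [MulAction K Y] [MulAction L Z]

/-- The face map of Borel chains deleting the `i`-th entry of the tuple. -/
noncomputable def borelFace (H : Subgroup G) (X : Type*) [MulAction H X] {j : ℕ}
    (i : Fin (j + 2)) : BorelChains R H X (j + 1) →ₗ[R] BorelChains R H X j :=
  OrbitChains.lift (fun p => orbitBasis R H (p.1, (i.removeNth p.2 : Fin (j + 1) → G)))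
    fun h p => orbitBasis_smul h (p.1, (i.removeNth p.2 : Fin (j + 1) → G))

/-- The differential of the complex of Borel chains. -/
noncomputable def borelBoundary (H : Subgroup G) (X : Type*) [MulAction H X] (j : ℕ) :
    BorelChains R H X (j + 1) →ₗ[R] BorelChains R H X j :=
  alternatingSum (borelFace R H X)

/-- The map of Borel chains induced by a map which is equivariant along an inclusion of
subgroups. -/
noncomputable def borelMap (f : X →ₑ[Subgroup.inclusion hHK] Y) (j : ℕ) :
    BorelChains R H X j →ₗ[R] BorelChains R K Y j :=
  OrbitChains.lift (fun p => orbitBasis R K (f p.1, p.2)) fun h p => by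
    rw [Prod.smul_fst, map_smulₛₗ]
    exact orbitBasis_smul (Subgroup.inclusion hHK h) (f p.1, p.2)

variable {R}

@[simp] theorem borelFace_orbitBasis {j : ℕ} (i : Fin (j + 2)) (x : X) (t : Fin (j + 2) → G) :
    borelFace R H X i (orbitBasis R H (x, t))
      = orbitBasis R H (x, (i.removeNth t : Fin (j + 1) → G)) :=
  OrbitChains.lift_orbitBasis _ _ _

@[simp] theorem borelMap_orbitBasis (f : X →ₑ[Subgroup.inclusion hHK] Y) {j : ℕ} (x : X)
    (t : Fin (j + 1) → G) :
    borelMap R f j (orbitBasis R H (x, t)) = orbitBasis R K (f x, t) := by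
  simp [borelMap]

theorem borelBoundary_borelBoundary (j : ℕ) (z : BorelChains R H X (j + 2)) :
    borelBoundary R H X j (borelBoundary R H X (j + 1) z) = 0 := by
  refine alternatingSum_alternatingSum_eq_zero _ _ (fun i k hik z => ?_) z
  refine OrbitChains.congr_of_basis (f := borelFace R H X i ∘ₗ borelFace R H X k.succ)
    (g := borelFace R H X k ∘ₗ borelFace R H X i.castSucc) ?_ z
  rintro ⟨x, t⟩
  simp [removeNth_removeNth_of_le hik]

theorem borelFace_borelMap (f : X →ₑ[Subgroup.inclusion hHK] Y) {j : ℕ} (i : Fin (j + 2))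
    (z : BorelChains R H X (j + 1)) :
    borelFace R K Y i (borelMap R f (j + 1) z) = borelMap R f j (borelFace R H X i z) := by
  refine OrbitChains.congr_of_basis (f := borelFace R K Y i ∘ₗ borelMap R f (j + 1))
    (g := borelMap R f j ∘ₗ borelFace R H X i) ?_ z
  rintro ⟨x, t⟩
  simp

theorem borelBoundary_borelMap (f : X →ₑ[Subgroup.inclusion hHK] Y) (j : ℕ)
    (z : BorelChains R H X (j + 1)) :
    borelBoundary R K Y j (borelMap R f (j + 1) z) = borelMap R f j (borelBoundary R H X j z) :=
  alternatingSum_map _ _ _ _ (borelFace_borelMap f) z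

theorem borelMap_borelMap (f : X →ₑ[Subgroup.inclusion hHK] Y)
    (g : Y →ₑ[Subgroup.inclusion hKL] Z) (k : X →ₑ[Subgroup.inclusion hHL] Z)
    (hk : ∀ x, g (f x) = k x) (j : ℕ) (z : BorelChains R H X j) :
    borelMap R g j (borelMap R f j z) = borelMap R k j z := by
  refine OrbitChains.congr_of_basis (f := borelMap R g j ∘ₗ borelMap R f j)
    (g := borelMap R k j) ?_ z
  rintro ⟨x, t⟩
  simp [hk]

theorem borelMap_eq_self (f : X →ₑ[Subgroup.inclusion (le_refl H)] X) (hf : ∀ x, f x = x)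
    (j : ℕ) (z : BorelChains R H X j) : borelMap R f j z = z := by
  refine OrbitChains.congr_of_basis (f := borelMap R f j) (g := LinearMap.id) ?_ z
  rintro ⟨x, t⟩
  simp [hf]

theorem borelMap_mem_cycles (f : X →ₑ[Subgroup.inclusion hHK] Y) {j : ℕ}
    {z : BorelChains R H X j} (hz : z ∈ cycles (borelBoundary R H X) j) :
    borelMap R f j z ∈ cycles (borelBoundary R K Y) j :=
  map_mem_cycles (borelMap R f) (borelBoundary_borelMap f) hz

theorem borelMap_mem_boundaries (f : X →ₑ[Subgroup.inclusion hHK] Y) {j : ℕ}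
    {z : BorelChains R H X j} (hz : z ∈ boundaries (borelBoundary R H X) j) :
    borelMap R f j z ∈ boundaries (borelBoundary R K Y) j :=
  map_mem_boundaries (borelMap R f) (borelBoundary_borelMap f) hz

end Functoriality

section GroupChains

/-- The complex of Borel chains of a point, which computes the homology of `L`. -/
abbrev GroupChains (L : Subgroup G) (j : ℕ) := BorelChains R L Unit j

/-- The differential of the complex of group chains. -/
noncomputable abbrev groupBoundary (L : Subgroup G) (j : ℕ) :
    GroupChains R L (j + 1) →ₗ[R] GroupChains R L j :=
  borelBoundary R L Unit j

/-- The inclusion of group chains induced by an inclusion of subgroups. -/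
noncomputable def groupChainsMap {L M : Subgroup G} (h : L ≤ M) (j : ℕ) :
    GroupChains R L j →ₗ[R] GroupChains R M j :=
  borelMap R (hHK := h) ⟨id, fun _ _ => rfl⟩ j

/-- Surjectivity on homology in degree `q` of an inclusion of subgroups. -/
def HomologySurj (L M : Subgroup G) (q : ℕ) : Prop :=
  ∃ h : L ≤ M, ∀ z ∈ cycles (groupBoundary R M) q, ∃ w ∈ cycles (groupBoundary R L) q,
    z - groupChainsMap R h q w ∈ boundaries (groupBoundary R M) q

/-- Injectivity on homology in degree `q` of an inclusion of subgroups. -/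
def HomologyInj (L M : Subgroup G) (q : ℕ) : Prop :=
  ∃ h : L ≤ M, ∀ w ∈ cycles (groupBoundary R L) q,
    groupChainsMap R h q w ∈ boundaries (groupBoundary R M) q →
      w ∈ boundaries (groupBoundary R L) q

variable {R} {L M N : Subgroup G} {q : ℕ}

@[simp] theorem groupChainsMap_orbitBasis (h : L ≤ M) {j : ℕ} (t : Fin (j + 1) → G) :
    groupChainsMap R h j (orbitBasis R L ((), t)) = orbitBasis R M ((), t) :=
  borelMap_orbitBasis _ _ _

theorem groupChainsMap_refl (j : ℕ) (z : GroupChains R L j) :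
    groupChainsMap R (le_refl L) j z = z :=
  borelMap_eq_self _ (fun _ => rfl) j z

theorem groupChainsMap_groupChainsMap (h : L ≤ M) (h' : M ≤ N) (j : ℕ)
    (z : GroupChains R L j) :
    groupChainsMap R h' j (groupChainsMap R h j z) = groupChainsMap R (h.trans h') j z :=
  borelMap_borelMap _ _ _ (fun _ => rfl) j z

theorem groupChainsMap_mem_cycles (h : L ≤ M) {j : ℕ} {z : GroupChains R L j}
    (hz : z ∈ cycles (groupBoundary R L) j) :
    groupChainsMap R h j z ∈ cycles (groupBoundary R M) j :=
  borelMap_mem_cycles _ hz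

theorem groupChainsMap_mem_boundaries (h : L ≤ M) {j : ℕ} {z : GroupChains R L j}
    (hz : z ∈ boundaries (groupBoundary R L) j) :
    groupChainsMap R h j z ∈ boundaries (groupBoundary R M) j :=
  borelMap_mem_boundaries _ hz

variable (R) in
theorem HomologySurj.refl (L : Subgroup G) (q : ℕ) : HomologySurj R L L q :=
  ⟨le_rfl, fun z hz => ⟨z, hz, by rw [groupChainsMap_refl, sub_self]; exact zero_mem _⟩⟩

theorem HomologySurj.trans (h₁ : HomologySurj R L M q) (h₂ : HomologySurj R M N q) :
    HomologySurj R L N q := by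
  obtain ⟨hLM, h₁⟩ := h₁
  obtain ⟨hMN, h₂⟩ := h₂
  refine ⟨hLM.trans hMN, fun z hz => ?_⟩
  obtain ⟨w, hw, hzw⟩ := h₂ z hz
  obtain ⟨u, hu, hwu⟩ := h₁ w hw
  refine ⟨u, hu, ?_⟩
  have hzu := add_mem hzw (groupChainsMap_mem_boundaries hMN hwu)
  rwa [map_sub, groupChainsMap_groupChainsMap, sub_add_sub_cancel] at hzu

variable (R) in
theorem HomologyInj.refl (L : Subgroup G) (q : ℕ) : HomologyInj R L L q :=
  ⟨le_rfl, fun w _ hw => by rwa [groupChainsMap_refl] at hw⟩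

theorem HomologyInj.trans (h₁ : HomologyInj R L M q) (h₂ : HomologyInj R M N q) :
    HomologyInj R L N q := by
  obtain ⟨hLM, h₁⟩ := h₁
  obtain ⟨hMN, h₂⟩ := h₂
  refine ⟨hLM.trans hMN, fun z hz hb => h₁ z hz (h₂ _ (groupChainsMap_mem_cycles hLM hz) ?_)⟩
  rwa [groupChainsMap_groupChainsMap]

end GroupChains

end BorelChains

section EquivariantEndomorphisms

variable (R : Type*) [Ring R] {G : Type*} [Group G]

/-- The projection of the free module on tuples in `G` onto its coinvariants. -/
noncomputable def toGroupChains (L : Subgroup G) (j : ℕ) :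
    ((Fin (j + 1) → G) →₀ R) →ₗ[R] GroupChains R L j :=
  Finsupp.linearCombination R fun t => orbitBasis R L ((), t)

variable {R} {L : Subgroup G}

@[simp] theorem toGroupChains_single {j : ℕ} (t : Fin (j + 1) → G) (r : R) :
    toGroupChains R L j (Finsupp.single t r) = r • orbitBasis R L ((), t) := by
  simp [toGroupChains]

theorem toGroupChains_surjective (j : ℕ) : Function.Surjective (toGroupChains R L j) := by
  intro z
  induction z using OrbitChains.induction with
  | zero => exact ⟨0, map_zero _⟩
  | add x y hx hy =>
    obtain ⟨a, rfl⟩ := hx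
    obtain ⟨b, rfl⟩ := hy
    exact ⟨a + b, map_add _ _ _⟩
  | smul r ω => exact ⟨Finsupp.single ω.2 r, toGroupChains_single _ _⟩

theorem groupBoundary_toGroupChains (j : ℕ) (z : (Fin (j + 2) → G) →₀ R) :
    groupBoundary R L j (toGroupChains R L (j + 1) z)
      = toGroupChains R L j (tupleBoundary R G (j + 1) z) := by
  refine alternatingSum_map _ _ _ _ (fun i x => ?_) z
  refine LinearMap.congr_fun (f := borelFace R L Unit i ∘ₗ toGroupChains R L (j + 1))
    (g := toGroupChains R L j ∘ₗ Finsupp.lmapDomain R R (Fin.removeNth i))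
    (free_hom_ext fun x => ?_) x
  simp [Finsupp.lmapDomain_apply, Finsupp.mapDomain_single]

theorem toGroupChains_tupleMap_smul (j : ℕ) (l : L) (z : (Fin (j + 1) → G) →₀ R) :
    toGroupChains R L j (tupleMap R (l • ·) (j + 1) z) = toGroupChains R L j z := by
  refine LinearMap.congr_fun (f := toGroupChains R L j ∘ₗ tupleMap R (l • ·) (j + 1))
    (free_hom_ext fun x => ?_) z
  simp only [LinearMap.comp_apply, tupleMap_single, toGroupChains_single, one_smul]
  exact orbitBasis_smul l ((), x)

variable (R)

/-- The endomorphism of the group chains of `L` induced by an `L`-equivariant self-map of the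
ambient group. -/
noncomputable def groupChainsEndo (f : G →[L] G) (j : ℕ) :
    GroupChains R L j →ₗ[R] GroupChains R L j :=
  OrbitChains.lift (fun p => orbitBasis R L ((), f ∘ p.2)) fun l p => by
    have hsmul : (((), f ∘ (l • p).2) : Unit × (Fin (j + 1) → G)) = l • ((), f ∘ p.2) :=
      Prod.ext rfl (funext fun i => map_smul f l (p.2 i))
    rw [hsmul, orbitBasis_smul]

/-- The prism operator of an equivariant self-map, descended to the group chains. -/
noncomputable def groupChainsPrism (f : G →[L] G) (j : ℕ) :
    GroupChains R L j →ₗ[R] GroupChains R L (j + 1) :=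
  OrbitChains.lift (fun p => toGroupChains R L (j + 1) (prismTuple R f (j + 1) p.2)) fun l p => by
    have hcomm : Function.Commute f (l • ·) := map_smul f l
    rw [← toGroupChains_tupleMap_smul (j + 1) l (prismTuple R f (j + 1) p.2),
      ← prismTuple_comp hcomm]
    rfl

variable {R}

@[simp] theorem groupChainsEndo_orbitBasis (f : G →[L] G) {j : ℕ} (t : Fin (j + 1) → G) :
    groupChainsEndo R f j (orbitBasis R L ((), t)) = orbitBasis R L ((), f ∘ t) :=
  OrbitChains.lift_orbitBasis _ _ _

theorem groupBoundary_groupChainsEndo (f : G →[L] G) (j : ℕ) (z : GroupChains R L (j + 1)) :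
    groupBoundary R L j (groupChainsEndo R f (j + 1) z)
      = groupChainsEndo R f j (groupBoundary R L j z) := by
  refine alternatingSum_map _ _ _ _ (fun i x => ?_) z
  refine OrbitChains.congr_of_basis (f := borelFace R L Unit i ∘ₗ groupChainsEndo R f (j + 1))
    (g := groupChainsEndo R f j ∘ₗ borelFace R L Unit i) (fun ⟨⟨⟩, t⟩ => ?_) x
  simp only [LinearMap.comp_apply, groupChainsEndo_orbitBasis, borelFace_orbitBasis]
  rfl

theorem groupChainsEndo_toGroupChains (f : G →[L] G) (j : ℕ) (z : (Fin (j + 1) → G) →₀ R) :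
    groupChainsEndo R f j (toGroupChains R L j z)
      = toGroupChains R L j (tupleMap R f (j + 1) z) := by
  refine LinearMap.congr_fun (f := groupChainsEndo R f j ∘ₗ toGroupChains R L j)
    (g := toGroupChains R L j ∘ₗ tupleMap R f (j + 1)) (free_hom_ext fun x => ?_) z
  simp

theorem groupChainsPrism_toGroupChains (f : G →[L] G) (j : ℕ) (z : (Fin (j + 1) → G) →₀ R) :
    groupChainsPrism R f j (toGroupChains R L j z)
      = toGroupChains R L (j + 1) (prism R f (j + 1) z) := by
  refine LinearMap.congr_fun (f := groupChainsPrism R f j ∘ₗ toGroupChains R L j)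
    (g := toGroupChains R L (j + 1) ∘ₗ prism R f (j + 1)) (free_hom_ext fun x => ?_) z
  simp [groupChainsPrism]

theorem groupChainsEndo_sub_mem_boundaries (f : G →[L] G) {j : ℕ} {s : GroupChains R L j}
    (hs : s ∈ cycles (groupBoundary R L) j) :
    groupChainsEndo R f j s - s ∈ boundaries (groupBoundary R L) j := by
  obtain ⟨z, rfl⟩ := toGroupChains_surjective j s
  refine ⟨groupChainsPrism R f j (toGroupChains R L j z), ?_⟩
  have hz : tupleBoundary R G (j + 1) (prism R f (j + 1) z) + prism R f j (tupleBoundary R G j z)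
      = tupleMap R f (j + 1) z - z := LinearMap.congr_fun (prism_homotopy f j) z
  rw [groupChainsPrism_toGroupChains, groupBoundary_toGroupChains, groupChainsEndo_toGroupChains,
    ← map_sub, ← hz, map_add]
  cases j with
  | zero => rw [prism_zero_degree, map_zero, add_zero]
  | succ j =>
    have hs' := mem_cycles_succ.1 hs
    rw [groupBoundary_toGroupChains] at hs'
    rw [← groupChainsPrism_toGroupChains, hs', map_zero, add_zero]

end EquivariantEndomorphisms

section Columns

variable (R : Type*) [Ring R] {G : Type*} [Group G] (H : Subgroup G) {X : Type*} [MulAction H X]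

/-- The stabilizer in `H` of a point of an `H`-set, as a subgroup of the ambient group. -/
def ambientStabilizer (x : X) : Subgroup G := (MulAction.stabilizer H x).map H.subtype

variable {H} {L M : Subgroup G} {x x' : X}

theorem mem_ambientStabilizer {g : G} :
    g ∈ ambientStabilizer H x ↔ ∃ h : H, h.1 = g ∧ h • x = x := by
  rw [ambientStabilizer, Subgroup.mem_map]
  exact exists_congr fun h => and_comm

theorem ambientStabilizer_le (x : X) : ambientStabilizer H x ≤ H :=
  Subgroup.map_subtype_le _

theorem inclusion_smul_of_le_ambientStabilizer (hL : L ≤ ambientStabilizer H x) (l : L) :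
    Subgroup.inclusion (hL.trans (ambientStabilizer_le x)) l • x = x := by
  obtain ⟨h, hl, hx⟩ := mem_ambientStabilizer.1 (hL l.2)
  rwa [← (Subtype.ext hl : h = Subgroup.inclusion _ l)]

/-- The map of group chains into the Borel chains of `X` given by the inclusion of a point. -/
noncomputable def pushAt (x : X) (hL : L ≤ ambientStabilizer H x) (j : ℕ) :
    GroupChains R L j →ₗ[R] BorelChains R H X j :=
  borelMap R (hHK := hL.trans (ambientStabilizer_le x))
    ⟨fun _ => x, fun l _ => (inclusion_smul_of_le_ambientStabilizer hL l).symm⟩ j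

variable (H X) in
/-- The map from the Borel chains of `X` to those of a point. -/
noncomputable def forgetPoint (j : ℕ) : BorelChains R H X j →ₗ[R] GroupChains R H j :=
  borelMap R (hHK := le_refl H) ⟨fun _ => (), fun _ _ => rfl⟩ j

variable (H) in
open Classical in
/-- The contribution of a basis element `(y, t)` of the Borel chains to the component at `x`:
translate `y` to `x` if possible. -/
noncomputable def componentBasis (x : X) {j : ℕ} (p : X × (Fin (j + 1) → G)) :
    GroupChains R (ambientStabilizer H x) j :=
  if h : ∃ h : H, h • p.1 = x then orbitBasis R _ ((), h.choose • p.2) else 0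

variable {R}

@[simp] theorem pushAt_orbitBasis (hL : L ≤ ambientStabilizer H x) {j : ℕ}
    (t : Fin (j + 1) → G) : pushAt R x hL j (orbitBasis R L ((), t)) = orbitBasis R H (x, t) :=
  borelMap_orbitBasis _ _ _

theorem pushAt_mem_cycles (hL : L ≤ ambientStabilizer H x) {j : ℕ} {s : GroupChains R L j}
    (hs : s ∈ cycles (groupBoundary R L) j) :
    pushAt R x hL j s ∈ cycles (borelBoundary R H X) j :=
  borelMap_mem_cycles _ hs

theorem pushAt_mem_boundaries (hL : L ≤ ambientStabilizer H x) {j : ℕ} {s : GroupChains R L j}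
    (hs : s ∈ boundaries (groupBoundary R L) j) :
    pushAt R x hL j s ∈ boundaries (borelBoundary R H X) j :=
  borelMap_mem_boundaries _ hs

theorem pushAt_groupChainsMap (hL : L ≤ M) (hM : M ≤ ambientStabilizer H x) (j : ℕ)
    (s : GroupChains R L j) :
    pushAt R x hM j (groupChainsMap R hL j s) = pushAt R x (hL.trans hM) j s :=
  borelMap_borelMap _ _ _ (fun _ => rfl) j s

theorem forgetPoint_pushAt (hL : L ≤ ambientStabilizer H x) (j : ℕ) (s : GroupChains R L j) :
    forgetPoint R H X j (pushAt R x hL j s)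
      = groupChainsMap R (hL.trans (ambientStabilizer_le x)) j s :=
  borelMap_borelMap _ _ _ (fun _ => rfl) j s

theorem pushAt_sub_pushAt_mem_boundaries (hL : L ≤ ambientStabilizer H x)
    (hL' : L ≤ ambientStabilizer H x') (g : H) (hg : ∀ l ∈ L, (g : G) * l = l * g)
    (hx : g • x = x') {j : ℕ} {s : GroupChains R L j} (hs : s ∈ cycles (groupBoundary R L) j) :
    pushAt R x hL j s - pushAt R x' hL' j s ∈ boundaries (borelBoundary R H X) j := by
  -- Acting by `g` moves `(x, t)` to `(x', g • t)`, so the two maps differ by left translation.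
  let f : G →[L] G := ⟨fun t => (g : G)⁻¹ * t, fun l t => by
    have hcomm : (g : G)⁻¹ * l = l * (g : G)⁻¹ := (Commute.inv_left (hg l l.2)).eq
    change (g : G)⁻¹ * (l * t) = l * ((g : G)⁻¹ * t)
    rw [← mul_assoc, hcomm, mul_assoc]⟩
  have hpush : pushAt R x hL j (groupChainsEndo R f j s) = pushAt R x' hL' j s := by
    refine OrbitChains.congr_of_basis (f := pushAt R x hL j ∘ₗ groupChainsEndo R f j)
      (g := pushAt R x' hL' j) (fun ⟨⟨⟩, t⟩ => ?_) s
    simp only [LinearMap.comp_apply, groupChainsEndo_orbitBasis, pushAt_orbitBasis]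
    rw [← orbitBasis_smul g, Prod.smul_mk, hx]
    congr 2
    exact funext fun i => mul_inv_cancel_left (g : G) (t i)
  have hmem := pushAt_mem_boundaries hL (groupChainsEndo_sub_mem_boundaries f hs)
  rwa [map_sub, hpush, ← neg_mem_iff, neg_sub] at hmem

theorem orbitBasis_smul_eq_of_smul_eq {h h' : H} {y : X} (hh : h • y = x) (hh' : h' • y = x)
    {j : ℕ} (t : Fin (j + 1) → G) :
    orbitBasis R (ambientStabilizer H x) ((), h • t)
      = orbitBasis R (ambientStabilizer H x) ((), h' • t) := by
  have hmem : ((h * h'⁻¹ : H) : G) ∈ ambientStabilizer H x :=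
    mem_ambientStabilizer.2 ⟨_, rfl, by rw [mul_smul, inv_smul_eq_iff.2 hh'.symm, hh]⟩
  rw [← orbitBasis_smul (⟨_, hmem⟩ : ambientStabilizer H x) ((), h' • t)]
  congr 2
  funext i
  change (h : G) * t i = ((h * h'⁻¹ : H) : G) * ((h' : G) * t i)
  simp [mul_assoc]

theorem componentBasis_of_smul_eq {j : ℕ} {p : X × (Fin (j + 1) → G)} {h : H}
    (hh : h • p.1 = x) : componentBasis R H x p = orbitBasis R _ ((), h • p.2) := by
  have hex : ∃ h : H, h • p.1 = x := ⟨h, hh⟩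
  rw [componentBasis, dif_pos hex]
  exact orbitBasis_smul_eq_of_smul_eq hex.choose_spec hh p.2

theorem componentBasis_of_not_exists {j : ℕ} {p : X × (Fin (j + 1) → G)}
    (hp : ¬ ∃ h : H, h • p.1 = x) : componentBasis R H x p = 0 :=
  dif_neg hp

variable (R) in
/-- The component of a Borel chain at the orbit of `x`, as a chain of the stabilizer of `x`. -/
noncomputable def component (x : X) (j : ℕ) :
    BorelChains R H X j →ₗ[R] GroupChains R (ambientStabilizer H x) j :=
  OrbitChains.lift (componentBasis R H x) fun k p => by
    by_cases hp : ∃ h : H, h • p.1 = x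
    · obtain ⟨h, hh⟩ := hp
      have hk : (h * k⁻¹) • (k • p).1 = x := by
        rw [Prod.smul_fst, smul_smul, inv_mul_cancel_right, hh]
      rw [componentBasis_of_smul_eq hk, componentBasis_of_smul_eq hh, Prod.smul_snd, smul_smul,
        inv_mul_cancel_right]
    · rw [componentBasis_of_not_exists hp, componentBasis_of_not_exists]
      rintro ⟨h, hh⟩
      exact hp ⟨h * k, by rw [mul_smul]; exact hh⟩

theorem component_orbitBasis {y : X} {h : H} (hh : h • y = x) {j : ℕ} (t : Fin (j + 1) → G) :
    component R x j (orbitBasis R H (y, t)) = orbitBasis R _ ((), h • t) := by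
  rw [component, OrbitChains.lift_orbitBasis, componentBasis_of_smul_eq hh]

theorem component_orbitBasis_of_not_exists {y : X} (hy : ¬ ∃ h : H, h • y = x) {j : ℕ}
    (t : Fin (j + 1) → G) : component R x j (orbitBasis R H (y, t)) = 0 := by
  rw [component, OrbitChains.lift_orbitBasis, componentBasis_of_not_exists hy]

theorem groupBoundary_component (x : X) (j : ℕ) (w : BorelChains R H X (j + 1)) :
    groupBoundary R (ambientStabilizer H x) j (component R x (j + 1) w)
      = component R x j (borelBoundary R H X j w) := by
  refine alternatingSum_map _ _ _ _ (fun i w => ?_) w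
  refine OrbitChains.congr_of_basis (f := borelFace R _ Unit i ∘ₗ component R x (j + 1))
    (g := component R x j ∘ₗ borelFace R H X i) (fun ⟨y, t⟩ => ?_) w
  simp only [LinearMap.comp_apply, borelFace_orbitBasis]
  by_cases hy : ∃ h : H, h • y = x
  · obtain ⟨h, hh⟩ := hy
    rw [component_orbitBasis hh, component_orbitBasis hh, borelFace_orbitBasis]
    rfl
  · rw [component_orbitBasis_of_not_exists hy, component_orbitBasis_of_not_exists hy, map_zero]

theorem component_mem_cycles (x : X) {j : ℕ} {w : BorelChains R H X j}
    (hw : w ∈ cycles (borelBoundary R H X) j) :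
    component R x j w ∈ cycles (groupBoundary R (ambientStabilizer H x)) j :=
  map_mem_cycles (component R x) (groupBoundary_component x) hw

theorem component_mem_boundaries (x : X) {j : ℕ} {w : BorelChains R H X j}
    (hw : w ∈ boundaries (borelBoundary R H X) j) :
    component R x j w ∈ boundaries (groupBoundary R (ambientStabilizer H x)) j :=
  map_mem_boundaries (component R x) (groupBoundary_component x) hw

theorem component_pushAt (x : X) (j : ℕ) (s : GroupChains R (ambientStabilizer H x) j) :
    component R x j (pushAt R x le_rfl j s) = s := by
  refine OrbitChains.congr_of_basis (f := component R x j ∘ₗ pushAt R x le_rfl j)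
    (g := LinearMap.id) (fun ⟨⟨⟩, t⟩ => ?_) s
  rw [LinearMap.comp_apply, pushAt_orbitBasis, component_orbitBasis (one_smul H x), one_smul]
  rfl

theorem pushAt_component_orbitBasis {y : X} (hy : ∃ h : H, h • y = x) {j : ℕ}
    (t : Fin (j + 1) → G) :
    pushAt R x le_rfl j (component R x j (orbitBasis R H (y, t))) = orbitBasis R H (y, t) := by
  obtain ⟨h, hh⟩ := hy
  rw [component_orbitBasis hh, pushAt_orbitBasis, ← orbitBasis_smul h (y, t), Prod.smul_mk, hh]

theorem pushAt_component_of_pretransitive (x : X) (hX : ∀ y : X, ∃ h : H, h • y = x) (j : ℕ)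
    (w : BorelChains R H X j) : pushAt R x le_rfl j (component R x j w) = w :=
  OrbitChains.congr_of_basis (f := pushAt R x le_rfl j ∘ₗ component R x j) (g := LinearMap.id)
    (fun ⟨y, t⟩ => pushAt_component_orbitBasis (hX y) t) w

theorem exists_eq_sum_pushAt_component {j : ℕ} (w : BorelChains R H X j) :
    ∃ T : Finset (OrbitSpace H X), ∀ T', T ⊆ T' → w = ∑ y ∈ T',
      pushAt R (Quotient.out y) le_rfl j (component R (Quotient.out y) j w) := by
  classical
  induction w using OrbitChains.induction with
  | zero => exact ⟨∅, fun T' _ => by simp⟩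
  | add x y hx hy =>
    obtain ⟨T₁, h₁⟩ := hx
    obtain ⟨T₂, h₂⟩ := hy
    refine ⟨T₁ ∪ T₂, fun T' hT' => ?_⟩
    simp only [map_add, Finset.sum_add_distrib]
    rw [← h₁ T' (Finset.union_subset_left hT'), ← h₂ T' (Finset.union_subset_right hT')]
  | smul r ω =>
    obtain ⟨y, t⟩ := ω
    refine ⟨{orbitMk H y}, fun T' hT' => ?_⟩
    simp only [map_smul]
    rw [← Finset.smul_sum,
      Finset.sum_eq_single_of_mem _ (hT' (Finset.mem_singleton_self (orbitMk H y)))]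
    · rw [pushAt_component_orbitBasis (orbitMk_eq_iff.1 (orbitMk_out _).symm)]
    · intro b _ hb
      rw [component_orbitBasis_of_not_exists, map_zero]
      intro hy
      exact hb ((orbitMk_out b).symm.trans (orbitMk_eq_iff.2 hy).symm)

theorem mem_boundaries_of_component_mem_boundaries {j : ℕ} {w : BorelChains R H X j}
    (hw : ∀ x : X, component R x j w ∈ boundaries (groupBoundary R (ambientStabilizer H x)) j) :
    w ∈ boundaries (borelBoundary R H X) j := by
  obtain ⟨T, hT⟩ := exists_eq_sum_pushAt_component w
  rw [hT T (Finset.Subset.refl T)]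
  exact sum_mem fun y _ => pushAt_mem_boundaries le_rfl (hw _)

theorem borelCycle_induction {j : ℕ} {p : BorelChains R H X j → Prop} (zero : p 0)
    (add : ∀ w w', p w → p w' → p (w + w'))
    (pushAt : ∀ (x : X), ∀ s ∈ cycles (groupBoundary R (ambientStabilizer H x)) j,
      p (pushAt R x le_rfl j s))
    {w : BorelChains R H X j} (hw : w ∈ cycles (borelBoundary R H X) j) : p w := by
  obtain ⟨T, hT⟩ := exists_eq_sum_pushAt_component w
  rw [hT T (Finset.Subset.refl T)]
  exact Finset.sum_induction _ p add zero fun y _ => pushAt _ _ (component_mem_cycles _ hw)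

end Columns

section RowExactness

variable {R : Type*} [Ring R] {G : Type*} [Group G] {H : Subgroup G} {X Y : Type*}
  [MulAction H X] [MulAction H Y]

theorem exists_equivariantMap_subgroup (H : Subgroup G) : Nonempty (G →[H] H) := by
  choose ρ hρ using fun t : G => exists_smul_out_eq (H := H) t
  refine ⟨⟨ρ, fun h t => Subtype.ext ?_⟩⟩
  have hht : (ρ (h • t) : G) * Quotient.out (orbitMk H t) = h * t := by
    have hspec := hρ (h • t)
    rwa [orbitMk_smul] at hspec
  refine mul_right_cancel (b := Quotient.out (orbitMk H t)) (hht.trans ?_)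
  exact (congrArg ((h : G) * ·) (hρ t)).symm.trans (mul_assoc _ _ _).symm

/-- The lift of Borel chains along `borelProjection`, which picks in the orbit of `(x, t)` the
pair where the equivariant map `ρ` takes the value `1` at the first entry of the tuple. -/
noncomputable def borelLift (ρ : G →[H] H) (j : ℕ) :
    BorelChains R H X j →ₗ[R] ((Fin (j + 1) → G) →₀ (X →₀ R)) :=
  OrbitChains.lift (fun p : X × (Fin (j + 1) → G) => Finsupp.single ((ρ (p.2 0))⁻¹ • p.2)
    (Finsupp.single ((ρ (p.2 0))⁻¹ • p.1) (1 : R))) fun h ⟨x, t⟩ => by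
      simp only [Prod.smul_mk, Pi.smul_apply, map_smul, smul_eq_mul, _root_.mul_inv_rev, smul_smul,
        inv_mul_cancel_right]

/-- The projection from the free module on pairs of a point and a tuple to its coinvariants. -/
noncomputable def borelProjection (j : ℕ) :
    ((Fin (j + 1) → G) →₀ (X →₀ R)) →ₗ[R] BorelChains R H X j :=
  Finsupp.lsum ℕ fun t => Finsupp.linearCombination R fun x => orbitBasis R H (x, t)

theorem borelLift_orbitBasis (ρ : G →[H] H) {j : ℕ} (x : X) (t : Fin (j + 1) → G) :
    borelLift (R := R) ρ j (orbitBasis R H (x, t))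
      = Finsupp.single ((ρ (t 0))⁻¹ • t) (Finsupp.single ((ρ (t 0))⁻¹ • x) 1) :=
  OrbitChains.lift_orbitBasis _ _ _

theorem borelProjection_single {j : ℕ} (t : Fin (j + 1) → G) (x : X) :
    borelProjection (R := R) (H := H) j (Finsupp.single t (Finsupp.single x 1))
      = orbitBasis R H (x, t) := by
  simp [borelProjection]

theorem borelProjection_borelLift (ρ : G →[H] H) (j : ℕ) (w : BorelChains R H X j) :
    borelProjection j (borelLift ρ j w) = w := by
  refine OrbitChains.congr_of_basis (f := borelProjection j ∘ₗ borelLift ρ j)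
    (g := LinearMap.id) (fun ⟨x, t⟩ => ?_) w
  rw [LinearMap.comp_apply, borelLift_orbitBasis, borelProjection_single]
  exact orbitBasis_smul _ (x, t)

theorem borelLift_borelMap (ρ : G →[H] H) (f : X →ₑ[Subgroup.inclusion (le_refl H)] Y) {j : ℕ}
    (w : BorelChains R H X j) :
    borelLift ρ j (borelMap R f j w)
      = Finsupp.mapRange.linearMap (Finsupp.lmapDomain R R f) (borelLift ρ j w) := by
  refine OrbitChains.congr_of_basis (M := (Fin (j + 1) → G) →₀ (Y →₀ R))
    (f := borelLift ρ j ∘ₗ borelMap R f j)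
    (g := Finsupp.mapRange.linearMap (Finsupp.lmapDomain R R f) ∘ₗ borelLift ρ j)
    (fun ⟨x, t⟩ => ?_) w
  have hf : f ((ρ (t 0))⁻¹ • x) = (ρ (t 0))⁻¹ • f x := map_smulₛₗ f _ x
  simp [borelLift_orbitBasis, hf]

theorem borelMap_borelProjection (f : X →ₑ[Subgroup.inclusion (le_refl H)] Y) {j : ℕ}
    (y : (Fin (j + 1) → G) →₀ (X →₀ R)) :
    borelMap R f j (borelProjection j y)
      = borelProjection j (Finsupp.mapRange.linearMap (Finsupp.lmapDomain R R f) y) := by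
  refine LinearMap.congr_fun (f := borelMap R f j ∘ₗ borelProjection j)
    (g := borelProjection j ∘ₗ Finsupp.mapRange.linearMap (Finsupp.lmapDomain R R f))
    (Finsupp.lhom_ext' fun t => free_hom_ext fun x => ?_) y
  simp [borelProjection_single]

end RowExactness

section EquivariantSemisimplicialSets

/-- An augmented semisimplicial set with an action of `H`, indexed by the number of vertices:
`Simplex P` consists of the `(P - 1)`-simplices and `Simplex 0` is the target of the
augmentation. -/
structure EquivariantSemisimplicialSet (H : Type*) [Group H] where
  Simplex : ℕ → Type*
  [action : ∀ P, MulAction H (Simplex P)]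
  face {P : ℕ} (i : Fin (P + 1)) : Simplex (P + 1) →[H] Simplex P
  face_face {P : ℕ} (i j : Fin (P + 1)) (hij : i ≤ j) (x : Simplex (P + 2)) :
    face i (face j.succ x) = face j (face i.castSucc x)

attribute [instance] EquivariantSemisimplicialSet.action

namespace EquivariantSemisimplicialSet

variable (R : Type*) [Ring R] {G : Type*} [Group G] {H : Subgroup G}
  (S : EquivariantSemisimplicialSet H)

/-- The differential of the augmented chain complex of a semisimplicial set. -/
noncomputable def chainBoundary (P : ℕ) : (S.Simplex (P + 1) →₀ R) →ₗ[R] (S.Simplex P →₀ R) :=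
  alternatingSum fun i => Finsupp.lmapDomain R R (S.face i)

/-- Exactness of the augmented chain complex of a semisimplicial set at the simplices with `P`
vertices. -/
def ChainsExactAt (P : ℕ) : Prop :=
  ∀ z ∈ cycles (A := fun P => S.Simplex P →₀ R) (S.chainBoundary R) P,
    ∃ y, S.chainBoundary R P y = z

/-- The face maps, as maps equivariant along the identity inclusion of `H`. -/
def faceHom {P : ℕ} (i : Fin (P + 1)) :
    S.Simplex (P + 1) →ₑ[Subgroup.inclusion (le_refl H)] S.Simplex P :=
  ⟨S.face i, fun h x => map_smul (S.face i) h x⟩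

/-- The horizontal differential of the double complex of Borel chains of a semisimplicial set. -/
noncomputable def horizontalBoundary (P j : ℕ) :
    BorelChains R H (S.Simplex (P + 1)) j →ₗ[R] BorelChains R H (S.Simplex P) j :=
  alternatingSum fun i => borelMap R (S.faceHom i) j

/-- The vertical differential of the double complex of Borel chains of a semisimplicial set. -/
noncomputable abbrev verticalBoundary (P j : ℕ) :
    BorelChains R H (S.Simplex P) (j + 1) →ₗ[R] BorelChains R H (S.Simplex P) j :=
  borelBoundary R H (S.Simplex P) j

theorem isDoubleComplex : IsDoubleComplex (S.horizontalBoundary R) (S.verticalBoundary R) where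
  horizontal_comp_self P j w := by
    refine alternatingSum_alternatingSum_eq_zero _ _ (fun i k hik w => ?_) w
    refine OrbitChains.congr_of_basis
      (f := borelMap R (S.faceHom i) j ∘ₗ borelMap R (S.faceHom k.succ) j)
      (g := borelMap R (S.faceHom k) j ∘ₗ borelMap R (S.faceHom i.castSucc) j)
      (fun ⟨x, t⟩ => ?_) w
    have hx : S.faceHom i (S.faceHom k.succ x) = S.faceHom k (S.faceHom i.castSucc x) :=
      S.face_face i k hik x
    simp [hx]
  vertical_comp_self P j w := borelBoundary_borelBoundary j w
  comm P j w := alternatingSum_map _ _ _ _ (fun i w => (borelBoundary_borelMap _ j w).symm) w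

variable {R S}

theorem chainBoundary_borelLift (ρ : G →[H] H) {P j : ℕ}
    (w : BorelChains R H (S.Simplex (P + 1)) j) (t : Fin (j + 1) → G) :
    S.chainBoundary R P (borelLift ρ j w t) = borelLift ρ j (S.horizontalBoundary R P j w) t :=
  alternatingSum_map (fun i => borelMap R (S.faceHom i) j) _ (Finsupp.lapply t ∘ₗ borelLift ρ j)
    (Finsupp.lapply t ∘ₗ borelLift ρ j)
    (fun i w => (DFunLike.congr_fun (borelLift_borelMap ρ (S.faceHom i) w) t).symm) w

theorem horizontalBoundary_borelProjection {P j : ℕ}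
    (y : (Fin (j + 1) → G) →₀ (S.Simplex (P + 1) →₀ R)) :
    S.horizontalBoundary R P j (borelProjection j y)
      = borelProjection j (Finsupp.mapRange.linearMap (S.chainBoundary R P) y) := by
  let faces (i : Fin (P + 1)) : ((Fin (j + 1) → G) →₀ (S.Simplex (P + 1) →₀ R)) →ₗ[R]
      ((Fin (j + 1) → G) →₀ (S.Simplex P →₀ R)) :=
    Finsupp.mapRange.linearMap (Finsupp.lmapDomain R R (S.faceHom i))
  have hy : alternatingSum faces y
      = Finsupp.mapRange.linearMap (S.chainBoundary R P) y :=
    Finsupp.ext fun t => (alternatingSum_map _ (fun i => Finsupp.lmapDomain R R (S.face i))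
      (Finsupp.lapply t) (Finsupp.lapply t) (fun _ _ => rfl) y).symm
  have hface (i : Fin (P + 1)) (y : (Fin (j + 1) → G) →₀ (S.Simplex (P + 1) →₀ R)) :
      borelMap R (S.faceHom i) j (borelProjection j y) = borelProjection j (faces i y) :=
    borelMap_borelProjection (S.faceHom i) y
  rw [← hy, horizontalBoundary, alternatingSum_apply, alternatingSum_apply, map_sum]
  exact Finset.sum_congr rfl fun i _ => by rw [hface, map_zsmul]

theorem ChainsExactAt.rowExactAt {P : ℕ} (hP : S.ChainsExactAt R P) (j : ℕ) :
    RowExactAt (A := fun P j => BorelChains R H (S.Simplex P) j) (S.horizontalBoundary R) P j := by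
  obtain ⟨ρ⟩ := exists_equivariantMap_subgroup H
  intro w hw
  have hcycle (t : Fin (j + 1) → G) : borelLift ρ j w t
      ∈ cycles (A := fun P => S.Simplex P →₀ R) (S.chainBoundary R) P := by
    cases P with
    | zero => exact mem_cycles_zero _
    | succ P =>
      rw [mem_cycles_succ, chainBoundary_borelLift, mem_cycles_succ.1 hw, map_zero,
        Finsupp.zero_apply]
  obtain ⟨y, hy⟩ : borelLift ρ j w
      ∈ Set.range (Finsupp.mapRange (S.chainBoundary R P) (map_zero _)) := by
    rw [Finsupp.range_mapRange]
    exact fun t => hP _ (hcycle t)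
  refine ⟨borelProjection j y, ?_⟩
  rw [horizontalBoundary_borelProjection, Finsupp.mapRange.linearMap_apply, hy,
    borelProjection_borelLift]

variable {P j q : ℕ} {L : Subgroup G}

theorem ambientStabilizer_le_face (i : Fin (P + 1)) (x : S.Simplex (P + 1)) :
    ambientStabilizer H x ≤ ambientStabilizer H (S.face i x) := by
  intro g hg
  obtain ⟨h, rfl, hx⟩ := mem_ambientStabilizer.1 hg
  exact mem_ambientStabilizer.2 ⟨h, rfl, by rw [← map_smul, hx]⟩

theorem horizontalBoundary_pushAt {x : S.Simplex (P + 1)} (hL : L ≤ ambientStabilizer H x)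
    (s : GroupChains R L j) :
    S.horizontalBoundary R P j (pushAt R x hL j s) = ∑ i : Fin (P + 1), (-1 : ℤ) ^ (i : ℕ) •
      pushAt R (S.face i x) (hL.trans (ambientStabilizer_le_face i x)) j s := by
  rw [horizontalBoundary, alternatingSum_apply]
  exact Finset.sum_congr rfl fun i _ => congrArg _ (borelMap_borelMap _ _ _ (fun _ => rfl) j s)

theorem horizontalBoundary_pushAt_zero {x : S.Simplex 1} (hL : L ≤ ambientStabilizer H x)
    (s : GroupChains R L j) : S.horizontalBoundary R 0 j (pushAt R x hL j s)
      = pushAt R (S.face 0 x) (hL.trans (ambientStabilizer_le_face 0 x)) j s := by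
  simp [horizontalBoundary_pushAt]

theorem le_ambientStabilizer_of_subsingleton [Subsingleton (S.Simplex 0)] (x : S.Simplex 0) :
    H ≤ ambientStabilizer H x :=
  fun g hg => mem_ambientStabilizer.2 ⟨⟨g, hg⟩, rfl, Subsingleton.elim _ _⟩

theorem homologySurj_ambientStabilizer [Subsingleton (S.Simplex 0)] (x : S.Simplex 1)
    (htrans : ∀ y : S.Simplex 1, ∃ h : H, h • y = x) (hS : ∀ P ≤ q, S.ChainsExactAt R P)
    (hpage : ∀ Q j, 1 ≤ Q → Q + j = q →
      SecondPageVanishesAt (S.horizontalBoundary R) (S.verticalBoundary R) Q j) :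
    HomologySurj R (ambientStabilizer H x) H q := by
  refine ⟨ambientStabilizer_le x, fun z hz => ?_⟩
  have hH := le_ambientStabilizer_of_subsingleton (S.face 0 x)
  obtain ⟨w, hw, hwz⟩ := (S.isDoubleComplex R).exists_cycle_lift q
    (fun P j h => (hS P (by omega)).rowExactAt j) hpage (pushAt_mem_cycles hH hz)
  refine ⟨component R x q w, component_mem_cycles x hw, ?_⟩
  have hz_eq : groupChainsMap R (ambientStabilizer_le x) q (component R x q w) = z := by
    rw [← forgetPoint_pushAt (hL := ambientStabilizer_le_face 0 x),
      ← horizontalBoundary_pushAt_zero le_rfl, pushAt_component_of_pretransitive x htrans, hwz,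
      forgetPoint_pushAt, groupChainsMap_refl]
  rw [hz_eq, sub_self]
  exact zero_mem _

theorem homologyInj_ambientStabilizer [Subsingleton (S.Simplex 0)] (x : S.Simplex 1)
    (hS : ∀ P ≤ q + 1, S.ChainsExactAt R P)
    (hpage : ∀ Q j, 2 ≤ Q → Q + j = q + 1 →
      SecondPageVanishesAt (S.horizontalBoundary R) (S.verticalBoundary R) Q j)
    (hd : ∀ w ∈ cycles (S.verticalBoundary R 2) q,
      S.horizontalBoundary R 1 q w ∈ boundaries (S.verticalBoundary R 1) q) :
    HomologyInj R (ambientStabilizer H x) H q := by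
  refine ⟨ambientStabilizer_le x, fun s hs hb => ?_⟩
  have hH := le_ambientStabilizer_of_subsingleton (S.face 0 x)
  have hface : S.horizontalBoundary R 0 q (pushAt R x le_rfl q s)
      ∈ boundaries (S.verticalBoundary R 0) q := by
    rw [horizontalBoundary_pushAt_zero, ← pushAt_groupChainsMap (ambientStabilizer_le x) hH]
    exact pushAt_mem_boundaries hH hb
  have hpush := (S.isDoubleComplex R).mem_boundaries_of_map_mem_boundaries q
    (fun P j h => (hS P (by omega)).rowExactAt j) hpage hd (pushAt_mem_cycles le_rfl hs) hface
  rw [← component_pushAt x q s]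
  exact component_mem_boundaries x hpush

theorem horizontalBoundary_one_mem_boundaries
    (h : ∀ x : S.Simplex 2, ∃ L : Subgroup G, HomologySurj R L (ambientStabilizer H x) j ∧
      ∃ g : H, (∀ l ∈ L, (g : G) * l = l * g) ∧ g • S.face 0 x = S.face 1 x)
    {w : BorelChains R H (S.Simplex 2) j} (hw : w ∈ cycles (S.verticalBoundary R 2) j) :
    S.horizontalBoundary R 1 j w ∈ boundaries (S.verticalBoundary R 1) j := by
  refine borelCycle_induction (p := fun w => S.horizontalBoundary R 1 j w
    ∈ boundaries (S.verticalBoundary R 1) j) ?_ (fun w w' hw hw' => ?_) (fun x s hs => ?_) hw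
  · rw [map_zero]
    exact zero_mem _
  · rw [map_add]
    exact add_mem hw hw'
  · obtain ⟨L, ⟨hL, hsurj⟩, g, hg, hgx⟩ := h x
    obtain ⟨s', hs', hb⟩ := hsurj s hs
    have hsub := (S.isDoubleComplex R).map_mem_vertical_boundaries
      (pushAt_mem_boundaries le_rfl hb)
    have hmove := pushAt_sub_pushAt_mem_boundaries (hL.trans (ambientStabilizer_le_face 0 x))
      (hL.trans (ambientStabilizer_le_face 1 x)) g hg hgx hs'
    have hface : S.horizontalBoundary R 1 j (pushAt R x hL j s')
        = pushAt R (S.face 0 x) (hL.trans (ambientStabilizer_le_face 0 x)) j s'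
          - pushAt R (S.face 1 x) (hL.trans (ambientStabilizer_le_face 1 x)) j s' := by
      simp [horizontalBoundary_pushAt, Fin.sum_univ_two, sub_eq_add_neg]
    rw [map_sub, map_sub, pushAt_groupChainsMap, hface] at hsub
    simpa only [sub_add_cancel] using add_mem hsub hmove

theorem secondPageVanishesAt_one
    (h : ∀ x : S.Simplex 2, ∃ (y : S.Simplex 3) (L : Subgroup G),
      HomologySurj R L (ambientStabilizer H x) j ∧ L ≤ ambientStabilizer H y ∧ S.face 0 y = x ∧
      ∃ g : H, (∀ l ∈ L, (g : G) * l = l * g) ∧ g • S.face 1 y = S.face 2 y) :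
    SecondPageVanishesAt (S.horizontalBoundary R) (S.verticalBoundary R) 1 j := by
  intro w hw _
  refine borelCycle_induction (p := fun w => ∃ y ∈ cycles (S.verticalBoundary R 3) j,
    w - S.horizontalBoundary R 2 j y ∈ boundaries (S.verticalBoundary R 2) j) ?_ ?_
    (fun x s hs => ?_) hw
  · exact ⟨0, zero_mem _, by rw [map_zero, sub_zero]; exact zero_mem _⟩
  · rintro w w' ⟨y, hy, hb⟩ ⟨y', hy', hb'⟩
    exact ⟨y + y', add_mem hy hy', by rw [map_add, add_sub_add_comm]; exact add_mem hb hb'⟩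
  · obtain ⟨y, L, ⟨hL, hsurj⟩, hLy, rfl, g, hg, hgx⟩ := h x
    obtain ⟨s', hs', hb⟩ := hsurj s hs
    refine ⟨pushAt R y hLy j s', pushAt_mem_cycles hLy hs', ?_⟩
    have hsub := pushAt_mem_boundaries (le_refl (ambientStabilizer H (S.face 0 y))) hb
    have hmove := pushAt_sub_pushAt_mem_boundaries (hLy.trans (ambientStabilizer_le_face 1 y))
      (hLy.trans (ambientStabilizer_le_face 2 y)) g hg hgx hs'
    have hface : S.horizontalBoundary R 2 j (pushAt R y hLy j s')
        = pushAt R (S.face 0 y) hL j s'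
          - pushAt R (S.face 1 y) (hLy.trans (ambientStabilizer_le_face 1 y)) j s'
          + pushAt R (S.face 2 y) (hLy.trans (ambientStabilizer_le_face 2 y)) j s' := by
      rw [horizontalBoundary_pushAt, Fin.sum_univ_three]
      simp [sub_eq_add_neg]
    rw [map_sub, pushAt_groupChainsMap] at hsub
    rw [hface, sub_add, ← sub_add]
    exact add_mem hsub hmove

end EquivariantSemisimplicialSet

end EquivariantSemisimplicialSets

section OrbitProjection

variable (R : Type*) [Ring R] {G : Type*} [Group G] {H : Subgroup G} {X Y : Type*}
  [MulAction H X] [MulAction H Y]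

/-- The projection of Borel chains to chains on the orbit space with coefficients in group chains.
On homology it is an isomorphism in the degrees where all stabilizers have the homology
of `H`. -/
noncomputable def orbitProjection (H : Subgroup G) (X : Type*) [MulAction H X] (j : ℕ) :
    BorelChains R H X j →ₗ[R] (OrbitSpace H X →₀ GroupChains R H j) :=
  OrbitChains.lift
    (fun p : X × (Fin (j + 1) → G) => Finsupp.single (orbitMk H p.1) (orbitBasis R H ((), p.2)))
    fun h ⟨x, t⟩ => by
      have ht : orbitBasis R H ((), h • t) = orbitBasis R H ((), t) := orbitBasis_smul h ((), t)
      simp only [Prod.smul_mk, orbitMk_smul, ht]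

/-- The map of orbit spaces induced by an equivariant map. -/
def orbitSpaceMap (f : X →ₑ[Subgroup.inclusion (le_refl H)] Y) : OrbitSpace H X → OrbitSpace H Y :=
  Quotient.map f fun a b hab => by
    obtain ⟨h, rfl⟩ := MulAction.mem_orbit_iff.1 (MulAction.orbitRel_apply.1 hab)
    exact MulAction.orbitRel_apply.2
      (MulAction.mem_orbit_iff.2 ⟨Subgroup.inclusion (le_refl H) h, (map_smulₛₗ f h b).symm⟩)

variable {R} {j : ℕ}

theorem orbitSpaceMap_orbitMk (f : X →ₑ[Subgroup.inclusion (le_refl H)] Y) (x : X) :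
    orbitSpaceMap f (orbitMk H x) = orbitMk H (f x) := rfl

theorem orbitProjection_orbitBasis (x : X) (t : Fin (j + 1) → G) :
    orbitProjection R H X j (orbitBasis R H (x, t))
      = Finsupp.single (orbitMk H x) (orbitBasis R H ((), t)) :=
  OrbitChains.lift_orbitBasis _ _ _

theorem orbitProjection_apply_orbitMk (w : BorelChains R H X j) (x : X) :
    orbitProjection R H X j w (orbitMk H x)
      = groupChainsMap R (ambientStabilizer_le x) j (component R x j w) := by
  refine OrbitChains.congr_of_basis (M := GroupChains R H j)
    (f := Finsupp.lapply (orbitMk H x) ∘ₗ orbitProjection R H X j)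
    (g := groupChainsMap R (ambientStabilizer_le x) j ∘ₗ component R x j) (fun ⟨y, t⟩ => ?_) w
  simp only [LinearMap.comp_apply, orbitProjection_orbitBasis, Finsupp.lapply_apply]
  by_cases hy : ∃ h : H, h • y = x
  · rw [orbitMk_eq_iff.2 hy, Finsupp.single_eq_same]
    obtain ⟨h, hh⟩ := hy
    rw [component_orbitBasis hh, groupChainsMap_orbitBasis]
    exact (orbitBasis_smul h ((), t)).symm
  · rw [component_orbitBasis_of_not_exists hy, map_zero,
      Finsupp.single_eq_of_ne' fun he => hy (orbitMk_eq_iff.1 he)]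

theorem orbitProjection_pushAt {L : Subgroup G} {x : X} (hL : L ≤ ambientStabilizer H x)
    (s : GroupChains R L j) :
    orbitProjection R H X j (pushAt R x hL j s) = Finsupp.single (orbitMk H x)
      (groupChainsMap R (hL.trans (ambientStabilizer_le x)) j s) := by
  refine OrbitChains.congr_of_basis (M := OrbitSpace H X →₀ GroupChains R H j)
    (f := orbitProjection R H X j ∘ₗ pushAt R x hL j)
    (g := Finsupp.lsingle (orbitMk H x) ∘ₗ
      groupChainsMap R (hL.trans (ambientStabilizer_le x)) j) (fun ⟨⟨⟩, t⟩ => ?_) s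
  simp [orbitProjection_orbitBasis]

theorem orbitProjection_borelMap (f : X →ₑ[Subgroup.inclusion (le_refl H)] Y)
    (w : BorelChains R H X j) :
    orbitProjection R H Y j (borelMap R f j w)
      = Finsupp.mapDomain (orbitSpaceMap f) (orbitProjection R H X j w) := by
  refine OrbitChains.congr_of_basis (M := OrbitSpace H Y →₀ GroupChains R H j)
    (f := orbitProjection R H Y j ∘ₗ borelMap R f j)
    (g := Finsupp.lmapDomain _ R (orbitSpaceMap f) ∘ₗ orbitProjection R H X j)
    (fun ⟨x, t⟩ => ?_) w
  simp [orbitProjection_orbitBasis, orbitSpaceMap_orbitMk]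

theorem orbitProjection_apply_mem_cycles {w : BorelChains R H X j}
    (hw : w ∈ cycles (borelBoundary R H X) j) (y : OrbitSpace H X) :
    orbitProjection R H X j w y ∈ cycles (groupBoundary R H) j := by
  rw [← orbitMk_out y, orbitProjection_apply_orbitMk]
  exact groupChainsMap_mem_cycles _ (component_mem_cycles _ hw)

theorem orbitProjection_apply_mem_boundaries {w : BorelChains R H X j}
    (hw : w ∈ boundaries (borelBoundary R H X) j) (y : OrbitSpace H X) :
    orbitProjection R H X j w y ∈ boundaries (groupBoundary R H) j := by
  rw [← orbitMk_out y, orbitProjection_apply_orbitMk]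
  exact groupChainsMap_mem_boundaries _ (component_mem_boundaries _ hw)

theorem exists_sub_orbitProjection_mem_boundaries
    (hX : ∀ x : X, HomologySurj R (ambientStabilizer H x) H j)
    {k : OrbitSpace H X →₀ GroupChains R H j} (hk : ∀ y, k y ∈ cycles (groupBoundary R H) j) :
    ∃ w ∈ cycles (borelBoundary R H X) j,
      ∀ y, (k - orbitProjection R H X j w) y ∈ boundaries (groupBoundary R H) j := by
  classical
  have hlift (y : OrbitSpace H X) :
      ∃ s ∈ cycles (groupBoundary R (ambientStabilizer H (Quotient.out y))) j,
        k y - groupChainsMap R (ambientStabilizer_le _) j s ∈ boundaries (groupBoundary R H) j :=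
    (hX (Quotient.out y)).2 _ (hk y)
  choose s hs hks using hlift
  refine ⟨∑ y ∈ k.support, pushAt R (Quotient.out y) le_rfl j (s y),
    sum_mem fun y _ => pushAt_mem_cycles le_rfl (hs y), fun y => ?_⟩
  simp only [map_sum, orbitProjection_pushAt, orbitMk_out, Finsupp.sub_apply,
    Finsupp.finsetSum_apply, Finsupp.single_apply, Finset.sum_ite_eq']
  split_ifs with hy
  · exact hks y
  · rw [Finsupp.notMem_support_iff.1 hy, sub_zero]
    exact zero_mem _

theorem mem_boundaries_of_orbitProjection_mem_boundaries
    (hX : ∀ x : X, HomologyInj R (ambientStabilizer H x) H j) {w : BorelChains R H X j}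
    (hw : w ∈ cycles (borelBoundary R H X) j)
    (hb : ∀ y, orbitProjection R H X j w y ∈ boundaries (groupBoundary R H) j) :
    w ∈ boundaries (borelBoundary R H X) j :=
  mem_boundaries_of_component_mem_boundaries fun x => (hX x).2 _ (component_mem_cycles x hw) <| by
    rw [← orbitProjection_apply_orbitMk]
    exact hb _

end OrbitProjection

section Cones

variable {R : Type*} [Ring R] {M : Type*} [AddCommGroup M] [Module R M]

theorem mapDomain_apply_mem (N : Submodule R M) {ι κ : Type*} (f : ι → κ) {k : ι →₀ M}
    (hk : ∀ i, k i ∈ N) (y : κ) : Finsupp.mapDomain f k y ∈ N := by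
  classical
  rw [Finsupp.mapDomain, Finsupp.sum_apply]
  refine sum_mem fun i _ => ?_
  change Finsupp.single (f i) (k i) y ∈ N
  rw [Finsupp.single_apply]
  split_ifs
  exacts [hk i, zero_mem _]

namespace EquivariantSemisimplicialSet

variable {G : Type*} [Group G] {H : Subgroup G} (S : EquivariantSemisimplicialSet H) {P j : ℕ}

variable (R M) in
/-- The differential of the chains with coefficients in `M` on the quotient of a semisimplicial
set by the group action. -/
noncomputable def orbitBoundary (P : ℕ) :
    (OrbitSpace H (S.Simplex (P + 1)) →₀ M) →ₗ[R] (OrbitSpace H (S.Simplex P) →₀ M) :=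
  alternatingSum fun i => Finsupp.lmapDomain M R (orbitSpaceMap (S.faceHom i))

variable {S}

theorem orbitBoundary_orbitProjection (w : BorelChains R H (S.Simplex (P + 1)) j) :
    S.orbitBoundary R (GroupChains R H j) P (orbitProjection R H _ j w)
      = orbitProjection R H _ j (S.horizontalBoundary R P j w) := by
  rw [orbitBoundary, horizontalBoundary, alternatingSum_apply, alternatingSum_apply, map_sum]
  exact Finset.sum_congr rfl fun i _ => by
    rw [map_zsmul, orbitProjection_borelMap, Finsupp.lmapDomain_apply]

theorem orbitBoundary_apply_mem (N : Submodule R M)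
    {k : OrbitSpace H (S.Simplex (P + 1)) →₀ M} (hk : ∀ y, k y ∈ N)
    (y : OrbitSpace H (S.Simplex P)) : S.orbitBoundary R M P k y ∈ N := by
  rw [orbitBoundary, alternatingSum_apply, Finsupp.finsetSum_apply]
  exact sum_mem fun i _ => zsmul_mem (mapDomain_apply_mem N _ hk y) _

variable (S) in
/-- A relation expressing that `y` is a cone over `x`, with the apex as first vertex, which
determines the orbit of `y` from the orbit of `x`. -/
structure IsConeRelation (cone : ∀ {P : ℕ}, S.Simplex P → S.Simplex (P + 1) → Prop) : Prop where
  face_zero {P : ℕ} {x : S.Simplex P} {y : S.Simplex (P + 1)} : cone x y → S.face 0 y = x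
  face_succ {P : ℕ} {x : S.Simplex (P + 1)} {y : S.Simplex (P + 2)} (i : Fin (P + 1)) :
    cone x y → cone (S.face i x) (S.face i.succ y)
  orbitMk_eq {P : ℕ} {x x' : S.Simplex P} {y y' : S.Simplex (P + 1)} :
    cone x y → cone x' y' → orbitMk H x = orbitMk H x' → orbitMk H y = orbitMk H y'

namespace IsConeRelation

variable {cone : ∀ {P : ℕ}, S.Simplex P → S.Simplex (P + 1) → Prop}

theorem exists_orbitSpaceMap (hcone : S.IsConeRelation cone)
    (hex : ∀ x : S.Simplex P, ∃ y, cone x y) :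
    ∃ c : OrbitSpace H (S.Simplex P) → OrbitSpace H (S.Simplex (P + 1)),
      ∀ x y, cone x y → c (orbitMk H x) = orbitMk H y := by
  choose f hf using hex
  exact ⟨fun y => orbitMk H (f (Quotient.out y)),
    fun x y hxy => hcone.orbitMk_eq (hf _) hxy (orbitMk_out _)⟩

theorem orbitBoundary_mapDomain_add (hcone : S.IsConeRelation cone)
    (hex : ∀ x : S.Simplex (P + 1), ∃ y, cone x y)
    {c₀ : OrbitSpace H (S.Simplex P) → OrbitSpace H (S.Simplex (P + 1))}
    {c₁ : OrbitSpace H (S.Simplex (P + 1)) → OrbitSpace H (S.Simplex (P + 2))}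
    (hc₀ : ∀ x y, cone x y → c₀ (orbitMk H x) = orbitMk H y)
    (hc₁ : ∀ x y, cone x y → c₁ (orbitMk H x) = orbitMk H y)
    (k : OrbitSpace H (S.Simplex (P + 1)) →₀ M) :
    S.orbitBoundary R M (P + 1) (Finsupp.mapDomain c₁ k)
      + Finsupp.mapDomain c₀ (S.orbitBoundary R M P k) = k := by
  have hzero (y : OrbitSpace H (S.Simplex (P + 1))) :
      orbitSpaceMap (S.faceHom 0) (c₁ y) = y := by
    obtain ⟨x, rfl⟩ : ∃ x, orbitMk H x = y := ⟨_, orbitMk_out y⟩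
    obtain ⟨x', hx'⟩ := hex x
    rw [hc₁ x x' hx', orbitSpaceMap_orbitMk]
    exact congrArg _ (hcone.face_zero hx')
  have hsucc (i : Fin (P + 1)) (y : OrbitSpace H (S.Simplex (P + 1))) :
      orbitSpaceMap (S.faceHom i.succ) (c₁ y) = c₀ (orbitSpaceMap (S.faceHom i) y) := by
    obtain ⟨x, rfl⟩ : ∃ x, orbitMk H x = y := ⟨_, orbitMk_out y⟩
    obtain ⟨x', hx'⟩ := hex x
    rw [hc₁ x x' hx', orbitSpaceMap_orbitMk, orbitSpaceMap_orbitMk]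
    exact (hc₀ _ _ (hcone.face_succ i hx')).symm
  have hcomm := alternatingSum_map
    (fun i : Fin (P + 1) => Finsupp.lmapDomain M R (orbitSpaceMap (S.faceHom i)))
    (fun i : Fin (P + 1) => Finsupp.lmapDomain M R (orbitSpaceMap (S.faceHom i.succ)))
    (Finsupp.lmapDomain M R c₁) (Finsupp.lmapDomain M R c₀) (fun i k => by
      simp only [Finsupp.lmapDomain_apply, ← Finsupp.mapDomain_comp]
      exact congrArg (Finsupp.mapDomain · k) (funext (hsucc i))) k
  rw [orbitBoundary, alternatingSum_succ_apply, ← Finsupp.lmapDomain_apply M R c₁, hcomm,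
    Finsupp.lmapDomain_apply, Finsupp.lmapDomain_apply, ← Finsupp.mapDomain_comp,
    Finsupp.lmapDomain_apply, ← orbitBoundary, sub_add_cancel]
  exact (congrArg (Finsupp.mapDomain · k) (funext hzero)).trans Finsupp.mapDomain_id

theorem secondPageVanishesAt (hcone : S.IsConeRelation cone)
    (hex₁ : ∀ x : S.Simplex (P + 1), ∃ y, cone x y) (hex₀ : ∀ x : S.Simplex P, ∃ y, cone x y)
    (hsurj : ∀ x : S.Simplex (P + 2), HomologySurj R (ambientStabilizer H x) H j)
    (hinj : ∀ x : S.Simplex (P + 1), HomologyInj R (ambientStabilizer H x) H j) :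
    SecondPageVanishesAt (S.horizontalBoundary R) (S.verticalBoundary R) P j := by
  obtain ⟨c₁, hc₁⟩ := hcone.exists_orbitSpaceMap hex₁
  obtain ⟨c₀, hc₀⟩ := hcone.exists_orbitSpaceMap hex₀
  intro w hw hb
  have hcontract := hcone.orbitBoundary_mapDomain_add (R := R) hex₁ hc₀ hc₁
    (orbitProjection R H _ j w)
  obtain ⟨y, hy, hky⟩ := exists_sub_orbitProjection_mem_boundaries hsurj
    (mapDomain_apply_mem _ c₁ (orbitProjection_apply_mem_cycles hw))
  refine ⟨y, hy, mem_boundaries_of_orbitProjection_mem_boundaries hinj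
    (sub_mem hw ((S.isDoubleComplex R).map_mem_vertical_cycles hy)) fun z => ?_⟩
  have hdecomp : orbitProjection R H _ j (w - S.horizontalBoundary R (P + 1) j y)
      = S.orbitBoundary R _ (P + 1)
          (Finsupp.mapDomain c₁ (orbitProjection R H _ j w) - orbitProjection R H _ j y)
        + Finsupp.mapDomain c₀ (orbitProjection R H _ j (S.horizontalBoundary R P j w)) := by
    rw [map_sub, map_sub, orbitBoundary_orbitProjection, ← orbitBoundary_orbitProjection w,
      sub_add_eq_add_sub, hcontract]
  rw [hdecomp, Finsupp.add_apply]
  exact add_mem (orbitBoundary_apply_mem _ hky z)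
    (mapDomain_apply_mem _ c₀ (orbitProjection_apply_mem_boundaries hb) z)

end IsConeRelation

end EquivariantSemisimplicialSet

end Cones

section AlternatingForms

open Module Submodule

variable {K V : Type*} [Field K] [AddCommGroup V] [Module K V] {ω : LinearMap.BilinForm K V}

theorem orthogonal_sup (U U' : Submodule K V) :
    ω.orthogonal (U ⊔ U') = ω.orthogonal U ⊓ ω.orthogonal U' := by
  refine le_antisymm (le_inf (LinearMap.BilinForm.orthogonal_le le_sup_left)
    (LinearMap.BilinForm.orthogonal_le le_sup_right)) fun x ⟨hx, hx'⟩ u hu => ?_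
  obtain ⟨a, ha, b, hb, rfl⟩ := mem_sup.1 hu
  rw [map_add, LinearMap.add_apply, hx a ha, hx' b hb, add_zero]

theorem mem_orthogonal_span_singleton {v x : V} : x ∈ ω.orthogonal (K ∙ v) ↔ ω v x = 0 := by
  rw [LinearMap.BilinForm.orthogonal_span_singleton_eq_toLin_ker, LinearMap.mem_ker]
  rfl

theorem mem_orthogonal_symm (hω : ω.IsAlt) {U : Submodule K V} {x u : V}
    (hx : x ∈ ω.orthogonal U) (hu : u ∈ U) : ω x u = 0 :=
  hω.isRefl u x (hx u hu)

variable (ω) in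
/-- The radical of the restriction of a bilinear form to a subspace. -/
def radical (U : Submodule K V) : Submodule K V := U ⊓ ω.orthogonal U

theorem radical_span_pair (hω : ω.IsAlt) {p q : V} (hpq : ω p q ≠ 0) :
    radical ω (K ∙ p ⊔ K ∙ q) = ⊥ := by
  refine eq_bot_iff.2 fun x ⟨hx, hxo⟩ => ?_
  obtain ⟨a, ha, b, hb, rfl⟩ := mem_sup.1 hx
  obtain ⟨c, rfl⟩ := mem_span_singleton.1 ha
  obtain ⟨d, rfl⟩ := mem_span_singleton.1 hb
  have hp : ω p (c • p + d • q) = 0 := hxo p (mem_sup_left (mem_span_singleton_self p))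
  have hq : ω q (c • p + d • q) = 0 := hxo q (mem_sup_right (mem_span_singleton_self q))
  have hd : d = 0 := by simpa [hω.self_eq_zero, hpq] using hp
  have hc : c = 0 := by simpa [hω.self_eq_zero, mt hω.eq_iff.1 hpq] using hq
  simp [hc, hd]

theorem notMem_of_mem_radical (hω : ω.IsAlt) {U : Submodule K V} {r v : V}
    (hr : r ∈ radical ω U) (hv : ω r v ≠ 0) : v ∉ U :=
  fun h => hv (mem_orthogonal_symm hω hr.2 h)

theorem radical_sup_span_singleton_lt (hω : ω.IsAlt) {U : Submodule K V} {r v : V}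
    (hr : r ∈ radical ω U) (hv : ω r v ≠ 0) : radical ω (U ⊔ K ∙ v) < radical ω U := by
  refine lt_of_le_of_ne (fun z ⟨hz, hzo⟩ => ?_) fun h => ?_
  · obtain ⟨u, hu, c, hc, rfl⟩ := mem_sup.1 hz
    obtain ⟨a, rfl⟩ := mem_span_singleton.1 hc
    have hrz : ω r (u + a • v) = 0 := hzo r (mem_sup_left hr.1)
    rw [map_add, mem_orthogonal_symm hω hr.2 hu, zero_add, map_smul, smul_eq_mul] at hrz
    obtain rfl : a = 0 := (mul_eq_zero.1 hrz).resolve_right hv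
    rw [zero_smul, add_zero] at hzo ⊢
    exact ⟨hu, LinearMap.BilinForm.orthogonal_le le_sup_left hzo⟩
  · exact hv (mem_orthogonal_symm hω (h.ge hr).2 (mem_sup_right (mem_span_singleton_self v)))

theorem mem_radical_of_add_mem_radical (hω : ω.IsAlt) {U P : Submodule K V} {v y p : V}
    (hPU : P ≤ ω.orthogonal U) (hP : radical ω P = ⊥) (hy : y ∈ U ⊔ K ∙ v) (hp : p ∈ P)
    (h : y + p ∈ radical ω ((U ⊔ K ∙ v) ⊔ P)) : y ∈ radical ω (U ⊔ K ∙ v) := by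
  have hortho : ∀ w ∈ (U ⊔ K ∙ v) ⊔ P, ω w y + ω w p = 0 := fun w hw =>
    (map_add (ω w) y p).symm.trans (h.2 w hw)
  obtain ⟨u, hu, c, hc, rfl⟩ := mem_sup.1 hy
  obtain ⟨a, rfl⟩ := mem_span_singleton.1 hc
  have hvp : ω v p = 0 := by
    by_cases ha : a = 0
    · have hpP : p ∈ ω.orthogonal P := fun q hq => by
        have hqy : ω q (u + a • v) = 0 := by
          rw [ha, zero_smul, add_zero]; exact mem_orthogonal_symm hω (hPU hq) hu
        simpa only [hqy, zero_add] using hortho q (mem_sup_right hq)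
      have hp0 : p ∈ radical ω P := ⟨hp, hpP⟩
      rw [hP, mem_bot] at hp0
      rw [hp0, map_zero]
    · have hup : ω u p = 0 := hPU hp u hu
      have hyp := hortho _ (mem_sup_left hy)
      rw [hω.self_eq_zero, zero_add, map_add, LinearMap.add_apply, hup, zero_add, map_smul,
        LinearMap.smul_apply, smul_eq_mul] at hyp
      exact (mul_eq_zero.1 hyp).resolve_left ha
  refine ⟨hy, ?_⟩
  rw [orthogonal_sup]
  refine ⟨fun w hw => ?_, mem_orthogonal_span_singleton.2 ?_⟩
  · have hwp : ω w p = 0 := hPU hp w hw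
    simpa only [hwp, add_zero] using hortho w (mem_sup_left (mem_sup_left hw))
  · simpa only [hvp, add_zero] using
      hortho v (mem_sup_left (mem_sup_right (mem_span_singleton_self v)))

variable (ω) in
/-- The dimension of the symplectic space `Uᗮ / (U ⊓ Uᗮ)`, which measures how much room is left
for hyperbolic planes orthogonal to `U`. -/
noncomputable def residualRank (U : Submodule K V) : ℕ :=
  finrank K (ω.orthogonal U) - finrank K (radical ω U)

theorem exists_mem_orthogonal_notMem {U : Submodule K V} (h : residualRank ω U ≠ 0) :
    ∃ y ∈ ω.orthogonal U, y ∉ U := by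
  contrapose! h
  rw [residualRank, radical, inf_eq_right.2 h, Nat.sub_self]

theorem residualRank_map (e : V ≃ₗ[K] V) (he : ∀ x y, ω (e x) (e y) = ω x y)
    (U : Submodule K V) : residualRank ω (U.map (e : V →ₗ[K] V)) = residualRank ω U := by
  have horth : ω.orthogonal (U.map (e : V →ₗ[K] V)) = (ω.orthogonal U).map (e : V →ₗ[K] V) := by
    ext x
    rw [mem_map_equiv]
    refine ⟨fun hx u hu => ?_, ?_⟩
    · have h : ω (e u) x = 0 := hx (e u) (mem_map_of_mem hu)
      rwa [← e.apply_symm_apply x, he] at h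
    · rintro hx _ ⟨u, hu, rfl⟩
      rw [← e.apply_symm_apply x]
      exact (he u _).trans (hx u hu)
  rw [residualRank, radical, horth, ← Submodule.map_inf _ e.injective, LinearEquiv.finrank_map_eq,
    LinearEquiv.finrank_map_eq, residualRank, radical]

variable [FiniteDimensional K V]

theorem finrank_orthogonal_add_finrank (hnd : ω.Nondegenerate) (U : Submodule K V) :
    finrank K (ω.orthogonal U) + finrank K U = finrank K V := by
  rw [LinearMap.BilinForm.finrank_orthogonal hnd, Nat.sub_add_cancel (finrank_le U)]

theorem finrank_sup_span_singleton_le (U : Submodule K V) (v : V) :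
    finrank K (U ⊔ K ∙ v : Submodule K V) ≤ finrank K U + 1 :=
  (finrank_add_le_finrank_add_finrank U (K ∙ v)).trans <|
    Nat.add_le_add_left ((finrank_span_le_card ({v} : Set V)).trans (by simp)) _

theorem codisjoint_orthogonal_of_radical_eq_bot (hnd : ω.Nondegenerate) {T : Submodule K V}
    (hT : radical ω T = ⊥) : T ⊔ ω.orthogonal T = ⊤ := by
  have hsum := finrank_sup_add_finrank_inf_eq T (ω.orthogonal T)
  rw [show T ⊓ ω.orthogonal T = ⊥ from hT, finrank_bot] at hsum
  have := finrank_orthogonal_add_finrank hnd T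
  exact eq_top_of_finrank_eq (by omega)

theorem finrank_radical_sup_le (hω : ω.IsAlt) {U P : Submodule K V}
    (hPU : P ≤ ω.orthogonal U) (hP : radical ω P = ⊥) (v : V) :
    finrank K (radical ω ((U ⊔ K ∙ v) ⊔ P)) ≤ finrank K (radical ω (U ⊔ K ∙ v)) := by
  have hdisj : radical ω ((U ⊔ K ∙ v) ⊔ P) ⊓ P = ⊥ := by
    rw [eq_bot_iff, ← hP]
    exact fun z ⟨hz, hzP⟩ => ⟨hzP, LinearMap.BilinForm.orthogonal_le le_sup_right hz.2⟩
  have hle : radical ω ((U ⊔ K ∙ v) ⊔ P) ⊔ P ≤ radical ω (U ⊔ K ∙ v) ⊔ P := by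
    refine sup_le (fun z hz => ?_) le_sup_right
    obtain ⟨y, hy, p, hp, rfl⟩ := mem_sup.1 hz.1
    exact add_mem_sup (mem_radical_of_add_mem_radical hω hPU hP hy hp hz) hp
  have hsum := finrank_sup_add_finrank_inf_eq (radical ω ((U ⊔ K ∙ v) ⊔ P)) P
  rw [hdisj, finrank_bot] at hsum
  have := finrank_mono hle
  have := finrank_add_le_finrank_add_finrank (radical ω (U ⊔ K ∙ v)) P
  omega

theorem residualRank_add_finrank_radical (U : Submodule K V) :
    residualRank ω U + finrank K (radical ω U) = finrank K (ω.orthogonal U) :=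
  Nat.sub_add_cancel (finrank_mono inf_le_right)

theorem residualRank_anti {U U' : Submodule K V} (h : U ≤ U') :
    residualRank ω U' ≤ residualRank ω U := by
  have hle : ω.orthogonal U' ⊔ radical ω U ≤ ω.orthogonal U :=
    sup_le (LinearMap.BilinForm.orthogonal_le h) inf_le_right
  have hinf : ω.orthogonal U' ⊓ radical ω U ≤ radical ω U' :=
    fun x ⟨hx, hxU⟩ => ⟨h hxU.1, hx⟩
  have := finrank_mono hle
  have := finrank_mono hinf
  have := finrank_sup_add_finrank_inf_eq (ω.orthogonal U') (radical ω U)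
  have := residualRank_add_finrank_radical (ω := ω) U
  have := residualRank_add_finrank_radical (ω := ω) U'
  omega

theorem residualRank_le_sup_span_singleton_add_two (hnd : ω.Nondegenerate)
    (U : Submodule K V) (v : V) : residualRank ω U ≤ residualRank ω (U ⊔ K ∙ v) + 2 := by
  have hle : radical ω (U ⊔ K ∙ v) ⊔ U ≤ U ⊔ K ∙ v := sup_le inf_le_left le_sup_left
  have hinf : radical ω (U ⊔ K ∙ v) ⊓ U ≤ radical ω U :=
    fun x ⟨hx, hxU⟩ => ⟨hxU, LinearMap.BilinForm.orthogonal_le le_sup_left hx.2⟩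
  have := finrank_mono hle
  have := finrank_mono hinf
  have := finrank_sup_add_finrank_inf_eq (radical ω (U ⊔ K ∙ v)) U
  have := finrank_sup_span_singleton_le U v
  have := finrank_orthogonal_add_finrank hnd U
  have := finrank_orthogonal_add_finrank hnd (U ⊔ K ∙ v)
  have := residualRank_add_finrank_radical (ω := ω) U
  have := residualRank_add_finrank_radical (ω := ω) (U ⊔ K ∙ v)
  omega

theorem residualRank_le_of_mem_radical (hω : ω.IsAlt) (hnd : ω.Nondegenerate)
    {U : Submodule K V} {r v : V} (hr : r ∈ radical ω U) (hv : ω r v ≠ 0) :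
    residualRank ω U ≤ residualRank ω (U ⊔ K ∙ v) := by
  have := finrank_lt_finrank_of_lt (radical_sup_span_singleton_lt hω hr hv)
  have := finrank_sup_span_singleton_le U v
  have := finrank_orthogonal_add_finrank hnd U
  have := finrank_orthogonal_add_finrank hnd (U ⊔ K ∙ v)
  have := residualRank_add_finrank_radical (ω := ω) U
  have := residualRank_add_finrank_radical (ω := ω) (U ⊔ K ∙ v)
  omega

theorem residualRank_le_sup_add_finrank (hω : ω.IsAlt) (hnd : ω.Nondegenerate)
    {U P : Submodule K V} (hPU : P ≤ ω.orthogonal U) (hP : radical ω P = ⊥) (v : V) :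
    residualRank ω (U ⊔ K ∙ v) ≤ residualRank ω ((U ⊔ K ∙ v) ⊔ P) + finrank K P := by
  have := finrank_radical_sup_le hω hPU hP v
  have := finrank_add_le_finrank_add_finrank (U ⊔ K ∙ v) P
  have := finrank_orthogonal_add_finrank hnd (U ⊔ K ∙ v)
  have := finrank_orthogonal_add_finrank hnd ((U ⊔ K ∙ v) ⊔ P)
  have := residualRank_add_finrank_radical (ω := ω) (U ⊔ K ∙ v)
  have := residualRank_add_finrank_radical (ω := ω) ((U ⊔ K ∙ v) ⊔ P)
  omega

end AlternatingForms

section SymplecticAction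

open Module Submodule

variable {K V G : Type*} [Field K] [AddCommGroup V] [Module K V] {ω : LinearMap.BilinForm K V}
  [Group G] [DistribMulAction G V]

theorem notMem_sup_orthogonal {U T : Submodule K V} (hUT : U ≤ T) (hT : radical ω T = ⊥)
    {x : V} (hx : x ∈ T) (hxU : x ∉ U) : x ∉ U ⊔ ω.orthogonal T := by
  intro hmem
  obtain ⟨a, ha, s, hs, rfl⟩ := mem_sup.1 hmem
  have hsT : s ∈ radical ω T := ⟨(add_mem_cancel_left (hUT ha)).1 hx, hs⟩
  rw [hT, mem_bot] at hsT
  exact hxU (by rwa [hsT, add_zero])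

variable (G) in
/-- The subgroup of the elements of `G` fixing a linear subspace pointwise. -/
abbrev pointwiseStabilizer (U : Submodule K V) : Subgroup G := fixingSubgroup G (U : Set V)

theorem mem_pointwiseStabilizer_iff_le [SMulCommClass G K V] {U : Submodule K V} {g : G} :
    g ∈ pointwiseStabilizer G U ↔
      U ≤ LinearMap.eqLocus (DistribSMul.toLinearMap K V g) LinearMap.id :=
  mem_fixingSubgroup_iff G

theorem mem_pointwiseStabilizer_sup [SMulCommClass G K V] {U U' : Submodule K V} {g : G} :
    g ∈ pointwiseStabilizer G (U ⊔ U') ↔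
      g ∈ pointwiseStabilizer G U ∧ g ∈ pointwiseStabilizer G U' := by
  simp only [mem_pointwiseStabilizer_iff_le, sup_le_iff]

theorem mem_pointwiseStabilizer_span [SMulCommClass G K V] {s : Set V} {g : G} :
    g ∈ pointwiseStabilizer G (span K s) ↔ ∀ x ∈ s, g • x = x := by
  rw [mem_pointwiseStabilizer_iff_le, span_le]
  rfl

variable (G ω) in
/-- A group acting linearly by isometries of a symplectic form and containing all symplectic
transvections; together with faithfulness this makes it the full symplectic group. -/
structure IsSymplecticAction : Prop where
  isAlt : ω.IsAlt
  nondegenerate : ω.Nondegenerate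
  form_smul_smul (g : G) (x y : V) : ω (g • x) (g • y) = ω x y
  exists_transvection (u : V) (c : K) : ∃ g : G, ∀ x, g • x = x + (c * ω u x) • u

namespace IsSymplecticAction

theorem form_smul_right (hG : IsSymplecticAction G ω) {U : Submodule K V} {g : G}
    (hg : g ∈ pointwiseStabilizer G U) {u : V} (hu : u ∈ U) (x : V) :
    ω u (g • x) = ω u x := by
  conv_lhs => rw [← (mem_fixingSubgroup_iff G).1 hg u hu]
  exact hG.form_smul_smul g u x

theorem exists_smul_eq_of_form_ne_zero (hG : IsSymplecticAction G ω) {A : Submodule K V}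
    {v w : V} (h : ∀ a ∈ A, ω a v = ω a w) (hvw : ω v w ≠ 0) :
    ∃ g ∈ pointwiseStabilizer G A, g • v = w := by
  have hne : ω (w - v) v ≠ 0 := by
    rw [map_sub, LinearMap.sub_apply, hG.isAlt.self_eq_zero, sub_zero]
    exact mt hG.isAlt.eq_iff.1 hvw
  obtain ⟨g, hg⟩ := hG.exists_transvection (w - v) (ω (w - v) v)⁻¹
  refine ⟨g, (mem_fixingSubgroup_iff G).2 fun a ha => ?_, ?_⟩
  · rw [hg, ← hG.isAlt.neg_eq a, map_sub (ω a), h a ha]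
    simp
  · rw [hg, inv_mul_cancel₀ hne, one_smul, add_sub_cancel]

theorem smul_mem_orthogonal (hG : IsSymplecticAction G ω) {U : Submodule K V} {g : G}
    (hg : g ∈ pointwiseStabilizer G U) {x : V} (hx : x ∈ ω.orthogonal U) :
    g • x ∈ ω.orthogonal U :=
  fun u hu => (hG.form_smul_right hg hu x).trans (hx u hu)

variable [FiniteDimensional K V]

theorem exists_orthogonal_form_ne_zero (hG : IsSymplecticAction G ω) {A : Submodule K V}
    {v : V} (hv : v ∉ A) : ∃ y ∈ ω.orthogonal A, ω y v ≠ 0 := by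
  contrapose! hv
  rw [← LinearMap.BilinForm.orthogonal_orthogonal hG.nondegenerate hG.isAlt.isRefl A]
  exact hv

theorem exists_orthogonal_form_ne_zero₂ (hG : IsSymplecticAction G ω) {A : Submodule K V}
    {v w : V} (hv : v ∉ A) (hw : w ∉ A) :
    ∃ y ∈ ω.orthogonal A, ω y v ≠ 0 ∧ ω y w ≠ 0 := by
  obtain ⟨y, hy, hyv⟩ := hG.exists_orthogonal_form_ne_zero hv
  obtain ⟨z, hz, hzw⟩ := hG.exists_orthogonal_form_ne_zero hw
  by_cases hyw : ω y w = 0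
  · by_cases hzv : ω z v = 0
    · exact ⟨y + z, add_mem hy hz, by simpa [hzv] using hyv, by simpa [hyw] using hzw⟩
    · exact ⟨z, hz, hzv, hzw⟩
  · exact ⟨y, hy, hyv, hyw⟩

/-- If `ω v w = 0` then no transvection takes `v` to `w`, but two of them do, passing through
`v + y` for a generic `y` orthogonal to `A`. -/
theorem exists_smul_eq (hG : IsSymplecticAction G ω) {A : Submodule K V} {v w : V}
    (hv : v ∉ A) (hw : w ∉ A) (h : ∀ a ∈ A, ω a v = ω a w) :
    ∃ g ∈ pointwiseStabilizer G A, g • v = w := by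
  by_cases hvw : ω v w = 0
  swap
  · exact hG.exists_smul_eq_of_form_ne_zero h hvw
  obtain ⟨y, hy, hyv, hyw⟩ := hG.exists_orthogonal_form_ne_zero₂ hv hw
  have hadd : ∀ a ∈ A, ω a v = ω a (v + y) := fun a ha => by
    rw [map_add, hy a ha, add_zero]
  obtain ⟨g, hg, hgv⟩ := hG.exists_smul_eq_of_form_ne_zero hadd (by
    rw [map_add, hG.isAlt.self_eq_zero, zero_add]
    exact mt hG.isAlt.eq_iff.1 hyv)
  obtain ⟨g', hg', hgw⟩ := hG.exists_smul_eq_of_form_ne_zero (v := v + y) (w := w)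
    (fun a ha => (hadd a ha).symm.trans (h a ha))
    (by rwa [map_add, LinearMap.add_apply, hvw, zero_add])
  exact ⟨g' * g, mul_mem hg' hg, by rw [mul_smul, hgv, hgw]⟩

theorem commute_of_radical_eq_bot [FaithfulSMul G V] (hG : IsSymplecticAction G ω)
    {T : Submodule K V} (hT : radical ω T = ⊥) {g l : G}
    (hg : g ∈ pointwiseStabilizer G (ω.orthogonal T)) (hl : l ∈ pointwiseStabilizer G T) :
    Commute g l := by
  refine FaithfulSMul.eq_of_smul_eq_smul (α := V) fun x => ?_
  obtain ⟨t, ht, s, hs, rfl⟩ := mem_sup.1 <|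
    (codisjoint_orthogonal_of_radical_eq_bot hG.nondegenerate hT).ge (mem_top (x := x))
  have hls : l • s ∈ ω.orthogonal T := hG.smul_mem_orthogonal hl hs
  have hgt : g • t ∈ T := by
    have hoo := LinearMap.BilinForm.orthogonal_orthogonal hG.nondegenerate hG.isAlt.isRefl T
    rw [← hoo] at ht ⊢
    exact hG.smul_mem_orthogonal hg ht
  rw [mem_fixingSubgroup_iff] at hg hl
  rw [mul_smul, mul_smul, smul_add, smul_add, smul_add, smul_add, hl t ht, hg _ hls, hg s hs,
    hl _ hgt]

theorem exists_smul_eq_commute [FaithfulSMul G V] [SMulCommClass G K V]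
    (hG : IsSymplecticAction G ω) {U T : Submodule K V} (hUT : U ≤ T) (hT : radical ω T = ⊥)
    {v w : V} (hv : v ∈ T) (hw : w ∈ T) (hvU : v ∉ U) (hwU : w ∉ U) (h : ∀ a ∈ U, ω a v = ω a w) :
    ∃ g ∈ pointwiseStabilizer G U, g • v = w ∧
      ∀ l ∈ pointwiseStabilizer G T, Commute g l := by
  obtain ⟨g, hg, hgv⟩ := hG.exists_smul_eq (notMem_sup_orthogonal hUT hT hv hvU)
    (notMem_sup_orthogonal hUT hT hw hwU) (fun a ha => by
      obtain ⟨b, hb, s, hs, rfl⟩ := mem_sup.1 ha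
      rw [map_add, LinearMap.add_apply, LinearMap.add_apply, h b hb,
        mem_orthogonal_symm hG.isAlt hs hv, mem_orthogonal_symm hG.isAlt hs hw])
  obtain ⟨hgU, hgT⟩ := mem_pointwiseStabilizer_sup.1 hg
  exact ⟨g, hgU, hgv, fun l hl => hG.commute_of_radical_eq_bot hT hgT hl⟩

end IsSymplecticAction

/-- Surjectivity of stabilization in degree `j` for the pointwise stabilizers of subspaces: adding
a vector to the subspace is surjective on homology if the residual rank remains at least `m`. -/
def StabilizersHomologySurj (R : Type*) [Ring R] (G : Type*) [Group G] [DistribMulAction G V]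
    (ω : LinearMap.BilinForm K V) (m j : ℕ) : Prop :=
  ∀ (U : Submodule K V) (v : V), v ∉ U → m ≤ residualRank ω (U ⊔ K ∙ v) →
    HomologySurj R (pointwiseStabilizer G (U ⊔ K ∙ v)) (pointwiseStabilizer G U) j

/-- Injectivity of stabilization in degree `j` for the pointwise stabilizers of subspaces: adding
a vector to the subspace is injective on homology if the residual rank remains at least `m`. -/
def StabilizersHomologyInj (R : Type*) [Ring R] (G : Type*) [Group G] [DistribMulAction G V]
    (ω : LinearMap.BilinForm K V) (m j : ℕ) : Prop :=
  ∀ (U : Submodule K V) (v : V), v ∉ U → m ≤ residualRank ω (U ⊔ K ∙ v) →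
    HomologyInj R (pointwiseStabilizer G (U ⊔ K ∙ v)) (pointwiseStabilizer G U) j

/-- A subspace is enlarged to a nondegenerate one without lowering its residual rank, by adding
vectors that pair nontrivially with its radical. -/
theorem StabilizersHomologySurj.exists_nondegenerate [FiniteDimensional K V] {R : Type*} [Ring R]
    {m j : ℕ} (hstep : StabilizersHomologySurj R G ω m j) (hG : IsSymplecticAction G ω)
    (U : Submodule K V) (hm : m ≤ residualRank ω U) :
    ∃ T, U ≤ T ∧ radical ω T = ⊥ ∧
      HomologySurj R (pointwiseStabilizer G T) (pointwiseStabilizer G U) j := by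
  induction hr : finrank K (radical ω U) using Nat.strong_induction_on generalizing U with
  | _ r ih =>
    by_cases hU : radical ω U = ⊥
    · exact ⟨U, le_rfl, hU, HomologySurj.refl R _ _⟩
    · obtain ⟨ρ, hρ, hne⟩ := exists_mem_ne_zero_of_ne_bot hU
      obtain ⟨v, hv⟩ : ∃ v, ω ρ v ≠ 0 := by
        contrapose! hne
        exact hG.nondegenerate.1 ρ hne
      have hm' := hm.trans (residualRank_le_of_mem_radical hG.isAlt hG.nondegenerate hρ hv)
      obtain ⟨T, hUT, hT, hsurj⟩ := ih _ (hr ▸ finrank_lt_finrank_of_lt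
        (radical_sup_span_singleton_lt hG.isAlt hρ hv)) (U ⊔ K ∙ v) hm' rfl
      exact ⟨T, le_sup_left.trans hUT, hT,
        hsurj.trans (hstep U v (notMem_of_mem_radical hG.isAlt hρ hv) hm')⟩

end SymplecticAction

section TuplesModSubspace

open Module Submodule

variable {K V : Type*} [Field K] [AddCommGroup V] [Module K V] {U T : Submodule K V} {P : ℕ}

/-- The subspace spanned by `U` and the entries of a tuple. -/
def supSpan (U : Submodule K V) (x : Fin P → V) : Submodule K V := U ⊔ span K (Set.range x)

/-- Linear independence of a tuple modulo `U`. -/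
def LinearIndependentMod (U : Submodule K V) (x : Fin P → V) : Prop :=
  LinearIndependent K (U.mkQ ∘ x)

theorem supSpan_zero (x : Fin 0 → V) : supSpan U x = U := by
  rw [supSpan, Set.range_eq_empty, span_empty, sup_bot_eq]

theorem supSpan_const (v : V) : supSpan U (fun _ : Fin 1 => v) = U ⊔ K ∙ v := by
  rw [supSpan, Set.range_const]

theorem supSpan_cons (w : V) (x : Fin P → V) :
    supSpan U (Fin.cons w x : Fin (P + 1) → V) = supSpan U x ⊔ K ∙ w := by
  rw [supSpan, Fin.range_cons, span_insert, supSpan, sup_assoc, sup_comm (span K (Set.range x))]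

theorem supSpan_eq_tail (x : Fin (P + 1) → V) :
    supSpan U x = supSpan U (Fin.tail x) ⊔ K ∙ x 0 := by
  rw [← supSpan_cons, Fin.cons_self_tail]

theorem supSpan_le_iff {x : Fin P → V} : supSpan U x ≤ T ↔ U ≤ T ∧ ∀ i, x i ∈ T := by
  rw [supSpan, sup_le_iff, span_le, Set.range_subset_iff]
  rfl

theorem le_supSpan (U : Submodule K V) (x : Fin P → V) : U ≤ supSpan U x := le_sup_left

theorem mem_supSpan (U : Submodule K V) (x : Fin P → V) (i : Fin P) : x i ∈ supSpan U x :=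
  mem_sup_right (subset_span (Set.mem_range_self i))

theorem map_supSpan (f : V →ₗ[K] V) (x : Fin P → V) :
    (supSpan U x).map f = supSpan (U.map f) (f ∘ x) := by
  rw [supSpan, Submodule.map_sup, map_span, ← Set.range_comp, supSpan]

theorem linearIndependentMod_zero (x : Fin 0 → V) : LinearIndependentMod U x :=
  linearIndependent_empty_type

theorem linearIndependentMod_cons {w : V} {x : Fin P → V} :
    LinearIndependentMod U (Fin.cons w x : Fin (P + 1) → V) ↔
      LinearIndependentMod U x ∧ w ∉ supSpan U x := by
  rw [LinearIndependentMod, Fin.comp_cons, linearIndependent_finCons, Set.range_comp, ← map_span,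
    ← mem_comap, comap_map_mkQ]
  rfl

theorem linearIndependentMod_iff_tail {x : Fin (P + 1) → V} :
    LinearIndependentMod U x ↔
      LinearIndependentMod U (Fin.tail x) ∧ x 0 ∉ supSpan U (Fin.tail x) := by
  rw [← linearIndependentMod_cons, Fin.cons_self_tail]

theorem LinearIndependentMod.removeNth {x : Fin (P + 1) → V} (h : LinearIndependentMod U x)
    (i : Fin (P + 1)) : LinearIndependentMod U (i.removeNth x) :=
  LinearIndependent.comp h i.succAbove Fin.succAbove_right_injective

theorem LinearIndependentMod.notMem {x : Fin P → V} (h : LinearIndependentMod U x) (i : Fin P) :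
    x i ∉ U := fun hi => h.ne_zero i ((Quotient.mk_eq_zero U).2 hi)

theorem LinearIndependentMod.sub_notMem {x : Fin P → V} (h : LinearIndependentMod U x)
    {i j : Fin P} (hij : i ≠ j) : x i - x j ∉ U := fun hi =>
  hij (h.injective ((Submodule.Quotient.eq U).2 hi))

theorem linearIndependentMod_iff {x : Fin P → V} :
    LinearIndependentMod U x ↔ ∀ c : Fin P → K, ∑ i, c i • x i ∈ U → ∀ i, c i = 0 := by
  rw [LinearIndependentMod, Fintype.linearIndependent_iff]
  refine forall_congr' fun c => ?_
  rw [← Quotient.mk_eq_zero, ← mkQ_apply, map_sum]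
  simp only [Function.comp_apply, map_smul]

theorem supSpan_eq_sup_differences (U : Submodule K V) (x : Fin 3 → V) :
    supSpan U x = (U ⊔ K ∙ x 2) ⊔ (K ∙ (x 0 - x 2) ⊔ K ∙ (x 1 - x 2)) := by
  set P := K ∙ (x 0 - x 2) ⊔ K ∙ (x 1 - x 2)
  refine le_antisymm ?_ (sup_le (sup_le (le_supSpan U x) ?_) (sup_le ?_ ?_))
  · have hx₂ : x 2 ∈ (U ⊔ K ∙ x 2) ⊔ P :=
      mem_sup_left (mem_sup_right (mem_span_singleton_self _))
    have hx₀ : x 0 - x 2 ∈ (U ⊔ K ∙ x 2) ⊔ P :=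
      mem_sup_right (mem_sup_left (mem_span_singleton_self _))
    have hx₁ : x 1 - x 2 ∈ (U ⊔ K ∙ x 2) ⊔ P :=
      mem_sup_right (mem_sup_right (mem_span_singleton_self _))
    refine supSpan_le_iff.2 ⟨le_sup_left.trans le_sup_left, fun i => ?_⟩
    fin_cases i
    · exact (sub_mem_iff_left _ hx₂).1 hx₀
    · exact (sub_mem_iff_left _ hx₂).1 hx₁
    · exact hx₂
  all_goals rw [span_singleton_le_iff_mem]
  · exact mem_supSpan U x 2
  · exact sub_mem (mem_supSpan U x 0) (mem_supSpan U x 2)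
  · exact sub_mem (mem_supSpan U x 1) (mem_supSpan U x 2)

end TuplesModSubspace

theorem exists_linearMap_apply_eq_of_linearIndependent {K V ι : Type*} [Field K]
    [AddCommGroup V] [Module K V] {x : ι → V} (h : LinearIndependent K x) (a : ι → K) :
    ∃ f : V →ₗ[K] K, ∀ i, f (x i) = a i := by
  obtain ⟨f, hf⟩ := LinearMap.exists_extend ((Module.Basis.span h).constr K a)
  refine ⟨f, fun i => ?_⟩
  rw [← Module.Basis.constr_basis (Module.Basis.span h) K a i, ← hf, LinearMap.comp_apply,
    Submodule.subtype_apply, Module.Basis.span_apply]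

section AdmissibleTuples

open Module Submodule

variable {K V : Type*} [Field K] [AddCommGroup V] [Module K V] {ω : LinearMap.BilinForm K V}
  {U : Submodule K V} {v w : V} {P : ℕ}

variable (ω) in
/-- General position of a tuple with respect to an alternating form: the entries pair nontrivially,
and so do the differences of any three of them, which therefore span a hyperbolic plane. Finite
fields have too few elements for such tuples to be available, so there the condition is void. -/
def IsGeneric (x : Fin P → V) : Prop :=
  Infinite K → (∀ i j, i < j → ω (x i) (x j) ≠ 0) ∧
    ∀ i j k, i < j → j < k → ω (x j - x i) (x k - x i) ≠ 0

variable (ω U v) in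
/-- The tuples forming the simplices on which the pointwise stabilizer of `U` acts: their entries
pair with `U` in the same way as `v`, and they are linearly independent modulo `U` and in general
position. -/
structure IsAdmissible (x : Fin P → V) : Prop where
  form_eq (i : Fin P) : ∀ u ∈ U, ω u (x i) = ω u v
  linearIndependentMod : LinearIndependentMod U x
  isGeneric : IsGeneric ω x

theorem LinearIndependentMod.exists_form_eq_one [FiniteDimensional K V] (hω : ω.IsAlt)
    (hnd : ω.Nondegenerate) (v : V) {x : Fin P → V} (h : LinearIndependentMod U x) :
    ∃ w, (∀ u ∈ U, ω u w = ω u v) ∧ ∀ i, ω w (x i) = 1 := by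
  obtain ⟨f, hf⟩ := exists_linearMap_apply_eq_of_linearIndependent h (fun i => 1 - ω v (x i))
  refine ⟨(ω.toDual hnd).symm (ω v + f ∘ₗ U.mkQ), fun u hu => ?_, fun i => ?_⟩
  · have hfu : f (U.mkQ u) = 0 := by rw [mkQ_apply, (Quotient.mk_eq_zero U).2 hu, map_zero]
    rw [← hω.neg_eq, ← hω.neg_eq v, LinearMap.BilinForm.apply_toDual_symm_apply,
      LinearMap.add_apply, LinearMap.comp_apply, hfu, add_zero]
  · have hfx : f (U.mkQ (x i)) = 1 - ω v (x i) := hf i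
    rw [LinearMap.BilinForm.apply_toDual_symm_apply, LinearMap.add_apply, LinearMap.comp_apply,
      hfx, add_sub_cancel]

theorem IsGeneric.removeNth {x : Fin (P + 1) → V} (h : IsGeneric ω x) (i : Fin (P + 1)) :
    IsGeneric ω (i.removeNth x) := fun hK =>
  have hi := Fin.strictMono_succAbove i
  ⟨fun _ _ hab => (h hK).1 _ _ (hi hab), fun _ _ _ hab hbc => (h hK).2 _ _ _ (hi hab) (hi hbc)⟩

theorem IsGeneric.cons {x : Fin P → V} (h : IsGeneric ω x)
    (hw : Infinite K → (∀ i, ω w (x i) ≠ 0) ∧ ∀ i j, i < j → ω (x i - w) (x j - w) ≠ 0) :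
    IsGeneric ω (Fin.cons w x : Fin (P + 1) → V) := fun hK => by
  refine ⟨fun i j hij => ?_, fun i j k hij hjk => ?_⟩
  · obtain ⟨j, rfl⟩ := Fin.exists_succ_eq_of_ne_zero (Fin.ne_zero_of_lt hij)
    cases i using Fin.cases with
    | zero => exact (hw hK).1 j
    | succ i => exact (h hK).1 i j (Fin.succ_lt_succ_iff.1 hij)
  · obtain ⟨j, rfl⟩ := Fin.exists_succ_eq_of_ne_zero (Fin.ne_zero_of_lt hij)
    obtain ⟨k, rfl⟩ := Fin.exists_succ_eq_of_ne_zero (Fin.ne_zero_of_lt hjk)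
    cases i using Fin.cases with
    | zero => exact (hw hK).2 j k (Fin.succ_lt_succ_iff.1 hjk)
    | succ i => exact (h hK).2 i j k (Fin.succ_lt_succ_iff.1 hij) (Fin.succ_lt_succ_iff.1 hjk)

theorem isAdmissible_const (hv : v ∉ U) : IsAdmissible ω U v (fun _ : Fin 1 => v) where
  form_eq _ _ _ := rfl
  linearIndependentMod := by
    rw [linearIndependentMod_iff_tail, supSpan_zero]
    exact ⟨linearIndependentMod_zero _, hv⟩
  isGeneric _ := ⟨fun i j hij => by omega, fun i j k hij _ => by omega⟩

namespace IsAdmissible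

theorem removeNth {x : Fin (P + 1) → V} (h : IsAdmissible ω U v x) (i : Fin (P + 1)) :
    IsAdmissible ω U v (i.removeNth x) where
  form_eq _ := h.form_eq _
  linearIndependentMod := h.linearIndependentMod.removeNth i
  isGeneric := h.isGeneric.removeNth i

theorem tail {x : Fin (P + 1) → V} (h : IsAdmissible ω U v x) :
    IsAdmissible ω U v (Fin.tail x) :=
  Fin.removeNth_zero x ▸ h.removeNth 0

theorem cons {x : Fin P → V} (h : IsAdmissible ω U v x) (hw : ∀ u ∈ U, ω u w = ω u v)
    (hwx : w ∉ supSpan U x)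
    (hgen : Infinite K → (∀ i, ω w (x i) ≠ 0) ∧ ∀ i j, i < j → ω (x i - w) (x j - w) ≠ 0) :
    IsAdmissible ω U v (Fin.cons w x : Fin (P + 1) → V) where
  form_eq := Fin.cases hw h.form_eq
  linearIndependentMod := linearIndependentMod_cons.2 ⟨h.linearIndependentMod, hwx⟩
  isGeneric := h.isGeneric.cons hgen

theorem cons_of_form_eq_one (hω : ω.IsAlt) {x : Fin P → V} (h : IsAdmissible ω U v x)
    (hw : ∀ u ∈ U, ω u w = ω u v) (hwx : w ∉ supSpan U x) (hw₁ : ∀ i, ω w (x i) = 1) :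
    IsAdmissible ω U v (Fin.cons w x : Fin (P + 1) → V) := by
  refine h.cons hw hwx fun hK => ⟨fun i => by rw [hw₁]; exact one_ne_zero, fun i j hij => ?_⟩
  have hform : ω (x i - w) (x j - w) = ω (x i) (x j) := by
    rw [map_sub, map_sub, LinearMap.sub_apply, LinearMap.sub_apply, hω.self_eq_zero, hw₁,
      ← hω.neg_eq w, hw₁]
    ring
  rw [hform]
  exact (h.isGeneric hK).1 i j hij

variable [FiniteDimensional K V]

theorem exists_cons_form_eq_one (hω : ω.IsAlt) (hnd : ω.Nondegenerate) {x : Fin P → V}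
    (h : IsAdmissible ω U v x) (hx : residualRank ω (supSpan U x) ≠ 0) :
    ∃ w, (∀ i, ω w (x i) = 1) ∧ IsAdmissible ω U v (Fin.cons w x : Fin (P + 1) → V) := by
  obtain ⟨w, hwU, hwx⟩ := h.linearIndependentMod.exists_form_eq_one hω hnd v
  by_cases hw : w ∈ supSpan U x
  · obtain ⟨y, hy, hyx⟩ := exists_mem_orthogonal_notMem hx
    have hwy : ∀ i, ω (w + y) (x i) = 1 := fun i => by
      rw [map_add, LinearMap.add_apply, hwx, mem_orthogonal_symm hω hy (mem_supSpan U x i),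
        add_zero]
    refine ⟨w + y, hwy, h.cons_of_form_eq_one hω (fun u hu => ?_)
      (fun hc => hyx ((add_mem_cancel_left hw).1 hc)) hwy⟩
    rw [map_add, hwU u hu, hy u (le_supSpan U x hu), add_zero]
  · exact ⟨w, hwx, h.cons_of_form_eq_one hω hwU hw hwx⟩

end IsAdmissible

end AdmissibleTuples

section TupleComplex

open Module Submodule

variable {K V G : Type*} [Field K] [AddCommGroup V] [Module K V] {ω : LinearMap.BilinForm K V}
  [Group G] [DistribMulAction G V] {U : Submodule K V} {v : V} {P : ℕ}

section LinearAction

variable [SMulCommClass G K V]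

theorem mem_pointwiseStabilizer_supSpan {x : Fin P → V} {g : G} :
    g ∈ pointwiseStabilizer G (supSpan U x) ↔
      g ∈ pointwiseStabilizer G U ∧ ∀ i, g • x i = x i := by
  rw [supSpan, mem_pointwiseStabilizer_sup, mem_pointwiseStabilizer_span, Set.forall_mem_range]

theorem map_toLinearMap_of_mem_pointwiseStabilizer {g : G} (hg : g ∈ pointwiseStabilizer G U) :
    U.map (DistribSMul.toLinearMap K V g) = U := by
  rw [mem_fixingSubgroup_iff] at hg
  ext u
  refine ⟨?_, fun hu => ⟨u, hu, hg u hu⟩⟩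
  rintro ⟨u, hu, rfl⟩
  rw [DistribSMul.toLinearMap_apply, hg u hu]
  exact hu

theorem map_supSpan_of_mem_pointwiseStabilizer {x x' : Fin P → V} {g : G}
    (hg : g ∈ pointwiseStabilizer G U) (hgx : ∀ i, g • x i = x' i) :
    (supSpan U x).map (DistribSMul.toLinearMap K V g) = supSpan U x' := by
  rw [map_supSpan, map_toLinearMap_of_mem_pointwiseStabilizer hg]
  exact congrArg _ (funext hgx)

theorem LinearIndependentMod.smul {x : Fin P → V} {g : G} (hg : g ∈ pointwiseStabilizer G U)
    (h : LinearIndependentMod U x) : LinearIndependentMod U (g • x) := by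
  rw [linearIndependentMod_iff] at *
  refine fun c hc => h c ?_
  have hsum : ∑ i, c i • (g • x) i = g • ∑ i, c i • x i := by
    rw [Finset.smul_sum]
    exact Finset.sum_congr rfl fun i _ => (smul_comm _ _ _).symm
  rw [hsum] at hc
  have hinv := (mem_fixingSubgroup_iff G).1 (inv_mem hg) _ hc
  rw [inv_smul_smul] at hinv
  rwa [hinv]

end LinearAction

namespace IsSymplecticAction

theorem isGeneric_smul (hG : IsSymplecticAction G ω) {x : Fin P → V} (h : IsGeneric ω x)
    (g : G) : IsGeneric ω (g • x) := fun hK => by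
  refine ⟨fun i j hij => ?_, fun i j k hij hjk => ?_⟩
  · rw [Pi.smul_apply, Pi.smul_apply, hG.form_smul_smul]
    exact (h hK).1 i j hij
  · rw [Pi.smul_apply, Pi.smul_apply, Pi.smul_apply, ← smul_sub, ← smul_sub, hG.form_smul_smul]
    exact (h hK).2 i j k hij hjk

variable [SMulCommClass G K V]

theorem isAdmissible_smul (hG : IsSymplecticAction G ω) {x : Fin P → V}
    (h : IsAdmissible ω U v x) {g : G} (hg : g ∈ pointwiseStabilizer G U) :
    IsAdmissible ω U v (g • x) where
  form_eq i u hu := (hG.form_smul_right hg hu (x i)).trans (h.form_eq i u hu)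
  linearIndependentMod := h.linearIndependentMod.smul hg
  isGeneric := hG.isGeneric_smul h.isGeneric g

/-- The action of the pointwise stabilizer of `U` on the admissible tuples. -/
abbrev admissibleMulAction (hG : IsSymplecticAction G ω) (U : Submodule K V) (v : V) (P : ℕ) :
    MulAction (pointwiseStabilizer G U) {x : Fin P → V // IsAdmissible ω U v x} where
  smul h x := ⟨(h : G) • x.1, hG.isAdmissible_smul x.2 h.2⟩
  one_smul x := Subtype.ext (one_smul G x.1)
  mul_smul a b x := Subtype.ext (mul_smul (a : G) (b : G) x.1)

/-- The semisimplicial set of admissible tuples, with the action of the pointwise stabilizer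
of `U`. -/
def tupleComplex (hG : IsSymplecticAction G ω) (U : Submodule K V) (v : V) :
    EquivariantSemisimplicialSet (pointwiseStabilizer G U) where
  Simplex P := {x : Fin P → V // IsAdmissible ω U v x}
  action := hG.admissibleMulAction U v
  face i :=
    letI := hG.admissibleMulAction U v
    { toFun := fun x => ⟨i.removeNth x.1, x.2.removeNth i⟩
      map_smul' := fun _ _ => rfl }
  face_face _ _ hij x := Subtype.ext (removeNth_removeNth_of_le hij x.1)

instance (hG : IsSymplecticAction G ω) : Subsingleton ((hG.tupleComplex U v).Simplex 0) :=
  ⟨fun _ _ => Subtype.ext (Subsingleton.elim _ _)⟩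

theorem ambientStabilizer_tupleComplex (hG : IsSymplecticAction G ω)
    (x : (hG.tupleComplex U v).Simplex P) :
    ambientStabilizer (pointwiseStabilizer G U) x = pointwiseStabilizer G (supSpan U x.1) := by
  ext g
  rw [mem_ambientStabilizer, mem_pointwiseStabilizer_supSpan]
  constructor
  · rintro ⟨h, rfl, hx⟩
    exact ⟨h.2, fun i => congrArg (fun y => y.1 i) hx⟩
  · rintro ⟨hg, hx⟩
    exact ⟨⟨g, hg⟩, rfl, Subtype.ext (funext hx)⟩

theorem ambientStabilizer_of_eq_const (hG : IsSymplecticAction G ω)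
    {x : (hG.tupleComplex U v).Simplex 1} (hx : x.1 = fun _ => v) :
    ambientStabilizer (pointwiseStabilizer G U) x = pointwiseStabilizer G (U ⊔ K ∙ v) := by
  rw [hG.ambientStabilizer_tupleComplex, hx, supSpan_const]

variable (ω) in
/-- The tuple `y` is obtained from `x` by prepending a vector that pairs to `1` with the entries
of `x`. -/
def IsUnitCone (x : Fin P → V) (y : Fin (P + 1) → V) : Prop :=
  ∃ w, y = (Fin.cons w x : Fin (P + 1) → V) ∧ ∀ i, ω w (x i) = 1

theorem residualRank_supSpan_eq (hG : IsSymplecticAction G ω) {x x' : Fin P → V} {g : G}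
    (hg : g ∈ pointwiseStabilizer G U) (hgx : ∀ i, g • x i = x' i) :
    residualRank ω (supSpan U x) = residualRank ω (supSpan U x') := by
  rw [← map_supSpan_of_mem_pointwiseStabilizer hg hgx]
  exact (residualRank_map (DistribMulAction.toLinearEquiv K V g)
    (hG.form_smul_smul g) _).symm

variable [FiniteDimensional K V]

/-- Witt's theorem for tuples, relative to `U`. -/
theorem exists_smul_eq_of_form_eq (hG : IsSymplecticAction G ω) {x x' : Fin P → V}
    (hx : LinearIndependentMod U x) (hx' : LinearIndependentMod U x')
    (hU : ∀ i, ∀ u ∈ U, ω u (x i) = ω u (x' i)) (h : ∀ i j, ω (x i) (x j) = ω (x' i) (x' j)) :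
    ∃ g ∈ pointwiseStabilizer G U, ∀ i, g • x i = x' i := by
  induction P with
  | zero => exact ⟨1, one_mem _, fun i => i.elim0⟩
  | succ P ih =>
    obtain ⟨hxt, hx₀⟩ := linearIndependentMod_iff_tail.1 hx
    obtain ⟨hxt', hx₀'⟩ := linearIndependentMod_iff_tail.1 hx'
    obtain ⟨g, hg, hgx⟩ := ih hxt hxt' (fun i => hU i.succ) (fun i j => h i.succ j.succ)
    have hgx₀ : g • x 0 ∉ supSpan U (Fin.tail x') := by
      rw [← map_supSpan_of_mem_pointwiseStabilizer hg hgx]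
      rintro ⟨y, hy, hyx⟩
      exact hx₀ (MulAction.injective g hyx ▸ hy)
    have hform : supSpan U (Fin.tail x') ≤ LinearMap.ker (ω.flip (g • x 0 - x' 0)) := by
      refine supSpan_le_iff.2 ⟨fun u hu => ?_, fun i => ?_⟩ <;>
        rw [LinearMap.mem_ker, LinearMap.BilinForm.flip_apply, map_sub, sub_eq_zero]
      · rw [hG.form_smul_right hg hu, hU 0 u hu]
      · rw [← hgx i, hG.form_smul_smul, hgx i]
        exact h i.succ 0
    obtain ⟨k, hk, hkx⟩ := hG.exists_smul_eq hgx₀ hx₀' fun a ha => by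
      have hka := hform ha
      rwa [LinearMap.mem_ker, LinearMap.BilinForm.flip_apply, map_sub, sub_eq_zero] at hka
    obtain ⟨hkU, hkt⟩ := mem_pointwiseStabilizer_supSpan.1 hk
    refine ⟨k * g, mul_mem hkU hg, Fin.cases ?_ fun i => ?_⟩
    · rw [mul_smul, hkx]
    · rw [mul_smul]
      exact (congrArg (k • ·) (hgx i)).trans (hkt i)

theorem exists_smul_eq_const (hG : IsSymplecticAction G ω) (hv : v ∉ U) {x : Fin 1 → V}
    (h : IsAdmissible ω U v x) : ∃ g ∈ pointwiseStabilizer G U, ∀ i, g • x i = v :=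
  hG.exists_smul_eq_of_form_eq h.linearIndependentMod
    (isAdmissible_const (ω := ω) hv).linearIndependentMod h.form_eq fun i j => by
      rw [Subsingleton.elim i j, hG.isAlt.self_eq_zero, hG.isAlt.self_eq_zero]

theorem isConeRelation_isUnitCone (hG : IsSymplecticAction G ω) :
    (hG.tupleComplex U v).IsConeRelation fun x y => IsUnitCone ω x.1 y.1 where
  face_zero := by
    rintro P x y ⟨w, hy, -⟩
    exact Subtype.ext ((congrArg (Fin.removeNth 0) hy).trans (Fin.removeNth_zero _))
  face_succ := by
    rintro P x y i ⟨w, hy, hw⟩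
    exact ⟨w, (congrArg (Fin.removeNth i.succ) hy).trans (removeNth_succ_cons i w x.1),
      fun j => hw _⟩
  orbitMk_eq := by
    rintro P x x' y y' ⟨w, hy, hw⟩ ⟨w', hy', hw'⟩ hx
    rw [orbitMk_eq_iff] at *
    obtain ⟨a, rfl⟩ := hx
    obtain ⟨g, hg, hgy⟩ := hG.exists_smul_eq_of_form_eq y.2.linearIndependentMod
      y'.2.linearIndependentMod (fun i u hu => by rw [y.2.form_eq i u hu, y'.2.form_eq i u hu])
      (fun i j => by
        rw [hy, hy']
        cases i using Fin.cases <;> cases j using Fin.cases <;>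
          simp only [Fin.cons_zero, Fin.cons_succ, hw, hw', hG.isAlt.self_eq_zero]
        · rw [← hG.isAlt.neg_eq, hw, ← hG.isAlt.neg_eq w', hw']
        · exact (hG.form_smul_smul _ _ _).symm)
    exact ⟨⟨g, hg⟩, Subtype.ext (funext hgy)⟩

theorem residualRank_supSpan_of_isAdmissible_one (hG : IsSymplecticAction G ω) (hv : v ∉ U)
    {x : Fin 1 → V} (h : IsAdmissible ω U v x) :
    residualRank ω (supSpan U x) = residualRank ω (U ⊔ K ∙ v) := by
  obtain ⟨g, hg, hgx⟩ := hG.exists_smul_eq_const hv h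
  rw [hG.residualRank_supSpan_eq hg hgx, supSpan_const]

theorem residualRank_le_supSpan (hG : IsSymplecticAction G ω) (hv : v ∉ U)
    {x : Fin (P + 1) → V} (h : IsAdmissible ω U v x) :
    residualRank ω (U ⊔ K ∙ v) ≤ residualRank ω (supSpan U x) + 2 * P := by
  induction P with
  | zero => exact (hG.residualRank_supSpan_of_isAdmissible_one hv h).ge
  | succ P ih =>
    have htail := ih h.tail
    have hstep := residualRank_le_sup_span_singleton_add_two hG.nondegenerate
      (supSpan U (Fin.tail x)) (x 0)
    rw [supSpan_eq_tail]
    omega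

/-- In general position the first three entries span, together with `U`, a hyperbolic plane, which
costs only `2` instead of `4`. -/
theorem residualRank_le_supSpan_of_three [Infinite K] (hG : IsSymplecticAction G ω) (hv : v ∉ U)
    {x : Fin 3 → V} (h : IsAdmissible ω U v x) :
    residualRank ω (U ⊔ K ∙ v) ≤ residualRank ω (supSpan U x) + 2 := by
  set P := K ∙ (x 0 - x 2) ⊔ K ∙ (x 1 - x 2)
  have hspan : supSpan U x = (U ⊔ K ∙ x 2) ⊔ P := supSpan_eq_sup_differences U x
  have hsub (i : Fin 3) : x i - x 2 ∈ ω.orthogonal U := fun u hu => by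
    rw [map_sub, h.form_eq i u hu, h.form_eq 2 u hu, sub_self]
  have hPU : P ≤ ω.orthogonal U :=
    sup_le ((span_singleton_le_iff_mem _ _).2 (hsub 0)) ((span_singleton_le_iff_mem _ _).2 (hsub 1))
  have hform : ω (x 0 - x 2) (x 1 - x 2) ≠ 0 := by
    convert (h.isGeneric inferInstance).2 0 1 2 (by decide) (by decide) using 1
    simp only [map_sub, LinearMap.sub_apply, hG.isAlt.self_eq_zero]
    rw [← hG.isAlt.neg_eq (x 1) (x 0), ← hG.isAlt.neg_eq (x 2) (x 1)]
    ring
  have hx₂ : U ⊔ K ∙ x 2 = supSpan U (Fin.tail (Fin.tail x)) := by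
    rw [← supSpan_const]
    exact congrArg _ (funext fun i => congrArg x (by fin_cases i; rfl))
  have hrank := residualRank_le_sup_add_finrank hG.isAlt hG.nondegenerate hPU
    (radical_span_pair hG.isAlt hform) (x 2)
  have hP₂ : finrank K P ≤ 2 := by
    have : finrank K P ≤ _ := finrank_sup_span_singleton_le (K ∙ (x 0 - x 2)) (x 1 - x 2)
    have := finrank_sup_span_singleton_le (⊥ : Submodule K V) (x 0 - x 2)
    rw [bot_sup_eq, finrank_bot] at this
    omega
  rw [← hspan, hx₂, hG.residualRank_supSpan_of_isAdmissible_one hv h.tail.tail] at hrank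
  omega

theorem residualRank_le_supSpan_of_infinite [Infinite K] (hG : IsSymplecticAction G ω)
    (hv : v ∉ U) {x : Fin (P + 3) → V} (h : IsAdmissible ω U v x) :
    residualRank ω (U ⊔ K ∙ v) ≤ residualRank ω (supSpan U x) + 2 * (P + 1) := by
  induction P with
  | zero => exact hG.residualRank_le_supSpan_of_three hv h
  | succ P ih =>
    have htail := ih h.tail
    have hstep := residualRank_le_sup_span_singleton_add_two hG.nondegenerate
      (supSpan U (Fin.tail x)) (x 0)
    rw [supSpan_eq_tail]
    omega

end IsSymplecticAction

section Stabilization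

variable [FiniteDimensional K V] {R : Type*} [Ring R] {j m : ℕ}

theorem StabilizersHomologySurj.supSpan (hstep : StabilizersHomologySurj R G ω m j)
    {x : Fin P → V} (hx : LinearIndependentMod U x) (hm : m ≤ residualRank ω (supSpan U x)) :
    HomologySurj R (pointwiseStabilizer G (supSpan U x)) (pointwiseStabilizer G U) j := by
  induction P with
  | zero =>
    rw [supSpan_zero]
    exact HomologySurj.refl R _ _
  | succ P ih =>
    rw [supSpan_eq_tail] at hm ⊢
    obtain ⟨hxt, hx₀⟩ := linearIndependentMod_iff_tail.1 hx
    exact (hstep _ _ hx₀ hm).trans (ih hxt (hm.trans (residualRank_anti le_sup_left)))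

theorem StabilizersHomologyInj.supSpan (hstep : StabilizersHomologyInj R G ω m j)
    {x : Fin P → V} (hx : LinearIndependentMod U x) (hm : m ≤ residualRank ω (supSpan U x)) :
    HomologyInj R (pointwiseStabilizer G (supSpan U x)) (pointwiseStabilizer G U) j := by
  induction P with
  | zero =>
    rw [supSpan_zero]
    exact HomologyInj.refl R _ _
  | succ P ih =>
    rw [supSpan_eq_tail] at hm ⊢
    obtain ⟨hxt, hx₀⟩ := linearIndependentMod_iff_tail.1 hx
    exact (hstep _ _ hx₀ hm).trans (ih hxt (hm.trans (residualRank_anti le_sup_left)))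

end Stabilization

end TupleComplex

section ListChains

variable (R : Type*) [Ring R] {V : Type*}

/-- The linear extension of prepending an entry to lists. -/
noncomputable def listCons (v : V) : (List V →₀ R) →ₗ[R] List V →₀ R :=
  Finsupp.lmapDomain R R (List.cons v)

/-- The linear extension of prepending a list to lists. -/
noncomputable def listPrepend (p : List V) : (List V →₀ R) →ₗ[R] List V →₀ R :=
  Finsupp.lmapDomain R R (p ++ ·)

/-- The linear extension of appending a list to lists. -/
noncomputable def listAppend (y : List V) : (List V →₀ R) →ₗ[R] List V →₀ R :=
  Finsupp.lmapDomain R R (· ++ y)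

/-- The alternating sum of the lists obtained by deleting one entry. -/
noncomputable def listFaceSum : List V → List V →₀ R
  | [] => 0
  | v :: x => Finsupp.single x 1 - listCons R v (listFaceSum x)

/-- The differential of the chain complex of lists; lists of all lengths are kept in one module. -/
noncomputable def listBoundary : (List V →₀ R) →ₗ[R] List V →₀ R :=
  Finsupp.lift (List V →₀ R) R (List V) (listFaceSum R)

open Classical in
/-- The linear map which strips the prefix `p` from the lists that start with it and kills the
other lists. -/
noncomputable def listStripPrefix (p : List V) : (List V →₀ R) →ₗ[R] List V →₀ R :=
  Finsupp.lift (List V →₀ R) R (List V) fun x =>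
    if p <+: x then Finsupp.single (x.drop p.length) 1 else 0

/-- The lists obtained from `x` by deleting one entry. -/
def listFaces (x : List V) : Set (List V) := {y | ∃ a q c, x = a ++ q :: c ∧ y = a ++ c}

@[simp]
theorem listCons_single (v : V) (x : List V) :
    listCons R v (Finsupp.single x 1) = Finsupp.single (v :: x) 1 :=
  Finsupp.mapDomain_single

@[simp]
theorem listPrepend_single (p x : List V) :
    listPrepend R p (Finsupp.single x 1) = Finsupp.single (p ++ x) 1 :=
  Finsupp.mapDomain_single

@[simp]
theorem listAppend_single (y x : List V) :
    listAppend R y (Finsupp.single x 1) = Finsupp.single (x ++ y) 1 :=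
  Finsupp.mapDomain_single

@[simp]
theorem listBoundary_single (x : List V) :
    listBoundary R (Finsupp.single x 1) = listFaceSum R x := by
  simp [listBoundary]

theorem listStripPrefix_single_append (p y : List V) :
    listStripPrefix R p (Finsupp.single (p ++ y) 1) = Finsupp.single y 1 := by
  simp [listStripPrefix]

theorem listStripPrefix_single_of_not_prefix {p x : List V} (h : ¬ p <+: x) :
    listStripPrefix R p (Finsupp.single x 1) = 0 := by
  simp [listStripPrefix, h]

theorem listStripPrefix_listPrepend (p : List V) (z : List V →₀ R) :
    listStripPrefix R p (listPrepend R p z) = z :=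
  LinearMap.congr_fun (f := listStripPrefix R p ∘ₗ listPrepend R p) (g := LinearMap.id)
    (free_hom_ext fun x => by
      rw [LinearMap.comp_apply, listPrepend_single, listStripPrefix_single_append,
        LinearMap.id_apply]) z

theorem listBoundary_listCons (v : V) (z : List V →₀ R) :
    listBoundary R (listCons R v z) = z - listCons R v (listBoundary R z) :=
  LinearMap.congr_fun (f := listBoundary R ∘ₗ listCons R v)
    (g := LinearMap.id - listCons R v ∘ₗ listBoundary R)
    (free_hom_ext fun x => by simp [listFaceSum]) z

theorem listBoundary_listFaceSum (x : List V) : listBoundary R (listFaceSum R x) = 0 := by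
  induction x with
  | nil => rw [listFaceSum, map_zero]
  | cons v x ih =>
    rw [listFaceSum, map_sub, listBoundary_single, listBoundary_listCons, ih, map_zero, sub_zero,
      sub_self]

theorem listBoundary_listBoundary (z : List V →₀ R) : listBoundary R (listBoundary R z) = 0 :=
  LinearMap.congr_fun (f := listBoundary R ∘ₗ listBoundary R) (g := 0)
    (free_hom_ext fun x => by
      rw [LinearMap.comp_apply, listBoundary_single, listBoundary_listFaceSum,
        LinearMap.zero_apply]) z

theorem listFaceSum_append (p y : List V) :
    listFaceSum R (p ++ y) =
      listAppend R y (listFaceSum R p) +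
        (-1 : ℤ) ^ p.length • listPrepend R p (listFaceSum R y) := by
  induction p with
  | nil =>
    have hid : listPrepend R [] (listFaceSum R y) = listFaceSum R y :=
      LinearMap.congr_fun (f := listPrepend R []) (g := LinearMap.id)
        (free_hom_ext fun x => by simp) _
    simp [listFaceSum, hid]
  | cons v p ih =>
    have happend : listCons R v (listAppend R y (listFaceSum R p)) =
        listAppend R y (listCons R v (listFaceSum R p)) :=
      LinearMap.congr_fun (f := listCons R v ∘ₗ listAppend R y)
        (g := listAppend R y ∘ₗ listCons R v) (free_hom_ext fun x => by simp) _
    have hprepend : listCons R v (listPrepend R p (listFaceSum R y)) =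
        listPrepend R (v :: p) (listFaceSum R y) :=
      LinearMap.congr_fun (f := listCons R v ∘ₗ listPrepend R p) (g := listPrepend R (v :: p))
        (free_hom_ext fun x => by simp) _
    rw [List.cons_append, listFaceSum, ih, map_add, map_zsmul, happend, hprepend, listFaceSum,
      map_sub, listAppend_single, List.length_cons, pow_succ, mul_neg_one, neg_smul]
    abel

variable {R}

theorem map_mem_of_mem_supported {α M : Type*} [AddCommGroup M] [Module R M] {s : Set α}
    {f : (α →₀ R) →ₗ[R] M} {N : Submodule R M} (h : ∀ x ∈ s, f (Finsupp.single x 1) ∈ N)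
    {z : α →₀ R} (hz : z ∈ Finsupp.supported R R s) : f z ∈ N := by
  rw [Finsupp.supported_eq_span_single] at hz
  refine (Submodule.span_le (p := N.comap f)).2 ?_ hz
  rintro _ ⟨x, hx, rfl⟩
  exact h x hx

theorem map_eq_zero_of_mem_supported {α M : Type*} [AddCommGroup M] [Module R M] {s : Set α}
    {f : (α →₀ R) →ₗ[R] M} (h : ∀ x ∈ s, f (Finsupp.single x 1) = 0)
    {z : α →₀ R} (hz : z ∈ Finsupp.supported R R s) : f z = 0 :=
  map_mem_of_mem_supported (N := ⊥) h hz

theorem listFaceSum_mem_supported (x : List V) :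
    listFaceSum R x ∈ Finsupp.supported R R (listFaces x) := by
  induction x with
  | nil => exact zero_mem _
  | cons v x ih =>
    refine sub_mem (Finsupp.single_mem_supported R 1 ⟨[], v, x, rfl, rfl⟩)
      (map_mem_of_mem_supported (s := listFaces x) ?_ ih)
    rintro _ ⟨a, q, c, rfl, rfl⟩
    rw [listCons_single]
    exact Finsupp.single_mem_supported R 1 ⟨v :: a, q, c, rfl, rfl⟩

end ListChains

section IndependentLists

open Submodule

variable {K V : Type*} [Field K] [AddCommGroup V] [Module K V] {S : Set V} {U : Submodule K V}
  {s q : V} {t P : ℕ} {a c p x y : List V}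

theorem supSpan_get (U : Submodule K V) (x : List V) :
    supSpan U x.get = U ⊔ span K {b | b ∈ x} := by
  rw [supSpan, Set.range_list_get]

theorem supSpan_get_append (U : Submodule K V) (x y : List V) :
    supSpan U (x ++ y).get = supSpan (supSpan U x.get) y.get := by
  simp only [supSpan_get, List.mem_append, Set.ofPred_or, span_union, sup_assoc]

theorem supSpan_get_cons (U : Submodule K V) (q : V) (x : List V) :
    supSpan U (q :: x).get = supSpan U x.get ⊔ K ∙ q :=
  supSpan_eq_tail (q :: x).get

theorem supSpan_get_middle (U : Submodule K V) (a c : List V) (q : V) :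
    supSpan U (a ++ q :: c).get = supSpan U (a ++ c).get ⊔ K ∙ q := by
  rw [← supSpan_get_cons, supSpan_get, supSpan_get]
  simp only [List.mem_append, List.mem_cons, or_left_comm]

theorem supSpan_get_mono (h : x ⊆ y) : supSpan U x.get ≤ supSpan U y.get := by
  rw [supSpan_get, supSpan_get]
  exact sup_le_sup_left (span_mono h) U

theorem mem_sup_span_singleton_exchange {v : V} (h : v ∈ U ⊔ K ∙ q) (hv : v ∉ U) :
    q ∈ U ⊔ K ∙ v := by
  have hsup (w : V) : U ⊔ K ∙ w = span K (insert w (U : Set V)) := by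
    rw [span_insert, span_eq, sup_comm]
  rw [hsup] at h ⊢
  exact mem_span_insert_exchange h (by rwa [span_eq])

theorem linearIndependentMod_get_cons :
    LinearIndependentMod U (q :: x).get ↔
      LinearIndependentMod U x.get ∧ q ∉ supSpan U x.get :=
  linearIndependentMod_iff_tail

theorem linearIndependentMod_get_middle :
    LinearIndependentMod U (a ++ q :: c).get ↔
      LinearIndependentMod U (a ++ c).get ∧ q ∉ supSpan U (a ++ c).get := by
  induction a with
  | nil => exact linearIndependentMod_get_cons
  | cons v a ih =>
    simp only [List.cons_append, linearIndependentMod_get_cons, ih, supSpan_get_cons,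
      supSpan_get_middle]
    constructor <;> rintro ⟨⟨hac, hx⟩, hy⟩ <;>
      exact ⟨⟨hac, fun h => hy (mem_sup_left h)⟩,
        fun h => hy (mem_sup_span_singleton_exchange h hx)⟩

theorem linearIndependentMod_get_append :
    LinearIndependentMod U (p ++ y).get ↔
      LinearIndependentMod U p.get ∧ LinearIndependentMod (supSpan U p.get) y.get := by
  induction y with
  | nil =>
    rw [List.append_nil, iff_self_and]
    exact fun _ => linearIndependentMod_zero (U := supSpan U p.get) _
  | cons v y ih =>
    rw [linearIndependentMod_get_middle, ih, supSpan_get_append, linearIndependentMod_get_cons,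
      and_assoc]

theorem LinearIndependentMod.notMem_supSpan_of_sublist {a' c' : List V}
    (hx : LinearIndependentMod U (a ++ q :: c).get)
    (hs : s ∈ supSpan U (a' ++ q :: c').get) (hs' : s ∉ supSpan U (a' ++ c').get)
    (hsub : a' ++ c' ⊆ a ++ c) : s ∉ supSpan U (a ++ c).get := fun h => by
  rw [supSpan_get_middle] at hs
  have hle : supSpan U (a' ++ c').get ⊔ K ∙ s ≤ supSpan U (a ++ c).get :=
    sup_le (supSpan_get_mono hsub) ((span_singleton_le_iff_mem _ _).2 h)
  exact (linearIndependentMod_get_middle.1 hx).2 (hle (mem_sup_span_singleton_exchange hs hs'))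

variable (S U P) in
/-- The lists of length `P` with entries in `S` that are linearly independent modulo `U`. -/
def independentLists : Set (List V) :=
  {x | x.length = P ∧ (∀ b ∈ x, b ∈ S) ∧ LinearIndependentMod U x.get}

variable (U s t) in
/-- The lists whose span modulo `U` avoids `s`, unless the first `t` entries already span it. -/
def earlySpanLists : Set (List V) :=
  {x | s ∈ supSpan U x.get → s ∈ supSpan U (x.take t).get}

variable (S U s t) in
/-- The independent lists of length `t + 1` which span `s` modulo `U` while their first `t`
entries do not. -/
def criticalLists : Set (List V) :=
  {p | p ∈ independentLists S U (t + 1) ∧ s ∈ supSpan U p.get ∧ s ∉ supSpan U (p.take t).get}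

theorem face_mem_independentLists (h : a ++ q :: c ∈ independentLists S U (P + 1)) :
    a ++ c ∈ independentLists S U P := by
  obtain ⟨hlen, hS, hind⟩ := h
  refine ⟨?_, fun b hb => hS b ?_, (linearIndependentMod_get_middle.1 hind).1⟩
  · rw [List.length_append, List.length_cons] at hlen
    rw [List.length_append]
    omega
  · exact ((List.sublist_cons_self q c).append_left a).subset hb

theorem append_mem_independentLists {m : ℕ} (hp : p ∈ independentLists S U m)
    (hy : y ∈ independentLists S (supSpan U p.get) P) :
    p ++ y ∈ independentLists S U (m + P) :=
  ⟨by rw [List.length_append, hp.1, hy.1],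
    fun b hb => (List.mem_append.1 hb).elim (hp.2.1 b) (hy.2.1 b),
    linearIndependentMod_get_append.2 ⟨hp.2.2, hy.2.2⟩⟩

theorem of_append_mem_independentLists {m : ℕ} (hp : p.length = m)
    (h : p ++ y ∈ independentLists S U (m + P)) :
    p ∈ independentLists S U m ∧ y ∈ independentLists S (supSpan U p.get) P := by
  obtain ⟨hlen, hS, hind⟩ := h
  rw [linearIndependentMod_get_append] at hind
  rw [List.length_append, hp, Nat.add_left_cancel_iff] at hlen
  exact ⟨⟨hp, fun b hb => hS b (List.mem_append_left y hb), hind.1⟩,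
    hlen, fun b hb => hS b (List.mem_append_right p hb), hind.2⟩

theorem prefix_of_prefix_face (hp : p ∈ criticalLists S U s t)
    (hind : LinearIndependentMod U (a ++ q :: c).get)
    (hx : a ++ q :: c ∈ earlySpanLists U s (t + 1)) (h : p <+: a ++ c) : p <+: a := by
  obtain ⟨⟨hlen, -, -⟩, hsp, hspt⟩ := hp
  refine List.prefix_of_prefix_length_le h (List.prefix_append a c) (not_lt.1 fun hlt => ?_)
  have hsac : s ∈ supSpan U (a ++ c).get := supSpan_get_mono h.subset hsp
  have hs : s ∈ supSpan U ((a ++ q :: c).take (t + 1)).get :=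
    hx (by rw [supSpan_get_middle]; exact mem_sup_left hsac)
  obtain ⟨n, rfl⟩ : ∃ n, t = a.length + n := ⟨t - a.length, by omega⟩
  have hpt : p.take (a.length + n) = a ++ c.take n := by
    rw [List.prefix_iff_eq_take.1 h, hlen, List.take_take, min_eq_left (Nat.le_succ _),
      List.take_length_add_append]
  rw [hpt] at hspt
  rw [add_assoc, List.take_length_add_append, List.take_succ_cons] at hs
  exact hind.notMem_supSpan_of_sublist hs hspt
    ((List.take_sublist n c).append_left a).subset hsac

section Acyclicity

variable (R : Type*) [Ring R]

theorem listStripPrefix_single_face (hp : p ∈ criticalLists S U s t)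
    (hind : LinearIndependentMod U (a ++ q :: c).get)
    (hx : a ++ q :: c ∈ earlySpanLists U s (t + 1)) (hpa : ¬ p <+: a) :
    listStripPrefix R p (Finsupp.single (a ++ c) 1) = 0 :=
  listStripPrefix_single_of_not_prefix R (mt (prefix_of_prefix_face hp hind hx) hpa)

theorem listStripPrefix_listFaceSum (hp : p ∈ criticalLists S U s t)
    (hind : LinearIndependentMod U x.get) (hx : x ∈ earlySpanLists U s (t + 1)) :
    listStripPrefix R p (listFaceSum R x) =
      (-1 : ℤ) ^ (t + 1) • listBoundary R (listStripPrefix R p (Finsupp.single x 1)) := by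
  by_cases hpx : p <+: x
  · obtain ⟨y, rfl⟩ := hpx
    have hface : listStripPrefix R p (listAppend R y (listFaceSum R p)) = 0 := by
      refine map_eq_zero_of_mem_supported (f := listStripPrefix R p ∘ₗ listAppend R y) ?_
        (listFaceSum_mem_supported p)
      rintro _ ⟨a, q, c, hpac, rfl⟩
      rw [LinearMap.comp_apply, listAppend_single, List.append_assoc]
      have hpy : p ++ y = a ++ q :: (c ++ y) := by
        rw [hpac, List.append_assoc, List.cons_append]
      rw [hpy] at hind hx
      refine listStripPrefix_single_face R hp hind hx fun hpa => ?_
      have hlen := hpa.length_le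
      rw [hpac, List.length_append, List.length_cons] at hlen
      omega
    rw [listStripPrefix_single_append, listFaceSum_append, map_add, map_zsmul, hface, zero_add,
      listStripPrefix_listPrepend, listBoundary_single, hp.1.1]
  · rw [listStripPrefix_single_of_not_prefix R hpx, map_zero, smul_zero]
    refine map_eq_zero_of_mem_supported ?_ (listFaceSum_mem_supported x)
    rintro _ ⟨a, q, c, rfl, rfl⟩
    exact listStripPrefix_single_face R hp hind hx fun hpa =>
      hpx (hpa.trans (List.prefix_append a _))

variable {R} {z : List V →₀ R} {n : ℕ}

theorem listBoundary_listStripPrefix_eq_zero (hp : p ∈ criticalLists S U s t)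
    (hz : z ∈ Finsupp.supported R R (independentLists S U P ∩ earlySpanLists U s (t + 1)))
    (hd : listBoundary R z = 0) : listBoundary R (listStripPrefix R p z) = 0 := by
  have h := map_eq_zero_of_mem_supported
    (f := listBoundary R ∘ₗ listStripPrefix R p -
      (-1 : ℤ) ^ (t + 1) • (listStripPrefix R p ∘ₗ listBoundary R)) (fun x hx => ?_) hz
  · simpa [hd] using h
  · rw [LinearMap.sub_apply, LinearMap.smul_apply, LinearMap.comp_apply, LinearMap.comp_apply,
      listBoundary_single, listStripPrefix_listFaceSum R hp hx.1.2.2 hx.2, smul_smul,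
      ← mul_pow, neg_one_mul, neg_neg, one_pow, one_smul, sub_self]

theorem listStripPrefix_mem_supported (hp : p ∈ independentLists S U t)
    (hz : z ∈ Finsupp.supported R R (independentLists S U (t + n))) :
    listStripPrefix R p z ∈
      Finsupp.supported R R (independentLists S (supSpan U p.get) n) := by
  refine map_mem_of_mem_supported (fun x hx => ?_) hz
  by_cases hpx : p <+: x
  · obtain ⟨y, rfl⟩ := hpx
    rw [listStripPrefix_single_append]
    exact Finsupp.single_mem_supported R 1 (of_append_mem_independentLists hp.1 hx).2
  · rw [listStripPrefix_single_of_not_prefix R hpx]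
    exact zero_mem _

theorem listPrepend_mem_supported (hp : p ∈ independentLists S U t)
    (hz : z ∈ Finsupp.supported R R (independentLists S (supSpan U p.get) n)) :
    listPrepend R p z ∈ Finsupp.supported R R (independentLists S U (t + n)) := by
  refine map_mem_of_mem_supported (fun x hx => ?_) hz
  rw [listPrepend_single]
  exact Finsupp.single_mem_supported R 1 (append_mem_independentLists hp hx)

theorem listBoundary_listPrepend_sub_mem_supported (hp : p ∈ criticalLists S U s t)
    (hz : z ∈ Finsupp.supported R R (independentLists S (supSpan U p.get) (n + 1))) :
    listBoundary R (listPrepend R p z) - (-1 : ℤ) ^ (t + 1) • listPrepend R p (listBoundary R z) ∈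
      Finsupp.supported R R (independentLists S U (t + 1 + n) ∩ earlySpanLists U s t) := by
  refine map_mem_of_mem_supported (f := listBoundary R ∘ₗ listPrepend R p -
    (-1 : ℤ) ^ (t + 1) • (listPrepend R p ∘ₗ listBoundary R)) (fun x hx => ?_) hz
  have hpx : p ++ x ∈ independentLists S U (t + 1 + (n + 1)) := append_mem_independentLists hp.1 hx
  rw [LinearMap.sub_apply, LinearMap.smul_apply, LinearMap.comp_apply, LinearMap.comp_apply,
    listPrepend_single, listBoundary_single, listBoundary_single, listFaceSum_append, hp.1.1,
    add_sub_cancel_right]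
  refine map_mem_of_mem_supported ?_ (listFaceSum_mem_supported p)
  rintro _ ⟨a, q, c, rfl, rfl⟩
  rw [List.append_assoc, List.cons_append] at hpx
  rw [listAppend_single, List.append_assoc]
  refine Finsupp.single_mem_supported R 1 ⟨face_mem_independentLists hpx, fun hs => ?_⟩
  by_contra hst
  have hlen : (a ++ c).length = t := by
    have := hp.1.1
    rw [List.length_append, List.length_cons] at this
    rw [List.length_append]
    omega
  rw [← List.append_assoc, List.take_left' hlen] at hst
  exact hpx.2.2.notMem_supSpan_of_sublist hp.2.1 hst
    ((List.sublist_append_left c x).append_left a).subset hs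

theorem sub_sum_listPrepend_mem_supported {Q : Finset (List V)}
    (hQ : ∀ p ∈ Q, p ∈ criticalLists S U s t)
    (hz : z ∈ Finsupp.supported R R
      (independentLists S U (t + 1 + n) ∩ earlySpanLists U s (t + 1)))
    (hzQ : ∀ x ∈ z.support, x.take (t + 1) ∈ criticalLists S U s t → x.take (t + 1) ∈ Q) :
    z - ∑ p ∈ Q, listPrepend R p (listStripPrefix R p z) ∈
      Finsupp.supported R R (independentLists S U (t + 1 + n) ∩ earlySpanLists U s t) := by
  have hzz : z ∈ Finsupp.supported R R (z.support : Set (List V)) :=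
    Finsupp.mem_supported_support R z
  suffices h : (LinearMap.id - ∑ p ∈ Q, listPrepend R p ∘ₗ listStripPrefix R p :
      (List V →₀ R) →ₗ[R] List V →₀ R) z ∈
      Finsupp.supported R R (independentLists S U (t + 1 + n) ∩ earlySpanLists U s t) by
    simpa only [LinearMap.sub_apply, LinearMap.id_apply, LinearMap.sum_apply,
      LinearMap.comp_apply] using h
  refine map_mem_of_mem_supported (fun x hxz => ?_) hzz
  obtain ⟨hx, hxs⟩ := hz hxz
  have hstrip (p) (hp : p ∈ Q) (hne : p ≠ x.take (t + 1)) :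
      listPrepend R p (listStripPrefix R p (Finsupp.single x 1)) = 0 := by
    rw [listStripPrefix_single_of_not_prefix R, map_zero]
    refine fun hpx => hne ?_
    rw [← (hQ p hp).1.1]
    exact List.prefix_iff_eq_take.1 hpx
  simp only [LinearMap.sub_apply, LinearMap.id_apply, LinearMap.sum_apply, LinearMap.comp_apply]
  by_cases hcrit : x.take (t + 1) ∈ criticalLists S U s t
  · rw [Finset.sum_eq_single_of_mem _ (hzQ x hxz hcrit) hstrip]
    have hx_strip := listStripPrefix_single_append R (x.take (t + 1)) (x.drop (t + 1))
    rw [List.take_append_drop] at hx_strip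
    rw [hx_strip, listPrepend_single, List.take_append_drop, sub_self]
    exact zero_mem _
  · rw [Finset.sum_eq_zero fun p hp => hstrip p hp fun h => hcrit (h ▸ hQ p hp), sub_zero]
    refine Finsupp.single_mem_supported R 1 ⟨hx, fun hs => ?_⟩
    by_contra hst
    have hlen : (x.take (t + 1)).length = t + 1 := by
      rw [List.length_take, hx.1, min_eq_left (Nat.le_add_right _ n)]
    rw [← List.take_append_drop (t + 1) x] at hx
    refine hcrit ⟨(of_append_mem_independentLists hlen hx).1, hxs hs, ?_⟩
    rwa [List.take_take, min_eq_left (Nat.le_succ t)]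

/-- Exactness in length `P` of the complex of independent lists with entries in `S`. -/
def ListsExactAt (R : Type*) [Ring R] (S : Set V) (U : Submodule K V) (P : ℕ) : Prop :=
  ∀ z ∈ Finsupp.supported R R (independentLists S U P), listBoundary R z = 0 →
    ∃ y ∈ Finsupp.supported R R (independentLists S U (P + 1)), listBoundary R y = z

theorem exists_sub_listBoundary_mem_supported
    (hexact : ∀ p ∈ criticalLists S U s t, ListsExactAt R S (supSpan U p.get) n)
    (hz : z ∈ Finsupp.supported R R
      (independentLists S U (t + 1 + n) ∩ earlySpanLists U s (t + 1)))
    (hd : listBoundary R z = 0) :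
    ∃ y ∈ Finsupp.supported R R (independentLists S U (t + 1 + n + 1)),
      z - listBoundary R y ∈
        Finsupp.supported R R (independentLists S U (t + 1 + n) ∩ earlySpanLists U s t) := by
  classical
  have hstrip (p) (hp : p ∈ criticalLists S U s t) := hexact p hp (listStripPrefix R p z)
    (listStripPrefix_mem_supported hp.1 (Finsupp.supported_mono Set.inter_subset_left hz))
    (listBoundary_listStripPrefix_eq_zero hp hz hd)
  choose! Y hY hdY using hstrip
  let Q := (z.support.image (List.take (t + 1))).filter (· ∈ criticalLists S U s t)
  have hQ (p) (hp : p ∈ Q) : p ∈ criticalLists S U s t := (Finset.mem_filter.1 hp).2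
  refine ⟨∑ p ∈ Q, (-1 : ℤ) ^ (t + 1) • listPrepend R p (Y p), sum_mem fun p hp =>
    zsmul_mem (listPrepend_mem_supported (hQ p hp).1 (hY p (hQ p hp))) _, ?_⟩
  have hsplit : z - listBoundary R (∑ p ∈ Q, (-1 : ℤ) ^ (t + 1) • listPrepend R p (Y p)) =
      (z - ∑ p ∈ Q, listPrepend R p (listStripPrefix R p z)) -
        ∑ p ∈ Q, (-1 : ℤ) ^ (t + 1) • (listBoundary R (listPrepend R p (Y p)) -
          (-1 : ℤ) ^ (t + 1) • listPrepend R p (listBoundary R (Y p))) := by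
    rw [map_sum, sub_sub, ← Finset.sum_add_distrib]
    refine congrArg (z - ·) (Finset.sum_congr rfl fun p hp => ?_)
    rw [map_zsmul, smul_sub, smul_smul, ← mul_pow, neg_one_mul, neg_neg, one_pow, one_smul,
      hdY p (hQ p hp), add_sub_cancel]
  rw [hsplit]
  exact sub_mem
    (sub_sum_listPrepend_mem_supported hQ hz fun x hx hcrit =>
      Finset.mem_filter.2 ⟨Finset.mem_image_of_mem _ hx, hcrit⟩)
    (sum_mem fun p hp =>
      zsmul_mem (listBoundary_listPrepend_sub_mem_supported (hQ p hp) (hY p (hQ p hp))) _)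

theorem exists_listBoundary_eq_of_earlySpanLists_zero (hsS : s ∈ S) (hsU : s ∉ U)
    (hz : z ∈ Finsupp.supported R R (independentLists S U P ∩ earlySpanLists U s 0))
    (hd : listBoundary R z = 0) :
    ∃ y ∈ Finsupp.supported R R (independentLists S U (P + 1)), listBoundary R y = z := by
  refine ⟨listCons R s z, map_mem_of_mem_supported ?_ hz, ?_⟩
  · rintro x ⟨⟨hlen, hxS, hind⟩, hx⟩
    rw [listCons_single]
    refine Finsupp.single_mem_supported R 1 ⟨by rw [List.length_cons, hlen],
      List.forall_mem_cons.2 ⟨hsS, hxS⟩, linearIndependentMod_get_cons.2 ⟨hind, fun hs => hsU ?_⟩⟩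
    simpa only [List.take_zero, supSpan_zero] using hx hs
  · rw [listBoundary_listCons, hd, map_zero, sub_zero]

/-- Choose `s ∈ S` outside `U`. Coning off with `s` fills the cycles supported on lists whose span
avoids `s`. The remaining lists are pushed there by filling, for each critical list `p`, the link
of `p`, which is the same complex over a larger subspace. -/
theorem listsExactAt_of_exists_notMem {m : ℕ} (hP : P < m)
    (hext : ∀ n < m, ∀ x ∈ independentLists S U n, ∃ s ∈ S, s ∉ supSpan U x.get) :
    ListsExactAt R S U P := by
  induction m using Nat.strong_induction_on generalizing U P with
  | _ m ih =>
    have hnil : [] ∈ independentLists S U 0 :=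
      ⟨rfl, fun _ h => absurd h List.not_mem_nil, linearIndependentMod_zero _⟩
    obtain ⟨s, hsS, hsU⟩ : ∃ s ∈ S, s ∉ U := by
      simpa only [supSpan_zero] using hext 0 (by omega) [] hnil
    suffices h : ∀ t ≤ P, ∀ z ∈ Finsupp.supported R R
        (independentLists S U P ∩ earlySpanLists U s t), listBoundary R z = 0 →
        ∃ y ∈ Finsupp.supported R R (independentLists S U (P + 1)), listBoundary R y = z by
      refine fun z hz => h P le_rfl z fun x hx => ⟨hz hx, ?_⟩
      rw [earlySpanLists, Set.mem_ofPred_eq, List.take_of_length_le (hz hx).1.le]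
      exact id
    intro t htP
    induction t with
    | zero => exact fun z => exists_listBoundary_eq_of_earlySpanLists_zero hsS hsU
    | succ t iht =>
      intro z hz hd
      obtain ⟨n, rfl⟩ := Nat.exists_eq_add_of_le htP
      have hexact (p) (hp : p ∈ criticalLists S U s t) :
          ListsExactAt R S (supSpan U p.get) n := by
        refine ih (m - (t + 1)) (by omega) (by omega) fun l hl x hx => ?_
        rw [← supSpan_get_append]
        exact hext _ (by omega) _ (append_mem_independentLists hp.1 hx)
      obtain ⟨y, hy, hzy⟩ := exists_sub_listBoundary_mem_supported hexact hz hd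
      obtain ⟨y', hy', hyy'⟩ := iht (by omega) _ hzy
        (by rw [map_sub, hd, listBoundary_listBoundary, sub_zero])
      exact ⟨y + y', add_mem hy hy', by rw [map_add, hyy', add_sub_cancel]⟩

end Acyclicity

end IndependentLists

section TuplesAsLists

open Submodule

theorem listFaceSum_ofFn (R : Type*) [Ring R] {V : Type*} {P : ℕ} (x : Fin (P + 1) → V) :
    listFaceSum R (List.ofFn x) =
      ∑ i : Fin (P + 1), (-1 : ℤ) ^ (i : ℕ) • Finsupp.single (List.ofFn (i.removeNth x)) 1 := by
  induction P with
  | zero => simp [List.ofFn_succ, listFaceSum]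
  | succ P ih =>
    cases x using Fin.consCases with
    | _ t x =>
      rw [List.ofFn_cons, listFaceSum, ih, map_sum, Fin.sum_univ_succ (n := P + 1), sub_eq_add_neg,
        ← Finset.sum_neg_distrib, Fin.removeNth_zero, Fin.tail_cons, Fin.val_zero, pow_zero,
        one_smul]
      refine congrArg _ (Finset.sum_congr rfl fun i _ => ?_)
      rw [map_zsmul, listCons_single, removeNth_succ_cons, List.ofFn_cons, Fin.val_succ, pow_succ,
        mul_neg_one, neg_smul]

variable {K V : Type*} [Field K] [AddCommGroup V] [Module K V] {U : Submodule K V} {P : ℕ}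

theorem supSpan_get_ofFn (x : Fin P → V) : supSpan U (List.ofFn x).get = supSpan U x := by
  rw [supSpan, Set.range_list_get, supSpan]
  exact congrArg (U ⊔ span K ·) (Set.ext fun _ => List.mem_ofFn)

theorem linearIndependentMod_get_ofFn {x : Fin P → V} :
    LinearIndependentMod U (List.ofFn x).get ↔ LinearIndependentMod U x := by
  induction P with
  | zero =>
    have hnil : LinearIndependentMod U (List.ofFn x).get :=
      linearIndependentMod_zero (U := U) ([] : List V).get
    exact iff_of_true hnil (linearIndependentMod_zero x)
  | succ P ih =>
    rw [List.ofFn_succ, linearIndependentMod_get_cons, supSpan_get_ofFn, ih,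
      linearIndependentMod_iff_tail]
    rfl

variable (R : Type*) [Ring R] {G : Type*} [Group G] [DistribMulAction G V] [SMulCommClass G K V]
  {ω : LinearMap.BilinForm K V} {v : V}

/-- The admissible tuples of length `P`, as lists. -/
def admissibleLists (ω : LinearMap.BilinForm K V) (U : Submodule K V) (v : V) (P : ℕ) :
    Set (List V) :=
  List.ofFn '' {x : Fin P → V | IsAdmissible ω U v x}

namespace IsSymplecticAction

/-- The chains on admissible tuples, as chains on lists. -/
noncomputable def toListChains (hG : IsSymplecticAction G ω) (U : Submodule K V) (v : V) (P : ℕ) :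
    ((hG.tupleComplex U v).Simplex P →₀ R) →ₗ[R] List V →₀ R :=
  Finsupp.lmapDomain R R fun x => List.ofFn x.1

theorem toListChains_single (hG : IsSymplecticAction G ω) (x : (hG.tupleComplex U v).Simplex P)
    (r : R) : hG.toListChains R U v P (Finsupp.single x r) = Finsupp.single (List.ofFn x.1) r :=
  Finsupp.mapDomain_single

theorem toListChains_injective (hG : IsSymplecticAction G ω) :
    Function.Injective (hG.toListChains R U v P) :=
  Finsupp.mapDomain_injective fun _ _ h => Subtype.ext (List.ofFn_injective h)

theorem range_toListChains (hG : IsSymplecticAction G ω) :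
    LinearMap.range (hG.toListChains R U v P) =
      Finsupp.supported R R (admissibleLists ω U v P) := by
  rw [Finsupp.supported_eq_span_single]
  refine le_antisymm ?_ (span_le.2 ?_)
  · rintro _ ⟨z, rfl⟩
    induction z using Finsupp.induction_linear with
    | zero => rw [map_zero]; exact zero_mem _
    | add z z' hz hz' => rw [map_add]; exact add_mem hz hz'
    | single x r =>
      rw [toListChains_single, ← Finsupp.smul_single_one]
      exact smul_mem _ r (subset_span ⟨_, ⟨x.1, x.2, rfl⟩, rfl⟩)
  · rintro _ ⟨_, ⟨x, hx, rfl⟩, rfl⟩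
    exact ⟨Finsupp.single ⟨x, hx⟩ 1, hG.toListChains_single R (U := U) (v := v) _ _⟩

theorem listBoundary_toListChains (hG : IsSymplecticAction G ω)
    (z : (hG.tupleComplex U v).Simplex (P + 1) →₀ R) :
    listBoundary R (hG.toListChains R U v (P + 1) z) =
      hG.toListChains R U v P ((hG.tupleComplex U v).chainBoundary R P z) := by
  refine LinearMap.congr_fun (f := listBoundary R ∘ₗ hG.toListChains R U v (P + 1))
    (g := hG.toListChains R U v P ∘ₗ (hG.tupleComplex U v).chainBoundary R P)
    (free_hom_ext fun x => ?_) z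
  rw [LinearMap.comp_apply, LinearMap.comp_apply, toListChains_single, listBoundary_single,
    listFaceSum_ofFn, EquivariantSemisimplicialSet.chainBoundary, alternatingSum_apply, map_sum]
  refine Finset.sum_congr rfl fun i _ => ?_
  rw [map_zsmul, Finsupp.lmapDomain_apply, Finsupp.mapDomain_single, toListChains_single]
  rfl

theorem chainsExactAt_tupleComplex (hG : IsSymplecticAction G ω)
    (h : ∀ z ∈ Finsupp.supported R R (admissibleLists ω U v P), listBoundary R z = 0 →
      ∃ y ∈ Finsupp.supported R R (admissibleLists ω U v (P + 1)), listBoundary R y = z) :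
    (hG.tupleComplex U v).ChainsExactAt R P := by
  intro z hz
  have hd : listBoundary R (hG.toListChains R U v P z) = 0 := by
    cases P with
    | zero =>
      refine LinearMap.congr_fun (f := listBoundary R ∘ₗ hG.toListChains R U v 0) (g := 0)
        (free_hom_ext fun x => ?_) z
      rw [LinearMap.comp_apply, toListChains_single, listBoundary_single, List.ofFn_zero]
      rfl
    | succ P => rw [listBoundary_toListChains, mem_cycles_succ.1 hz, map_zero]
  rw [← hG.range_toListChains R, ← hG.range_toListChains R] at h
  obtain ⟨_, ⟨y, rfl⟩, hy⟩ := h _ (LinearMap.mem_range_self _ z) hd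
  exact ⟨y, hG.toListChains_injective R (by rw [← listBoundary_toListChains, hy])⟩

end IsSymplecticAction

end TuplesAsLists

section Exactness

open Submodule

variable {K V : Type*} [Field K] [AddCommGroup V] [Module K V]

/-- A vector space over an infinite field is not a finite union of proper subspaces; the extra
coordinate turns this into a statement about the affine space `v + W`. -/
theorem exists_sub_mem_forall_notMem [Infinite K] {ι : Type*} [Finite ι] (W : Submodule K V)
    (v : V) (A : ι → Submodule K (V × K)) (hA : ∀ i, ∃ w, w - v ∈ W ∧ (w, (1 : K)) ∉ A i) :
    ∃ w, w - v ∈ W ∧ ∀ i, (w, (1 : K)) ∉ A i := by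
  let L : W × K →ₗ[K] V × K :=
    (W.subtype.coprod (LinearMap.toSpanSingleton K V v)).prod (LinearMap.snd K W K)
  have hL (y : W) (c : K) : L (y, c) = (y + c • v, c) := rfl
  let p : Option ι → Submodule K (W × K) := fun i =>
    i.elim (LinearMap.ker (LinearMap.snd K W K)) fun i => (A i).comap L
  have hp (i : Option ι) : p i ≠ ⊤ := by
    rw [ne_eq, Submodule.eq_top_iff']
    intro htop
    cases i with
    | none => exact one_ne_zero (htop (0, 1))
    | some i =>
      obtain ⟨w, hw, hwA⟩ := hA i
      have hmem : L (⟨w - v, hw⟩, 1) ∈ A i := htop (⟨w - v, hw⟩, 1)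
      rw [hL, one_smul, sub_add_cancel] at hmem
      exact hwA hmem
  have hcover : ⋃ i, (p i : Set (W × K)) ≠ Set.univ := fun h =>
    (Subspace.exists_eq_top_of_iUnion_eq_univ h).elim hp
  obtain ⟨⟨y, c⟩, hyc⟩ := (Set.ne_univ_iff_exists_notMem _).1 hcover
  rw [Set.mem_iUnion, not_exists] at hyc
  have hc : c ≠ 0 := hyc none
  refine ⟨c⁻¹ • y + v, by simpa using W.smul_mem c⁻¹ y.2, fun i hi => hyc (some i) ?_⟩
  have hLi := (A i).smul_mem c hi
  rwa [Prod.smul_mk, smul_add, smul_inv_smul₀ hc, smul_eq_mul, mul_one, ← hL] at hLi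

variable {G : Type*} [Group G] [DistribMulAction G V]
  {ω : LinearMap.BilinForm K V} {U : Submodule K V} {v : V} {P : ℕ}

theorem sub_mem_orthogonal_iff {w : V} :
    w - v ∈ ω.orthogonal U ↔ ∀ u ∈ U, ω u w = ω u v := by
  refine forall₂_congr fun u _ => ?_
  rw [← sub_eq_zero (a := ω u w), ← map_sub]

theorem admissibleLists_eq_independentLists [Finite K] :
    admissibleLists ω U v P = independentLists {w | ∀ u ∈ U, ω u w = ω u v} U P := by
  ext l
  constructor
  · rintro ⟨x, hx, rfl⟩
    refine ⟨List.length_ofFn, fun a ha => ?_,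
      linearIndependentMod_get_ofFn.2 hx.linearIndependentMod⟩
    obtain ⟨i, rfl⟩ := List.mem_ofFn.1 ha
    exact hx.form_eq i
  · rintro ⟨rfl, hlU, hl⟩
    exact ⟨l.get, ⟨fun i => hlU _ (List.get_mem _ _), hl, fun h => (not_finite K).elim⟩,
      List.ofFn_get l⟩

variable [FiniteDimensional K V]

namespace IsSymplecticAction

theorem exists_form_eq_form_ne (hG : IsSymplecticAction G ω) (v : V) {a : V} (ha : a ∉ U) (c : K) :
    ∃ w, (∀ u ∈ U, ω u w = ω u v) ∧ ω w a ≠ c := by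
  by_cases hva : ω v a = c
  · obtain ⟨y, hy, hya⟩ := hG.exists_orthogonal_form_ne_zero ha
    refine ⟨v + y, fun u hu => by rw [map_add, hy u hu, add_zero], ?_⟩
    rwa [map_add, LinearMap.add_apply, hva, ne_eq, add_eq_left]
  · exact ⟨v, fun _ _ => rfl, hva⟩

theorem exists_form_eq_notMem_form_ne [Infinite K] (hG : IsSymplecticAction G ω) {ι κ : Type*}
    [Finite ι] [Finite κ] {T : ι → Submodule K V}
    (hT : ∀ i, ∃ w, (∀ u ∈ U, ω u w = ω u v) ∧ w ∉ T i) {a : κ → V} (ha : ∀ k, a k ∉ U)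
    (c : κ → K) :
    ∃ w, (∀ u ∈ U, ω u w = ω u v) ∧ (∀ i, w ∉ T i) ∧ ∀ k, ω w (a k) ≠ c k := by
  let A : ι ⊕ κ → Submodule K (V × K) := Sum.elim (fun i => (T i).comap (LinearMap.fst K V K))
    fun k => LinearMap.ker (ω.flip (a k) ∘ₗ LinearMap.fst K V K - c k • LinearMap.snd K V K)
  have hA (w : V) (k : κ) : (w, (1 : K)) ∈ A (Sum.inr k) ↔ ω w (a k) = c k := by
    simp [A, sub_eq_zero]
  obtain ⟨w, hw, hwA⟩ := exists_sub_mem_forall_notMem (ω.orthogonal U) v A fun i => by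
    simp only [sub_mem_orthogonal_iff]
    cases i with
    | inl i => exact hT i
    | inr k => simpa only [hA] using hG.exists_form_eq_form_ne v (ha k) (c k)
  exact ⟨w, sub_mem_orthogonal_iff.1 hw, fun i => hwA (Sum.inl i),
    fun k => (hA w k).not.1 (hwA (Sum.inr k))⟩

theorem exists_forall_isAdmissible_cons [Infinite K] (hG : IsSymplecticAction G ω) {ι : Type*}
    [Finite ι] {x : ι → Fin P → V} (hx : ∀ a, IsAdmissible ω U v (x a))
    (hw : ∀ a, ∃ w, (∀ u ∈ U, ω u w = ω u v) ∧ w ∉ supSpan U (x a)) :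
    ∃ w, ∀ a, IsAdmissible ω U v (Fin.cons w (x a) : Fin (P + 1) → V) := by
  obtain ⟨w, hwU, hwx, hwa⟩ := hG.exists_form_eq_notMem_form_ne hw
    (κ := (ι × Fin P) ⊕ (ι × {ij : Fin P × Fin P // ij.1 < ij.2}))
    (a := Sum.elim (fun k => x k.1 k.2) fun k => x k.1 k.2.1.2 - x k.1 k.2.1.1)
    (by
      rintro (⟨a, i⟩ | ⟨a, ⟨i, j⟩, hij⟩)
      · exact (hx a).linearIndependentMod.notMem i
      · exact (hx a).linearIndependentMod.sub_notMem hij.ne')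
    (Sum.elim 0 fun k => ω (x k.1 k.2.1.1) (x k.1 k.2.1.2))
  refine ⟨w, fun a => (hx a).cons hwU (hwx a) fun _ => ⟨fun i => hwa (Sum.inl (a, i)),
    fun i j hij h => hwa (Sum.inr (a, ⟨(i, j), hij⟩)) ?_⟩⟩
  simp only [map_sub, LinearMap.sub_apply, hG.isAlt.self_eq_zero, ← hG.isAlt.neg_eq w] at h
  rw [Sum.elim_inr, Sum.elim_inr, map_sub]
  linear_combination -h

variable [SMulCommClass G K V] {t : ℕ}

theorem exists_form_eq_notMem_supSpan (hG : IsSymplecticAction G ω) (hv : v ∉ U)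
    (hrank : 2 * t ≤ residualRank ω (U ⊔ K ∙ v)) (hP : P ≤ t) {x : Fin P → V}
    (hx : IsAdmissible ω U v x) : ∃ w, (∀ u ∈ U, ω u w = ω u v) ∧ w ∉ supSpan U x := by
  cases P with
  | zero => exact ⟨v, fun _ _ => rfl, by rwa [supSpan_zero]⟩
  | succ P =>
    have hx_rank := hG.residualRank_le_supSpan hv hx
    obtain ⟨y, hy, hyx⟩ := exists_mem_orthogonal_notMem (ω := ω) (U := supSpan U x) (by omega)
    refine ⟨x 0 + y, fun u hu => ?_, fun h => hyx ((add_mem_cancel_left (mem_supSpan U x 0)).1 h)⟩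
    rw [map_add, hx.form_eq 0 u hu, hy u (le_supSpan U x hu), add_zero]

variable (R : Type*) [Ring R]

theorem chainsExactAt_of_finite [Finite K] (hG : IsSymplecticAction G ω) (hv : v ∉ U)
    (hrank : 2 * t ≤ residualRank ω (U ⊔ K ∙ v)) (hP : P ≤ t) :
    (hG.tupleComplex U v).ChainsExactAt R P := by
  refine hG.chainsExactAt_tupleComplex R ?_
  simp only [admissibleLists_eq_independentLists]
  refine listsExactAt_of_exists_notMem (Nat.lt_succ_of_le hP) fun n hn l hl => ?_
  rw [← admissibleLists_eq_independentLists] at hl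
  obtain ⟨x, hx, rfl⟩ := hl
  rw [supSpan_get_ofFn]
  exact hG.exists_form_eq_notMem_supSpan hv hrank (Nat.le_of_lt_succ hn) hx

theorem chainsExactAt_of_infinite [Infinite K] (hG : IsSymplecticAction G ω) (hv : v ∉ U)
    (hrank : 2 * t ≤ residualRank ω (U ⊔ K ∙ v)) (hP : P ≤ t) :
    (hG.tupleComplex U v).ChainsExactAt R P := by
  refine hG.chainsExactAt_tupleComplex R fun z hz hd => ?_
  choose x hx hxl using fun l : z.support => hz l.2
  obtain ⟨w, hw⟩ := hG.exists_forall_isAdmissible_cons hx fun l =>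
    hG.exists_form_eq_notMem_supSpan hv hrank hP (hx l)
  refine ⟨listCons R w z, ?_, by rw [listBoundary_listCons, hd, map_zero, sub_zero]⟩
  refine map_mem_of_mem_supported (fun l hl => ?_) (Finsupp.mem_supported_support R z)
  rw [listCons_single]
  refine Finsupp.single_mem_supported R 1 ⟨_, hw ⟨l, hl⟩, ?_⟩
  rw [List.ofFn_cons, hxl]

theorem chainsExactAt (hG : IsSymplecticAction G ω) (hv : v ∉ U)
    (hrank : 2 * t ≤ residualRank ω (U ⊔ K ∙ v)) (hP : P ≤ t) :
    (hG.tupleComplex U v).ChainsExactAt R P := by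
  cases finite_or_infinite K
  · exact hG.chainsExactAt_of_finite R hv hrank hP
  · exact hG.chainsExactAt_of_infinite R hv hrank hP

end IsSymplecticAction

end Exactness

section UnitCones

open Submodule

variable {K V : Type*} [Field K] [AddCommGroup V] [Module K V] {ω : LinearMap.BilinForm K V}
  {U : Submodule K V} {v : V}

theorem supSpan_two (x : Fin 2 → V) : supSpan U x = U ⊔ K ∙ x 0 ⊔ K ∙ x 1 := by
  rw [supSpan_eq_tail, supSpan_eq_tail, supSpan_zero, sup_right_comm]
  rfl

variable [FiniteDimensional K V]

theorem orthogonal_radical_le (hω : ω.IsAlt) (hnd : ω.Nondegenerate) (U : Submodule K V) :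
    ω.orthogonal (radical ω U) ≤ U ⊔ ω.orthogonal U := by
  have hoo := LinearMap.BilinForm.orthogonal_orthogonal hnd hω.isRefl
  rw [← hoo (U ⊔ ω.orthogonal U), orthogonal_sup, hoo U, inf_comm, radical]

/-- The combination of `x 1 - x 0` and `ρ` used here is orthogonal to `U` and to `x`, but not to a
vector that pairs to `1` with both entries of `x`. -/
theorem IsAdmissible.exists_cons_form_eq_one_of_mem_radical (hω : ω.IsAlt) (hnd : ω.Nondegenerate)
    {x : Fin 2 → V} (hx : IsAdmissible ω U v x) (hx₀₁ : ω (x 0) (x 1) ≠ 0) {ρ : V}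
    (hρ : ρ ∈ radical ω U) (hρv : ω ρ v ≠ 0) :
    ∃ w, (∀ i, ω w (x i) = 1) ∧ IsAdmissible ω U v (Fin.cons w x : Fin 3 → V) := by
  obtain ⟨w, hwU, hwx⟩ := hx.linearIndependentMod.exists_form_eq_one hω hnd v
  refine ⟨w, hwx, hx.cons_of_form_eq_one hω hwU (fun hw => hx₀₁ ?_) hwx⟩
  obtain ⟨s, hs⟩ : ∃ s, s * ω ρ v = ω (x 0) (x 1) := ⟨_, div_mul_cancel₀ _ hρv⟩
  have hxρ (i : Fin 2) : ω (x i) ρ = -ω ρ v := by rw [← hω.neg_eq, hx.form_eq i ρ hρ.1]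
  have horth : x 1 - x 0 + s • ρ ∈ ω.orthogonal (supSpan U x) := by
    rw [supSpan_two, orthogonal_sup, orthogonal_sup]
    refine ⟨⟨fun u hu => ?_, mem_orthogonal_span_singleton.2 ?_⟩,
      mem_orthogonal_span_singleton.2 ?_⟩
    · change ω u _ = 0
      have hρu : ω u ρ = 0 := hρ.2 u hu
      rw [map_add, map_sub, map_smul, hx.form_eq 0 u hu, hx.form_eq 1 u hu, hρu, smul_zero,
        sub_self, add_zero]
    · rw [map_add, map_sub, map_smul, hω.self_eq_zero, hxρ, smul_eq_mul]
      linear_combination -hs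
    · rw [map_add, map_sub, map_smul, hω.self_eq_zero, hxρ, smul_eq_mul, ← hω.neg_eq]
      linear_combination -hs
  have hw₀ : ω w (x 1 - x 0 + s • ρ) = 0 := horth w hw
  rw [map_add, map_sub, map_smul, hwx, hwx, smul_eq_mul, ← hω.neg_eq, hwU ρ hρ.1] at hw₀
  linear_combination -hs - hw₀

theorem IsAdmissible.residualRank_le_supSpan_two (hω : ω.IsAlt) (hnd : ω.Nondegenerate)
    {x : Fin 2 → V} (hx : IsAdmissible ω U v x) (hx₀₁ : ω (x 0) (x 1) ≠ 0)
    (hv : ∀ ρ ∈ radical ω U, ω ρ v = 0) :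
    residualRank ω (U ⊔ K ∙ x 0) ≤ residualRank ω (supSpan U x) := by
  have hx₀ : x 0 ∈ ω.orthogonal (radical ω U) := fun ρ hρ =>
    (hx.form_eq 0 ρ hρ.1).trans (hv ρ hρ)
  obtain ⟨u, hu, y, hy, huy⟩ := mem_sup.1 (orthogonal_radical_le hω hnd U hx₀)
  have huy₀ : ω u y = 0 := hy u hu
  have huv : ω u v = 0 := by
    rw [← hx.form_eq 0 u hu, ← huy, map_add, hω.self_eq_zero, huy₀, add_zero]
  have hy_mem : y ∈ radical ω (U ⊔ K ∙ x 0) := by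
    refine ⟨?_, ?_⟩
    · rw [eq_sub_of_add_eq' huy]
      exact sub_mem (mem_sup_right (mem_span_singleton_self _)) (mem_sup_left hu)
    · rw [orthogonal_sup]
      refine ⟨hy, mem_orthogonal_span_singleton.2 ?_⟩
      rw [← huy, map_add, LinearMap.add_apply, huy₀, hω.self_eq_zero, add_zero]
  have hyx : ω y (x 1) ≠ 0 := by
    rwa [← huy, map_add, LinearMap.add_apply, hx.form_eq 1 u hu, huv, zero_add] at hx₀₁
  rw [supSpan_two]
  exact residualRank_le_of_mem_radical hω hnd hy_mem hyx

end UnitCones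

section StabilityInduction

open Submodule

/-- The slope of the stability range in the homological degree. -/
noncomputable def stableSlope (K : Type*) : ℕ :=
  open Classical in if Finite K then 2 else 1

theorem one_le_stableSlope (K : Type*) : 1 ≤ stableSlope K := by
  unfold stableSlope
  split_ifs <;> omega

theorem stableSlope_of_infinite (K : Type*) [Infinite K] : stableSlope K = 1 :=
  if_neg (not_finite_iff_infinite.2 ‹_›)

theorem stableSlope_of_finite (K : Type*) [Finite K] : stableSlope K = 2 :=
  if_pos ‹_›

variable {K V G : Type*} [Field K] [AddCommGroup V] [Module K V] [FiniteDimensional K V]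
  {ω : LinearMap.BilinForm K V} [Group G] [DistribMulAction G V] [SMulCommClass G K V]
  {U : Submodule K V} {v : V} {P : ℕ}

namespace IsSymplecticAction

theorem residualRank_le_supSpan_stableSlope (hG : IsSymplecticAction G ω) (hv : v ∉ U)
    {x : Fin (P + 3) → V} (hx : IsAdmissible ω U v x) :
    residualRank ω (U ⊔ K ∙ v) ≤ residualRank ω (supSpan U x) + 2 * (P + stableSlope K) := by
  cases finite_or_infinite K
  · rw [stableSlope_of_finite]
    exact hG.residualRank_le_supSpan hv hx
  · rw [stableSlope_of_infinite]
    exact hG.residualRank_le_supSpan_of_infinite hv hx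

theorem exists_cons_form_eq_one_of_infinite [Infinite K] (hG : IsSymplecticAction G ω)
    (hv : v ∉ U) (hrank : residualRank ω (U ⊔ K ∙ v) ≠ 0) {x : Fin 2 → V}
    (hx : IsAdmissible ω U v x) :
    ∃ w, (∀ i, ω w (x i) = 1) ∧ IsAdmissible ω U v (Fin.cons w x : Fin 3 → V) := by
  have hx₀₁ : ω (x 0) (x 1) ≠ 0 := (hx.isGeneric ‹_›).1 0 1 Nat.zero_lt_one
  by_cases hρ : ∃ ρ ∈ radical ω U, ω ρ v ≠ 0
  · obtain ⟨ρ, hρ, hρv⟩ := hρ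
    exact hx.exists_cons_form_eq_one_of_mem_radical hG.isAlt hG.nondegenerate hx₀₁ hρ hρv
  · push Not at hρ
    have hle := hx.residualRank_le_supSpan_two hG.isAlt hG.nondegenerate hx₀₁ hρ
    have hx₀ : Fin.removeNth 1 x = fun _ => x 0 := funext fun i => by
      rw [Subsingleton.elim i 0]
      rfl
    have hrank₀ := hG.residualRank_supSpan_of_isAdmissible_one hv (hx.removeNth 1)
    rw [hx₀, supSpan_const] at hrank₀
    exact hx.exists_cons_form_eq_one hG.isAlt hG.nondegenerate (by omega)

theorem exists_cons_form_eq_one_of_stableSlope (hG : IsSymplecticAction G ω) (hv : v ∉ U)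
    (hrank : 2 * stableSlope K ≤ residualRank ω (U ⊔ K ∙ v)) {x : Fin 2 → V}
    (hx : IsAdmissible ω U v x) :
    ∃ w, (∀ i, ω w (x i) = 1) ∧ IsAdmissible ω U v (Fin.cons w x : Fin 3 → V) := by
  cases finite_or_infinite K
  · have hle := hG.residualRank_le_supSpan hv hx
    rw [stableSlope_of_finite] at hrank
    exact hx.exists_cons_form_eq_one hG.isAlt hG.nondegenerate (by omega)
  · rw [stableSlope_of_infinite] at hrank
    exact hG.exists_cons_form_eq_one_of_infinite hv (by omega) hx

theorem exists_isUnitCone (hG : IsSymplecticAction G ω) (x : (hG.tupleComplex U v).Simplex P)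
    (hx : residualRank ω (supSpan U x.1) ≠ 0) :
    ∃ y : (hG.tupleComplex U v).Simplex (P + 1), IsUnitCone ω x.1 y.1 := by
  obtain ⟨w, hw, hwx⟩ := x.2.exists_cons_form_eq_one hG.isAlt hG.nondegenerate hx
  exact ⟨⟨_, hwx⟩, w, rfl, hw⟩

variable {R : Type*} [Ring R] {Q j : ℕ}

theorem secondPageVanishesAt_tupleComplex (hG : IsSymplecticAction G ω) (hv : v ∉ U)
    (hsurj : StabilizersHomologySurj R G ω (2 * (stableSlope K * j)) j)
    (hinj : StabilizersHomologyInj R G ω (2 * (stableSlope K * j) + 2) j)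
    (hrank : 2 * (stableSlope K * j) + 2 * (Q + stableSlope K) + 2 ≤
      residualRank ω (U ⊔ K ∙ v)) :
    SecondPageVanishesAt ((hG.tupleComplex U v).horizontalBoundary R)
      ((hG.tupleComplex U v).verticalBoundary R) (Q + 2) j := by
  refine hG.isConeRelation_isUnitCone.secondPageVanishesAt (fun x => ?_) (fun x => ?_)
    (fun x => ?_) fun x => ?_
  · have := hG.residualRank_le_supSpan_stableSlope hv x.2
    exact hG.exists_isUnitCone x (by omega)
  · have := hG.residualRank_le_supSpan (P := Q + 1) hv x.2
    have := one_le_stableSlope K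
    exact hG.exists_isUnitCone x (by omega)
  · have := hG.residualRank_le_supSpan_stableSlope (P := Q + 1) hv x.2
    rw [ambientStabilizer_tupleComplex]
    exact hsurj.supSpan x.2.linearIndependentMod (by omega)
  · have := hG.residualRank_le_supSpan_stableSlope (P := Q) hv x.2
    rw [ambientStabilizer_tupleComplex]
    exact hinj.supSpan x.2.linearIndependentMod (by omega)

variable [FaithfulSMul G V]

theorem exists_smul_face_one_eq_face_two (hG : IsSymplecticAction G ω) {T : Submodule K V}
    (hT : radical ω T = ⊥) (x : (hG.tupleComplex U v).Simplex 2)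
    (y : (hG.tupleComplex U v).Simplex 3) (hxy : IsUnitCone ω x.1 y.1) (hyT : supSpan U y.1 ≤ T) :
    ∃ g : pointwiseStabilizer G U, (∀ l ∈ pointwiseStabilizer G T, (g : G) * l = l * g) ∧
      g • (hG.tupleComplex U v).face 1 y = (hG.tupleComplex U v).face 2 y := by
  obtain ⟨w, hy, hwx⟩ := hxy
  have hw : w ∉ supSpan U x.1 :=
    (linearIndependentMod_cons.1 (hy ▸ y.2.linearIndependentMod)).2
  rw [hy, supSpan_cons, sup_le_iff, supSpan_le_iff, span_singleton_le_iff_mem] at hyT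
  obtain ⟨⟨hUT, hxT⟩, hwT⟩ := hyT
  have hxw (i : Fin 2) : x.1 i ∉ U ⊔ K ∙ w := fun h =>
    hw (sup_le (le_supSpan U x.1) ((span_singleton_le_iff_mem _ _).2 (mem_supSpan U x.1 i))
      (mem_sup_span_singleton_exchange h (x.2.linearIndependentMod.notMem i)))
  obtain ⟨g, hg, hgx, hgT⟩ := hG.exists_smul_eq_commute
    (sup_le hUT ((span_singleton_le_iff_mem _ _).2 hwT)) hT (hxT 1) (hxT 0) (hxw 1) (hxw 0)
    fun a ha => by
      obtain ⟨u, hu, b, hb, rfl⟩ := mem_sup.1 ha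
      obtain ⟨k, rfl⟩ := mem_span_singleton.1 hb
      simp only [map_add, map_smul, LinearMap.add_apply, LinearMap.smul_apply, hwx,
        x.2.form_eq _ u hu]
  obtain ⟨hgU, hgw⟩ := mem_pointwiseStabilizer_sup.1 hg
  refine ⟨⟨g, hgU⟩, hgT, Subtype.ext (funext fun i => ?_)⟩
  have hyw : y.1 0 = w := congrFun hy 0
  have hyx (i : Fin 2) : y.1 i.succ = x.1 i := congrFun hy i.succ
  fin_cases i
  · exact (congrArg (g • ·) hyw).trans ((mem_pointwiseStabilizer_span.1 hgw w rfl).trans hyw.symm)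
  · exact (congrArg (g • ·) (hyx 1)).trans (hgx.trans (hyx 0).symm)

theorem secondPageVanishesAt_one_tupleComplex (hG : IsSymplecticAction G ω) (hv : v ∉ U)
    (hsurj : StabilizersHomologySurj R G ω (2 * (stableSlope K * j)) j)
    (hrank : 2 * (stableSlope K * j) + 2 * stableSlope K ≤ residualRank ω (U ⊔ K ∙ v)) :
    SecondPageVanishesAt ((hG.tupleComplex U v).horizontalBoundary R)
      ((hG.tupleComplex U v).verticalBoundary R) 1 j := by
  refine EquivariantSemisimplicialSet.secondPageVanishesAt_one fun x => ?_
  obtain ⟨w, hwx, hw⟩ := hG.exists_cons_form_eq_one_of_stableSlope hv (by omega) x.2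
  let y : (hG.tupleComplex U v).Simplex 3 := ⟨_, hw⟩
  have hy : residualRank ω (U ⊔ K ∙ v) ≤ residualRank ω (supSpan U y.1) + _ :=
    hG.residualRank_le_supSpan_stableSlope (P := 0) hv hw
  have hxy : IsUnitCone ω x.1 y.1 := ⟨w, rfl, hwx⟩
  obtain ⟨T, hyT, hT, hTsurj⟩ := hsurj.exists_nondegenerate hG (supSpan U y.1) (by omega)
  refine ⟨y, pointwiseStabilizer G T, ?_, ?_, hG.isConeRelation_isUnitCone.face_zero hxy,
    hG.exists_smul_face_one_eq_face_two hT x y hxy hyT⟩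
  · rw [ambientStabilizer_tupleComplex]
    refine hTsurj.trans ?_
    rw [supSpan_cons] at hy ⊢
    exact hsurj _ _ (linearIndependentMod_cons.1 hw.linearIndependentMod).2 (by omega)
  · rw [ambientStabilizer_tupleComplex]
    exact fixingSubgroup_antitone G V hyT

theorem horizontalBoundary_tupleComplex_mem_boundaries (hG : IsSymplecticAction G ω) (hv : v ∉ U)
    (hsurj : StabilizersHomologySurj R G ω (2 * (stableSlope K * j)) j)
    (hrank : 2 * (stableSlope K * j) + 2 ≤ residualRank ω (U ⊔ K ∙ v))
    {w : BorelChains R (pointwiseStabilizer G U) ((hG.tupleComplex U v).Simplex 2) j}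
    (hw : w ∈ cycles ((hG.tupleComplex U v).verticalBoundary R 2) j) :
    (hG.tupleComplex U v).horizontalBoundary R 1 j w ∈
      boundaries ((hG.tupleComplex U v).verticalBoundary R 1) j := by
  refine EquivariantSemisimplicialSet.horizontalBoundary_one_mem_boundaries (fun x => ?_) hw
  have hx := hG.residualRank_le_supSpan (P := 1) hv x.2
  obtain ⟨T, hxT, hT, hTsurj⟩ := hsurj.exists_nondegenerate hG (supSpan U x.1) (by omega)
  have hxU (i : Fin 2) : x.1 i ∉ U := x.2.linearIndependentMod.notMem i
  obtain ⟨hUT, hxT'⟩ := supSpan_le_iff.1 hxT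
  obtain ⟨g, hg, hgx, hgT⟩ := hG.exists_smul_eq_commute hUT hT (hxT' 1) (hxT' 0) (hxU 1) (hxU 0)
    fun u hu => by rw [x.2.form_eq _ u hu, x.2.form_eq _ u hu]
  refine ⟨pointwiseStabilizer G T, by rwa [ambientStabilizer_tupleComplex], ⟨g, hg⟩, hgT,
    Subtype.ext (funext fun i => ?_)⟩
  fin_cases i
  exact hgx

variable {q : ℕ}

theorem stabilizersHomologySurj_of_lt (hG : IsSymplecticAction G ω)
    (ih : ∀ j < q, StabilizersHomologySurj R G ω (2 * (stableSlope K * j)) j ∧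
      StabilizersHomologyInj R G ω (2 * (stableSlope K * j) + 2) j) :
    StabilizersHomologySurj R G ω (2 * (stableSlope K * q)) q := by
  intro U v hv hrank
  have hle (a : ℕ) : a ≤ stableSlope K * a := Nat.le_mul_of_pos_left a (one_le_stableSlope K)
  have hq := hle q
  let x : (hG.tupleComplex U v).Simplex 1 := ⟨fun _ => v, isAdmissible_const hv⟩
  rw [← hG.ambientStabilizer_of_eq_const (x := x) rfl]
  refine EquivariantSemisimplicialSet.homologySurj_ambientStabilizer x (fun y => ?_)
    (fun P hP => hG.chainsExactAt R hv (t := q) (by omega) hP) fun Q j hQ hQj => ?_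
  · obtain ⟨g, hg, hgy⟩ := hG.exists_smul_eq_const hv y.2
    exact ⟨⟨g, hg⟩, Subtype.ext (funext hgy)⟩
  · obtain ⟨hsurj, hinj⟩ := ih j (by omega)
    subst hQj
    obtain - | - | Q := Q
    · omega
    · rw [Nat.mul_add] at hrank
      exact hG.secondPageVanishesAt_one_tupleComplex hv hsurj (by omega)
    · have hQ_le := hle (Q + 1)
      simp only [Nat.mul_add] at hrank hQ_le
      exact hG.secondPageVanishesAt_tupleComplex hv hsurj hinj (by omega)

theorem stabilizersHomologyInj_of_lt (hG : IsSymplecticAction G ω)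
    (ih : ∀ j < q, StabilizersHomologySurj R G ω (2 * (stableSlope K * j)) j ∧
      StabilizersHomologyInj R G ω (2 * (stableSlope K * j) + 2) j) :
    StabilizersHomologyInj R G ω (2 * (stableSlope K * q) + 2) q := by
  intro U v hv hrank
  have hle (a : ℕ) : a ≤ stableSlope K * a := Nat.le_mul_of_pos_left a (one_le_stableSlope K)
  have hq := hle q
  let x : (hG.tupleComplex U v).Simplex 1 := ⟨fun _ => v, isAdmissible_const hv⟩
  rw [← hG.ambientStabilizer_of_eq_const (x := x) rfl]
  refine EquivariantSemisimplicialSet.homologyInj_ambientStabilizer x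
    (fun P hP => hG.chainsExactAt R hv (t := q + 1) (by omega) hP) (fun Q j hQ hQj => ?_)
    fun w => hG.horizontalBoundary_tupleComplex_mem_boundaries hv
      (hG.stabilizersHomologySurj_of_lt ih) hrank
  obtain ⟨hsurj, hinj⟩ := ih j (by omega)
  obtain ⟨Q, rfl⟩ := Nat.exists_eq_add_of_le' hQ
  obtain rfl : q = Q + 1 + j := by omega
  have hQ_le := hle Q
  simp only [Nat.mul_add] at hrank
  exact hG.secondPageVanishesAt_tupleComplex hv hsurj hinj (by omega)

variable (R) in
theorem stabilizersHomology_surj_inj (hG : IsSymplecticAction G ω) (q : ℕ) :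
    StabilizersHomologySurj R G ω (2 * (stableSlope K * q)) q ∧
      StabilizersHomologyInj R G ω (2 * (stableSlope K * q) + 2) q := by
  induction q using Nat.strong_induction_on with
  | _ q ih => exact ⟨hG.stabilizersHomologySurj_of_lt ih, hG.stabilizersHomologyInj_of_lt ih⟩

end IsSymplecticAction

end StabilityInduction

section BarComplex

variable (R : Type) [CommRing R] {G' G : Type*} [Group G'] [Group G]

theorem barDiff_single (n : ℕ) (c : Fin (n + 1) → G) :
    barDiff R G n (Finsupp.single c 1) = Finsupp.single (Fin.tail c) 1
      + ∑ i : Fin (n + 1),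
          Finsupp.single (i.contractNth (· * ·) c) ((-1 : R) ^ ((i : ℕ) + 1)) := by
  have hcontract : ∀ i j : Fin n, (if (j : ℕ) < i then c j.castSucc
      else if (j : ℕ) = i then c i.castSucc * c i.succ else c j.succ)
        = i.castSucc.contractNth (· * ·) c j := fun i j => by
    by_cases hji : (j : ℕ) = i
    · obtain rfl := Fin.ext hji
      simp [Fin.contractNth]
    · simp [Fin.contractNth, hji]
  have hlast : (Fin.last n).contractNth (· * ·) c = fun j => c j.castSucc :=
    funext fun j => Fin.contractNth_apply_of_lt _ _ _ _ j.isLt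
  rw [barDiff, Finsupp.lift_apply, Finsupp.sum_single_index (by simp), one_smul,
    Fin.sum_univ_castSucc, ← add_assoc, hlast]
  simp only [hcontract]
  rfl

/-- The tuple of the quotients of consecutive entries of a tuple, which turns homogeneous chains
into inhomogeneous ones. -/
def consecutiveQuotients {k : ℕ} (t : Fin (k + 1) → G) : Fin k → G :=
  fun j => (t j.castSucc)⁻¹ * t j.succ

theorem smul_partialProd_consecutiveQuotients {k : ℕ} (t : Fin (k + 1) → G) :
    t 0 • Fin.partialProd (consecutiveQuotients t) = t :=
  Fin.partialProd_left_inv t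

theorem consecutiveQuotients_partialProd {k : ℕ} (c : Fin k → G) :
    consecutiveQuotients (Fin.partialProd c) = c :=
  funext (Fin.partialProd_right_inv c)

theorem consecutiveQuotients_smul {k : ℕ} (a : G) (t : Fin (k + 1) → G) :
    consecutiveQuotients (a • t) = consecutiveQuotients t := by
  funext j
  simp [consecutiveQuotients, mul_assoc]

theorem consecutiveQuotients_removeNth_succ {k : ℕ} (t : Fin (k + 2) → G) (i : Fin (k + 1)) :
    consecutiveQuotients (i.succ.removeNth t)
      = i.contractNth (· * ·) (consecutiveQuotients t) := by
  have hremove : i.succ.removeNth t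
      = t 0 • Fin.partialProd (i.contractNth (· * ·) (consecutiveQuotients t)) := by
    rw [Fin.partialProd_contractNth]
    exact congrArg i.succ.removeNth (smul_partialProd_consecutiveQuotients t).symm
  rw [hremove, consecutiveQuotients_smul, consecutiveQuotients_partialProd]

theorem barDiff_single_consecutiveQuotients (n : ℕ) (t : Fin (n + 2) → G) :
    barDiff R G n (Finsupp.single (consecutiveQuotients t) 1)
      = ∑ i : Fin (n + 2), (-1 : ℤ) ^ (i : ℕ) •
          Finsupp.single (consecutiveQuotients (i.removeNth t)) (1 : R) := by
  rw [Fin.sum_univ_succ, barDiff_single]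
  congr 1
  · simp only [Fin.val_zero, pow_zero, one_smul]
    rfl
  · refine Finset.sum_congr rfl fun i _ => ?_
    rw [consecutiveQuotients_removeNth_succ, Finsupp.smul_single]
    simp

/-- A map `ρ : G → G'` which is a left inverse of the homomorphism `φ` and equivariant for left
translation by `G'`.  It identifies `G`, as a `G'`-set, with copies of `G'`. -/
structure IsEquivariantRetraction (φ : G' →* G) (ρ : G → G') : Prop where
  map_mul (a : G') (t : G) : ρ (φ a * t) = a * ρ t
  map_one : ρ 1 = 1

theorem IsEquivariantRetraction.id : IsEquivariantRetraction (MonoidHom.id G) id :=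
  ⟨fun _ _ => rfl, rfl⟩

theorem exists_isEquivariantRetraction {φ : G' →* G} (hφ : Function.Injective φ) :
    ∃ ρ : G → G', IsEquivariantRetraction φ ρ := by
  obtain ⟨ρ⟩ := exists_equivariantMap_subgroup φ.range
  let e := MonoidHom.ofInjective hφ
  refine ⟨fun t => e.symm (ρ t * (ρ 1)⁻¹), fun a t => ?_, by simp⟩
  have hρ : ρ (φ a * t) = e a * ρ t := map_smul ρ (e a) t
  rw [hρ, mul_assoc, _root_.map_mul, MulEquiv.symm_apply_apply]

namespace IsEquivariantRetraction

variable {φ : G' →* G} {ρ : G → G'}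

theorem apply_map (hρ : IsEquivariantRetraction φ ρ) (a : G') : ρ (φ a) = a := by
  rw [← mul_one (φ a), hρ.map_mul, hρ.map_one, mul_one]

theorem comp_smul (hρ : IsEquivariantRetraction φ ρ) (a : G') {k : ℕ} (t : Fin k → G) :
    ρ ∘ (φ a • t) = a • (ρ ∘ t) :=
  funext fun i => hρ.map_mul a (t i)

/-- The equivariant self-map of `G` whose image is the range of `φ`. -/
def toEquivariantMap (hρ : IsEquivariantRetraction φ ρ) : G →[φ.range] G :=
  ⟨φ ∘ ρ, by
    rintro ⟨_, a, rfl⟩ t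
    exact (congrArg φ (hρ.map_mul a t)).trans (_root_.map_mul φ a _)⟩

theorem coe_toEquivariantMap (hρ : IsEquivariantRetraction φ ρ) :
    ⇑hρ.toEquivariantMap = φ ∘ ρ := rfl

end IsEquivariantRetraction

/-- The chain map from homogeneous chains of a subgroup to bar chains. -/
noncomputable def toBarChains {φ : G' →* G} {ρ : G → G'} (hρ : IsEquivariantRetraction φ ρ)
    (k : ℕ) : GroupChains R φ.range k →ₗ[R] ((Fin k → G') →₀ R) :=
  OrbitChains.lift (fun p => Finsupp.single (consecutiveQuotients (ρ ∘ p.2)) (1 : R)) (by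
    rintro ⟨_, a, rfl⟩ ⟨⟨⟩, t⟩
    have hsmul : ρ ∘ (φ a • t) = a • (ρ ∘ t) := hρ.comp_smul a t
    rw [← consecutiveQuotients_smul a (ρ ∘ t), ← hsmul]
    rfl)

/-- The chain map from bar chains to homogeneous chains of a subgroup, given by partial
products. -/
noncomputable def ofBarChains (φ : G' →* G) (k : ℕ) :
    ((Fin k → G') →₀ R) →ₗ[R] GroupChains R φ.range k :=
  Finsupp.linearCombination R fun c => orbitBasis R φ.range ((), φ ∘ Fin.partialProd c)

variable {R} {φ : G' →* G} {ρ : G → G'} {k : ℕ}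

@[simp] theorem toBarChains_orbitBasis (hρ : IsEquivariantRetraction φ ρ)
    (t : Fin (k + 1) → G) :
    toBarChains R hρ k (orbitBasis R φ.range ((), t))
      = Finsupp.single (consecutiveQuotients (ρ ∘ t)) 1 :=
  OrbitChains.lift_orbitBasis _ _ _

@[simp] theorem ofBarChains_single (c : Fin k → G') :
    ofBarChains R φ k (Finsupp.single c 1)
      = orbitBasis R φ.range ((), φ ∘ Fin.partialProd c) := by
  simp [ofBarChains]

theorem barDiff_toBarChains (hρ : IsEquivariantRetraction φ ρ) (k : ℕ)
    (x : GroupChains R φ.range (k + 1)) :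
    barDiff R G' k (toBarChains R hρ (k + 1) x)
      = toBarChains R hρ k (groupBoundary R φ.range k x) := by
  refine OrbitChains.congr_of_basis (M := (Fin k → G') →₀ R)
    (f := barDiff R G' k ∘ₗ toBarChains R hρ (k + 1))
    (g := toBarChains R hρ k ∘ₗ groupBoundary R φ.range k) (fun ⟨⟨⟩, t⟩ => ?_) x
  simp only [LinearMap.comp_apply]
  rw [toBarChains_orbitBasis, barDiff_single_consecutiveQuotients, groupBoundary,
    borelBoundary, alternatingSum_apply, map_sum]
  refine Finset.sum_congr rfl fun i _ => ?_
  rw [map_zsmul, borelFace_orbitBasis, toBarChains_orbitBasis]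
  rfl

theorem toBarChains_ofBarChains (hρ : IsEquivariantRetraction φ ρ) (x : (Fin k → G') →₀ R) :
    toBarChains R hρ k (ofBarChains R φ k x) = x := by
  refine LinearMap.congr_fun (f := toBarChains R hρ k ∘ₗ ofBarChains R φ k) (g := LinearMap.id)
    (free_hom_ext fun c => ?_) x
  have hcomp : ρ ∘ φ ∘ Fin.partialProd c = Fin.partialProd c :=
    funext fun i => hρ.apply_map _
  simp [hcomp, consecutiveQuotients_partialProd]

theorem ofBarChains_toBarChains (hρ : IsEquivariantRetraction φ ρ)
    (x : GroupChains R φ.range k) :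
    ofBarChains R φ k (toBarChains R hρ k x) = groupChainsEndo R hρ.toEquivariantMap k x := by
  refine OrbitChains.congr_of_basis (f := ofBarChains R φ k ∘ₗ toBarChains R hρ k)
    (fun ⟨⟨⟩, t⟩ => ?_) x
  have htranslate : φ (ρ (t 0)) • (φ ∘ Fin.partialProd (consecutiveQuotients (ρ ∘ t)))
      = φ ∘ ρ ∘ t := by
    funext i
    exact (map_mul φ _ _).symm.trans
      (congrArg φ (congrFun (smul_partialProd_consecutiveQuotients (ρ ∘ t)) i))
  rw [LinearMap.comp_apply, toBarChains_orbitBasis, ofBarChains_single,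
    groupChainsEndo_orbitBasis, IsEquivariantRetraction.coe_toEquivariantMap,
    ← orbitBasis_smul (⟨φ (ρ (t 0)), ρ (t 0), rfl⟩ : φ.range)]
  exact congrArg (fun s => orbitBasis R φ.range ((), s)) htranslate

theorem groupBoundary_ofBarChains (hρ : IsEquivariantRetraction φ ρ) (k : ℕ)
    (x : (Fin (k + 1) → G') →₀ R) :
    groupBoundary R φ.range k (ofBarChains R φ (k + 1) x)
      = ofBarChains R φ k (barDiff R G' k x) := by
  rw [← toBarChains_ofBarChains hρ x, barDiff_toBarChains, ofBarChains_toBarChains,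
    ofBarChains_toBarChains, groupBoundary_groupChainsEndo]

theorem barCycles_eq_cycles (k : ℕ) :
    barCycles R G k = cycles (A := fun k => (Fin k → G) →₀ R) (barDiff R G) k := by
  cases k <;> rfl

theorem ofBarChains_mem_cycles (hρ : IsEquivariantRetraction φ ρ) {x : (Fin k → G') →₀ R}
    (hx : x ∈ barCycles R G' k) :
    ofBarChains R φ k x ∈ cycles (groupBoundary R φ.range) k := by
  rw [barCycles_eq_cycles] at hx
  exact map_mem_cycles (ofBarChains R φ) (groupBoundary_ofBarChains hρ) hx

theorem ofBarChains_mem_boundaries (hρ : IsEquivariantRetraction φ ρ) {x : (Fin k → G') →₀ R}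
    (hx : x ∈ barBoundaries R G' k) :
    ofBarChains R φ k x ∈ boundaries (groupBoundary R φ.range) k :=
  map_mem_boundaries (ofBarChains R φ) (groupBoundary_ofBarChains hρ) hx

theorem toBarChains_mem_cycles (hρ : IsEquivariantRetraction φ ρ) {x : GroupChains R φ.range k}
    (hx : x ∈ cycles (groupBoundary R φ.range) k) :
    toBarChains R hρ k x ∈ barCycles R G' k := by
  rw [barCycles_eq_cycles]
  exact map_mem_cycles (B := fun k => (Fin k → G') →₀ R) (toBarChains R hρ)
    (barDiff_toBarChains hρ) hx

theorem ofBarChains_mem_boundaries_iff (hρ : IsEquivariantRetraction φ ρ)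
    {x : (Fin k → G') →₀ R} :
    ofBarChains R φ k x ∈ boundaries (groupBoundary R φ.range) k ↔ x ∈ barBoundaries R G' k := by
  refine ⟨fun hx => ?_, ofBarChains_mem_boundaries hρ⟩
  rw [← toBarChains_ofBarChains hρ x]
  exact map_mem_boundaries (B := fun k => (Fin k → G') →₀ R) (toBarChains R hρ)
    (barDiff_toBarChains hρ) hx

theorem ofBarChains_barMap (h : φ.range ≤ (MonoidHom.id G).range) (x : (Fin k → G') →₀ R) :
    ofBarChains R (MonoidHom.id G) k (barMap R φ k x)
      = groupChainsMap R h k (ofBarChains R φ k x) := by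
  refine LinearMap.congr_fun (f := ofBarChains R (MonoidHom.id G) k ∘ₗ barMap R φ k)
    (g := groupChainsMap R h k ∘ₗ ofBarChains R φ k) (free_hom_ext fun c => ?_) x
  have hprod : Fin.partialProd (φ ∘ c) = φ ∘ Fin.partialProd c := by
    funext i
    induction i using Fin.induction with
    | zero => simp
    | succ i ih => simp [Fin.partialProd_succ, ih]
  simp [barMap, Finsupp.mapDomain_single, hprod, MonoidHom.coe_id]

theorem barInducedSurj_of_homologySurj (hφ : Function.Injective φ)
    (h : HomologySurj R φ.range ⊤ k) : BarInducedSurj R φ k := by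
  obtain ⟨ρ, hρ⟩ := exists_isEquivariantRetraction hφ
  have hid := IsEquivariantRetraction.id (G := G)
  rw [← MonoidHom.range_eq_top (f := MonoidHom.id G).2 Function.surjective_id] at h
  obtain ⟨hle, h⟩ := h
  intro z hz
  obtain ⟨w, hw, hzw⟩ := h _ (ofBarChains_mem_cycles hid hz)
  refine ⟨toBarChains R hρ k w, toBarChains_mem_cycles hρ hw,
    (ofBarChains_mem_boundaries_iff hid).1 ?_⟩
  have hw' := groupChainsMap_mem_boundaries hle
    (groupChainsEndo_sub_mem_boundaries hρ.toEquivariantMap hw)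
  rw [map_sub, ofBarChains_barMap hle, ofBarChains_toBarChains]
  rw [map_sub] at hw'
  simpa only [sub_sub_sub_cancel_right] using sub_mem hzw hw'

theorem barInducedInj_of_homologyInj (hφ : Function.Injective φ)
    (h : HomologyInj R φ.range ⊤ k) : BarInducedInj R φ k := by
  obtain ⟨ρ, hρ⟩ := exists_isEquivariantRetraction hφ
  have hid := IsEquivariantRetraction.id (G := G)
  rw [← MonoidHom.range_eq_top (f := MonoidHom.id G).2 Function.surjective_id] at h
  obtain ⟨hle, h⟩ := h
  intro w hw hb
  refine (ofBarChains_mem_boundaries_iff hρ).1 (h _ (ofBarChains_mem_cycles hρ hw) ?_)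
  rw [← ofBarChains_barMap hle]
  exact ofBarChains_mem_boundaries hid hb

end BarComplex

section HyperbolicPlane

open Module Submodule

variable {K V G : Type*} [Field K] [AddCommGroup V] [Module K V] {ω : LinearMap.BilinForm K V}

theorem form_transvection (hω : ω.IsAlt) (u : V) (c : K) (x y : V) :
    ω (LinearMap.transvection (c • ω u) u x) (LinearMap.transvection (c • ω u) u y) = ω x y := by
  have hxu : ω x u = -ω u x := (LinearMap.IsAlt.neg hω u x).symm
  simp only [LinearMap.transvection.apply, LinearMap.smul_apply, map_add, map_smul,
    LinearMap.add_apply, hxu, hω.self_eq_zero u, smul_eq_mul]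
  ring

theorem residualRank_bot (ω : LinearMap.BilinForm K V) : residualRank ω ⊥ = finrank K V := by
  rw [residualRank, radical, bot_inf_eq, LinearMap.BilinForm.orthogonal_bot, finrank_top,
    finrank_bot, Nat.sub_zero]

theorem mem_radical_span_singleton (hω : ω.IsAlt) (e : V) : e ∈ radical ω (K ∙ e) :=
  ⟨mem_span_singleton_self e, mem_orthogonal_span_singleton.2 (hω.self_eq_zero e)⟩

variable [Group G] [DistribMulAction G V]

theorem pointwiseStabilizer_bot : pointwiseStabilizer G (⊥ : Submodule K V) = ⊤ := by
  refine eq_top_iff.2 fun g _ => (mem_fixingSubgroup_iff G).2 fun x hx => ?_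
  rw [(mem_bot K).1 hx, smul_zero]

variable [FiniteDimensional K V]

theorem finrank_le_residualRank_span_singleton_add_two (hnd : ω.Nondegenerate) (e : V) :
    finrank K V ≤ residualRank ω (K ∙ e) + 2 := by
  simpa only [residualRank_bot, bot_sup_eq] using
    residualRank_le_sup_span_singleton_add_two hnd ⊥ e

variable {R : Type*} [Ring R] {m j : ℕ}

theorem StabilizersHomologySurj.hyperbolicPlane (h : StabilizersHomologySurj R G ω m j)
    (hω : ω.IsAlt) (hnd : ω.Nondegenerate) {e f : V} (hef : ω e f ≠ 0)
    (hm : m + 2 ≤ finrank K V) : HomologySurj R (pointwiseStabilizer G (K ∙ e ⊔ K ∙ f)) ⊤ j := by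
  have hrad := mem_radical_span_singleton (ω := ω) hω e
  have he : e ∉ (⊥ : Submodule K V) := fun he => hef (by simp [(mem_bot K).1 he])
  have hline := finrank_le_residualRank_span_singleton_add_two hnd e
  have hplane := residualRank_le_of_mem_radical hω hnd hrad hef
  have hfirst := h ⊥ e he (by rw [bot_sup_eq]; omega)
  rw [bot_sup_eq, pointwiseStabilizer_bot] at hfirst
  exact (h _ f (notMem_of_mem_radical hω hrad hef) (by omega)).trans hfirst

theorem StabilizersHomologyInj.hyperbolicPlane (h : StabilizersHomologyInj R G ω m j)
    (hω : ω.IsAlt) (hnd : ω.Nondegenerate) {e f : V} (hef : ω e f ≠ 0)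
    (hm : m + 2 ≤ finrank K V) : HomologyInj R (pointwiseStabilizer G (K ∙ e ⊔ K ∙ f)) ⊤ j := by
  have hrad := mem_radical_span_singleton (ω := ω) hω e
  have he : e ∉ (⊥ : Submodule K V) := fun he => hef (by simp [(mem_bot K).1 he])
  have hline := finrank_le_residualRank_span_singleton_add_two hnd e
  have hplane := residualRank_le_of_mem_radical hω hnd hrad hef
  have hfirst := h ⊥ e he (by rw [bot_sup_eq]; omega)
  rw [bot_sup_eq, pointwiseStabilizer_bot] at hfirst
  exact (h _ f (notMem_of_mem_radical hω hrad hef) (by omega)).trans hfirst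

end HyperbolicPlane

section StandardSymplecticSpace

open Submodule Module

variable (K : Type) [Field K] (m : ℕ)

theorem Jmat_eq_neg_J : Jmat K m = -Matrix.J (Fin m) K := by
  rw [Jmat, Matrix.J, fromBlocks_neg, neg_zero, neg_neg]

theorem finrank_standardSymplecticSpace : finrank K (Fin m ⊕ Fin m → K) = 2 * m := by
  rw [finrank_fintype_fun_eq_card, Fintype.card_sum, Fintype.card_fin, two_mul]

theorem isUnit_det_Jmat : IsUnit (Jmat K m).det := by
  rw [Jmat_eq_neg_J, det_neg]
  exact (isUnit_one.neg.pow _).mul (isUnit_det_J (Fin m) K)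

/-- The standard symplectic form, with Gram matrix `Jmat`. -/
noncomputable def symplecticForm : LinearMap.BilinForm K (Fin m ⊕ Fin m → K) :=
  Matrix.toBilin' (Jmat K m)

theorem symplecticForm_isAlt : (symplecticForm K m).IsAlt := fun x => by
  obtain ⟨a, b, rfl⟩ : ∃ a b, x = Sum.elim a b := ⟨_, _, (Sum.elim_comp_inl_inr x).symm⟩
  rw [symplecticForm, Matrix.toBilin'_apply', Jmat, fromBlocks_mulVec]
  simp [neg_mulVec, dotProduct_comm]

theorem symplecticForm_nondegenerate : (symplecticForm K m).Nondegenerate :=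
  LinearMap.BilinForm.nondegenerate_toBilin'_of_det_ne_zero' _ (isUnit_det_Jmat K m).ne_zero

variable {K m}

theorem transpose_mul_Jmat_mul_eq_iff {A : Matrix (Fin m ⊕ Fin m) (Fin m ⊕ Fin m) K} :
    Aᵀ * Jmat K m * A = Jmat K m ↔
      ∀ x y, symplecticForm K m (A *ᵥ x) (A *ᵥ y) = symplecticForm K m x y := by
  rw [← (Matrix.toBilin' (R₁ := K)).injective.eq_iff, ← Matrix.toBilin'_comp]
  exact LinearMap.BilinForm.ext_iff

theorem exists_spGroup_coe_eq {A : Matrix (Fin m ⊕ Fin m) (Fin m ⊕ Fin m) K}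
    (hA : Aᵀ * Jmat K m * A = Jmat K m) : ∃ g : SpGroup K m, g.1.1 = A := by
  have hmem : A ∈ symplecticGroup (Fin m) K := by
    rw [SymplecticGroup.mem_iff', ← neg_inj, ← Jmat_eq_neg_J, ← hA, Jmat_eq_neg_J]
    simp
  exact ⟨⟨GeneralLinearGroup.mk'' A (SymplecticGroup.symplectic_det hmem), hA⟩, rfl⟩

theorem SpGroup.smul_eq_mulVec (g : SpGroup K m) (x : Fin m ⊕ Fin m → K) :
    g • x = g.1.1 *ᵥ x := rfl

instance : FaithfulSMul (SpGroup K m) (Fin m ⊕ Fin m → K) where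
  eq_of_smul_eq_smul h := Subtype.ext (Units.ext (mulVec_injective (funext h)))

theorem isSymplecticAction_spGroup : IsSymplecticAction (SpGroup K m) (symplecticForm K m) where
  isAlt := symplecticForm_isAlt K m
  nondegenerate := symplecticForm_nondegenerate K m
  form_smul_smul g := transpose_mul_Jmat_mul_eq_iff.1 g.2
  exists_transvection u c := by
    let T := LinearMap.transvection (c • symplecticForm K m u) u
    have hT (x : Fin m ⊕ Fin m → K) : LinearMap.toMatrix' T *ᵥ x = T x :=
      LinearMap.toMatrix'_mulVec T x
    obtain ⟨g, hg⟩ := exists_spGroup_coe_eq (A := LinearMap.toMatrix' T) <|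
      transpose_mul_Jmat_mul_eq_iff.2 fun x y => by
        rw [hT, hT]
        exact form_transvection (symplecticForm_isAlt K m) u c x y
    refine ⟨g, fun x => ?_⟩
    rw [SpGroup.smul_eq_mulVec, hg, hT]
    rfl

end StandardSymplecticSpace

section HyperbolicEmbedding

open Submodule Module

variable {K : Type} [Field K] (n : ℕ)

theorem embMat_mul (A B : Matrix (Fin n ⊕ Fin n) (Fin n ⊕ Fin n) K) :
    embMat K n (A * B) = embMat K n A * embMat K n B := by
  simp [embMat, submatrix_mul_equiv, fromBlocks_multiply]

theorem embMat_injective : Function.Injective (embMat K n) := fun _ _ h =>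
  (fromBlocks_inj.1 ((reindex (sumEquiv n) (sumEquiv n)).injective h)).1

variable (K) in
/-- The hyperbolic embedding as a group homomorphism. -/
noncomputable def embSpHom : SpGroup K n →* SpGroup K (n + 1) :=
  MonoidHom.mk' (embSp K n) fun _ _ => Subtype.ext (Units.ext (embMat_mul n _ _))

theorem coe_embSpHom : ⇑(embSpHom K n) = embSp K n := rfl

theorem embSpHom_injective : Function.Injective (embSpHom K n) := fun _ _ h =>
  Subtype.ext (Units.ext (embMat_injective n (congrArg (fun g => g.1.1) h)))

variable (K) in
/-- The basis vectors `e_{-(n+1)}` (for `Sum.inl 0`) and `e_{n+1}` (for `Sum.inr 0`) spanning the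
hyperbolic plane that the embedding adds. -/
def newBasisVector (p : Fin 1 ⊕ Fin 1) : Fin (n + 1) ⊕ Fin (n + 1) → K :=
  Pi.single (sumEquiv n (Sum.inr p)) 1

theorem symplecticForm_newBasisVector :
    symplecticForm K (n + 1) (newBasisVector K n (Sum.inl 0)) (newBasisVector K n (Sum.inr 0))
      = 1 := by
  rw [symplecticForm, newBasisVector, newBasisVector, toBilin'_single]
  simp [Jmat, sumEquiv]

variable {n}

theorem exists_eq_fromBlocks_zero_one {α l p : Type*} [Zero α] [One α] [DecidableEq l]
    [DecidableEq p] {M : Matrix (l ⊕ p) (l ⊕ p) α}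
    (h : ∀ i, M.col (Sum.inr i) = Pi.single (Sum.inr i) 1) :
    ∃ A C, M = fromBlocks A 0 C 1 := by
  refine ⟨M.toBlocks₁₁, M.toBlocks₂₁, ?_⟩
  ext i (j | j)
  · cases i <;> rfl
  · refine (congrFun (h j) i).trans ?_
    cases i <;> simp [one_apply, Pi.single_apply]

theorem eq_zero_of_preserves_Jmat
    {A : Matrix (Fin n ⊕ Fin n) (Fin n ⊕ Fin n) K} {C : Matrix (Fin 1 ⊕ Fin 1) (Fin n ⊕ Fin n) K}
    (h : (fromBlocks A 0 C 1)ᵀ * fromBlocks (Jmat K n) 0 0 (Jmat K 1) * fromBlocks A 0 C 1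
      = fromBlocks (Jmat K n) 0 0 (Jmat K 1)) :
    C = 0 ∧ Aᵀ * Jmat K n * A = Jmat K n := by
  simp only [fromBlocks_transpose, fromBlocks_multiply, fromBlocks_inj] at h
  obtain ⟨h₁₁, -, h₂₁, -⟩ := h
  have hJC : Jmat K 1 * C = 0 := by simpa using h₂₁
  have hC : C = 0 := by
    rw [← nonsing_inv_mul_cancel_left _ C (isUnit_det_Jmat K 1), hJC, Matrix.mul_zero]
  exact ⟨hC, by simpa [hC] using h₁₁⟩

theorem embMat_mulVec_newBasisVector (A : Matrix (Fin n ⊕ Fin n) (Fin n ⊕ Fin n) K)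
    (p : Fin 1 ⊕ Fin 1) : embMat K n A *ᵥ newBasisVector K n p = newBasisVector K n p := by
  refine (mulVec_single_one _ _).trans (funext fun i => ?_)
  obtain ⟨i | i, rfl⟩ := (sumEquiv n).surjective i <;>
    simp [embMat, newBasisVector, one_apply, Pi.single_apply]

theorem mem_range_embSpHom {g : SpGroup K (n + 1)}
    (hg : ∀ p, g.1.1 *ᵥ newBasisVector K n p = newBasisVector K n p) :
    g ∈ (embSpHom K n).range := by
  let M := reindex (sumEquiv n).symm (sumEquiv n).symm g.1.1
  obtain ⟨A, C, hM⟩ : ∃ A C, M = fromBlocks A 0 C 1 := by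
    refine exists_eq_fromBlocks_zero_one fun p => funext fun i => ?_
    have hcol := congrFun ((mulVec_single_one g.1.1 _).symm.trans (hg p)) (sumEquiv n i)
    simpa [M, newBasisVector, Pi.single_apply] using hcol
  have hg' : g.1.1 = (fromBlocks A 0 C 1).submatrix (sumEquiv n).symm (sumEquiv n).symm := by
    rw [← hM]; simp [M]
  have hpreserves := (mem_spGroup_iff K _ g.1).1 g.2
  rw [hg', ← jmat_decomp, transpose_submatrix, submatrix_mul_equiv, submatrix_mul_equiv]
    at hpreserves
  obtain ⟨rfl, hA⟩ :=
    eq_zero_of_preserves_Jmat ((reindex (sumEquiv n) (sumEquiv n)).injective hpreserves)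
  obtain ⟨a, rfl⟩ := exists_spGroup_coe_eq hA
  exact ⟨a, Subtype.ext (Units.ext hg'.symm)⟩

theorem range_embSpHom : (embSpHom K n).range = pointwiseStabilizer (SpGroup K (n + 1))
    (K ∙ newBasisVector K n (Sum.inl 0) ⊔ K ∙ newBasisVector K n (Sum.inr 0)) := by
  ext g
  simp only [mem_pointwiseStabilizer_sup, mem_pointwiseStabilizer_span, Set.mem_singleton_iff,
    forall_eq]
  refine ⟨?_, fun h => mem_range_embSpHom ?_⟩
  · rintro ⟨a, rfl⟩
    exact ⟨embMat_mulVec_newBasisVector a.1.1 _, embMat_mulVec_newBasisVector a.1.1 _⟩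
  · rintro (p | p) <;> rw [Subsingleton.elim p 0]
    exacts [h.1, h.2]

variable (R : Type*) [Ring R] {k : ℕ}

theorem homologySurj_range_embSpHom (h : stableSlope K * k ≤ n) :
    HomologySurj R (embSpHom K n).range ⊤ k := by
  have hG := isSymplecticAction_spGroup (K := K) (m := n + 1)
  rw [range_embSpHom]
  exact (hG.stabilizersHomology_surj_inj R k).1.hyperbolicPlane hG.isAlt hG.nondegenerate
    (by simp [symplecticForm_newBasisVector]) (by rw [finrank_standardSymplecticSpace]; omega)

theorem homologyInj_range_embSpHom (h : stableSlope K * k + 1 ≤ n) :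
    HomologyInj R (embSpHom K n).range ⊤ k := by
  have hG := isSymplecticAction_spGroup (K := K) (m := n + 1)
  rw [range_embSpHom]
  exact (hG.stabilizersHomology_surj_inj R k).2.hyperbolicPlane hG.isAlt hG.nondegenerate
    (by simp [symplecticForm_newBasisVector]) (by rw [finrank_standardSymplecticSpace]; omega)

end HyperbolicEmbedding

theorem statement2_general (R : Type) [CommRing R] (k n : ℕ) (hk : 1 ≤ k)
    (h : (Infinite D ∧ k ≤ n) ∨ 2 * k ≤ n) :
    BarInducedSurj R (embSp D n) k ∧ BarInducedInj R (embSp D n) (k - 1) := by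
  obtain ⟨hslope, hslope'⟩ : stableSlope D * k ≤ n ∧ stableSlope D * (k - 1) + 1 ≤ n := by
    obtain hD | hD := finite_or_infinite D
    · rw [stableSlope_of_finite D]
      have := h.resolve_left fun hD' => not_finite_iff_infinite.2 hD'.1 hD
      omega
    · rw [stableSlope_of_infinite D]
      omega
  have hinjective := embSpHom_injective (K := D) n
  rw [← coe_embSpHom]
  exact ⟨barInducedSurj_of_homologySurj hinjective (homologySurj_range_embSpHom R hslope),
    barInducedInj_of_homologyInj hinjective (homologyInj_range_embSpHom R hslope')⟩

/-- Let `D` be a field and `k ≥ 1`, `n ≥ 1`.  If `D` is infinite and either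
(`k = 1` and `n ≥ 2`) or (`2 ≤ k ≤ n`), or if `D` is finite and `n ≥ 2k`, then the relative
integral group homology `H_k(Sp_{2n+2}(D), Sp_{2n}(D); ℤ)` vanishes; equivalently, the map
`H_k(Sp_{2n}(D); ℤ) → H_k(Sp_{2n+2}(D); ℤ)` induced by the hyperbolic embedding is
surjective, and the induced map in degree `k − 1` is injective. -/
theorem statement2 (k n : ℕ) (hk : 1 ≤ k) (hn : 1 ≤ n)
    (h : (Infinite D ∧ ((k = 1 ∧ 2 ≤ n) ∨ (2 ≤ k ∧ k ≤ n))) ∨ (Finite D ∧ 2 * k ≤ n)) :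
    BarInducedSurj ℤ (embSp D n) k ∧ BarInducedInj ℤ (embSp D n) (k - 1) :=
  statement2_general D ℤ k n hk
    (h.imp (fun ⟨hD, hkn⟩ => ⟨hD, by omega⟩) And.right)

end Stmt2
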